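/- arXiv:math/0409228 — 3 statements merged into one kernel-verified Lean document; each statement's English description precedes it below -/
import Mathlib

section
/- Let G be a graph with minimum degree at least 2 that has no 2-factor. Then there exist disjoint subsets S, T of V(G), with O the union of vertex sets of components of G−S−T having an odd number of edges into T and R = V−S−T−O, such that: (i) T is independent; (ii) there are no edges between R and O ∪ T; (iii) every component of G⟨O⟩ has an odd number of edges into T; (iv) no vertex t ∈ T has two edges into the same component of G⟨O⟩; (v) every o ∈ O has at most one edge into T; (vi) there is no edge ot with t ∈ T, o ∈ O such that t has no edge into S and o has no edge into O; and (vii) |T| − |S| − (e(T,O) − oc(S,T))/2 > 0, where oc(S,T) is the number of components of G−S−T with an odd number of edges into T. -/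
/-- The union of all pairwise common neighborhoods of distinct members of `S` in `G`. -/
def commonUnionG {V : Type*} (G : SimpleGraph V) (S : Set V) : Set V :=
  {w | ∃ u ∈ S, ∃ v ∈ S, u ≠ v ∧ G.Adj u w ∧ G.Adj v w}

/-- A graph is s-quadrangular if for every set `S` of at least two vertices in
which every member shares a neighbor with another member, the union of all
pairwise common neighborhoods has size at least `|S|`. -/
def SQuadG {V : Type*} (G : SimpleGraph V) : Prop :=
  ∀ S : Set V, 2 ≤ S.ncard →
    (∀ u ∈ S, ∃ v ∈ S, v ≠ u ∧ (G.neighborSet u ∩ G.neighborSet v).Nonempty) →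
    S.ncard ≤ (commonUnionG G S).ncard

/-- `eCnt G X Y` counts the edges of `G` with one endpoint in `X` and the
other in `Y` (for disjoint `X`, `Y`; encoded as ordered adjacent pairs). -/
noncomputable def eCnt {V : Type*} (G : SimpleGraph V) (X Y : Set V) : ℕ :=
  {p : V × V | p.1 ∈ X ∧ p.2 ∈ Y ∧ G.Adj p.1 p.2}.ncard

/-- Reachability inside the vertex set `W`, i.e. in the induced subgraph `G⟨W⟩`. -/
def ReachIn {V : Type*} (G : SimpleGraph V) (W : Set V) (a b : V) : Prop :=
  Relation.ReflTransGen (fun x y => x ∈ W ∧ y ∈ W ∧ G.Adj x y) a b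

/-- The vertex set of the connected component of `v` in the induced subgraph `G⟨W⟩`. -/
def compIn {V : Type*} (G : SimpleGraph V) (W : Set V) (v : V) : Set V :=
  {u | ReachIn G W v u}

/-!
Tutte's `f`-factor theorem turns the absence of a 2-factor into a pair `(S, T)` of negative defect.
Here the `f`-factor theorem comes from Mathlib's theorem on perfect matchings, applied to the graph
in which every vertex `v` is replaced by `f v` copies and every edge is subdivided twice.

Choose `(S, T)` of least defect and, among these pairs, with `e(T, V − S)` as small as possible. The
defects of all pairs have the same parity, so a change of the pair that decreases `e(T, V − S)` has
to increase the defect by at least 2. Dropping a vertex `t` from `T` gives (i), (ii) and (iv),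
adding a vertex `o` to `S` gives (v), and replacing `t` by `o` in `T` gives (vi).
-/

section Components

variable {V : Type*} {G : SimpleGraph V} {W W' : Set V} {w w' : V → ℕ} {a b : V}

lemma mem_compIn_self (G : SimpleGraph V) (W : Set V) (a : V) : a ∈ compIn G W a :=
  Relation.ReflTransGen.refl

lemma ReachIn.symm (h : ReachIn G W a b) : ReachIn G W b a := by
  induction h with
  | refl => exact .refl
  | tail _ h ih => exact .head ⟨h.2.1, h.1, h.2.2.symm⟩ ih

lemma compIn_eq_of_mem (h : b ∈ compIn G W a) : compIn G W b = compIn G W a :=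
  Set.ext fun _ => ⟨fun hc => .trans h hc, fun hc => .trans (ReachIn.symm h) hc⟩

lemma compIn_subset (ha : a ∈ W) : compIn G W a ⊆ W := by
  intro b hb
  induction hb with
  | refl => exact ha
  | tail _ h _ => exact h.2.1

lemma mem_compIn_of_adj {c : V} (hb : b ∈ compIn G W a) (hbW : b ∈ W) (hcW : c ∈ W)
    (h : G.Adj b c) : c ∈ compIn G W a :=
  .tail hb ⟨hbW, hcW, h⟩

lemma compIn_eq_of_adj (ha : a ∈ W) (hb : b ∈ W) (h : G.Adj a b) :
    compIn G W b = compIn G W a :=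
  compIn_eq_of_mem (mem_compIn_of_adj (mem_compIn_self G W a) ha hb h)

lemma compIn_subset_of_closed {C : Set V} (ha : a ∈ C)
    (hC : ∀ x ∈ C, x ∈ W → ∀ y ∈ W, G.Adj x y → y ∈ C) : compIn G W a ⊆ C := by
  intro b hb
  induction hb with
  | refl => exact ha
  | tail _ h ih => exact hC _ ih h.1 _ h.2.1 h.2.2

lemma compIn_eq_compIn (hsub : compIn G W a ⊆ W')
    (hclosed : ∀ x ∈ compIn G W a, ∀ y ∈ W', G.Adj x y → y ∈ compIn G W a) :
    compIn G W' a = compIn G W a := by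
  refine (compIn_subset_of_closed (mem_compIn_self G W a)
    fun x hx _ => hclosed x hx).antisymm fun b hb => ?_
  induction hb with
  | refl => exact mem_compIn_self G W' a
  | tail hb h ih => exact mem_compIn_of_adj ih (hsub hb) (hsub (.tail hb h)) h.2.2

/-- The union of the odd components of `G⟨W⟩`: those in which the weights `w` of the vertices sum
to an odd number. -/
def oddSupport (G : SimpleGraph V) (W : Set V) (w : V → ℕ) : Set V :=
  {v ∈ W | Odd (∑ᶠ u ∈ compIn G W v, w u)}

/-- The vertex sets of the odd components of `G⟨W⟩` with respect to the vertex weights `w`. -/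
def oddComps (G : SimpleGraph V) (W : Set V) (w : V → ℕ) : Set (Set V) :=
  compIn G W '' oddSupport G W w

lemma oddComps_eq_setOf :
    oddComps G W w = {C | ∃ v ∈ oddSupport G W w, C = compIn G W v} := by
  simp only [oddComps, Set.image, eq_comm]

lemma compIn_subset_oddSupport (ha : a ∈ oddSupport G W w) : compIn G W a ⊆ oddSupport G W w :=
  fun _ hb => ⟨compIn_subset ha.1 hb, compIn_eq_of_mem hb ▸ ha.2⟩

lemma mem_oddSupport_of_adj (ha : a ∈ oddSupport G W w) (hb : b ∈ W) (h : G.Adj a b) :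
    b ∈ oddSupport G W w :=
  compIn_subset_oddSupport ha (mem_compIn_of_adj (mem_compIn_self G W a) ha.1 hb h)

lemma compIn_oddSupport (ha : a ∈ oddSupport G W w) :
    compIn G (oddSupport G W w) a = compIn G W a :=
  compIn_eq_compIn (compIn_subset_oddSupport ha)
    fun _ hx _ hy hxy => mem_compIn_of_adj hx (compIn_subset ha.1 hx) hy.1 hxy

lemma compIn_mem_oddComps (ha : a ∈ oddSupport G W w) (hsub : compIn G W a ⊆ W')
    (hclosed : ∀ x ∈ compIn G W a, ∀ y ∈ W', G.Adj x y → y ∈ compIn G W a)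
    (hw : ∀ x ∈ compIn G W a, w' x = w x) : compIn G W a ∈ oddComps G W' w' := by
  have hcomp := compIn_eq_compIn hsub hclosed
  refine ⟨a, ⟨hsub (mem_compIn_self G W a), ?_⟩, hcomp⟩
  rw [hcomp, finsum_mem_congr rfl hw]
  exact ha.2

variable [Finite V]

lemma odd_ncard_oddComps_iff : Odd (oddComps G W w).ncard ↔ Odd (∑ᶠ v ∈ W, w v) := by
  classical
  have hdisj : (compIn G W '' W).PairwiseDisjoint id := by
    rintro _ ⟨a, -, rfl⟩ _ ⟨b, -, rfl⟩ hab
    exact Set.disjoint_left.2 fun c hca hcb =>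
      hab ((compIn_eq_of_mem hca).symm.trans (compIn_eq_of_mem hcb))
  have hunion : ⋃₀ (compIn G W '' W) = W :=
    (Set.sUnion_subset (Set.forall_mem_image.2 fun _ => compIn_subset)).antisymm
      fun a ha => ⟨_, Set.mem_image_of_mem _ ha, mem_compIn_self G W a⟩
  have hsum : ∑ᶠ v ∈ W, w v = ∑ᶠ C ∈ compIn G W '' W, ∑ᶠ v ∈ C, w v := by
    rw [← finsum_mem_sUnion hdisj (Set.toFinite _) fun _ _ => Set.toFinite _, hunion]
  rw [hsum, finsum_mem_eq_finite_toFinset_sum _ (Set.toFinite _),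
    Finset.odd_sum_iff_odd_card_odd, ← Set.ncard_coe_finset]
  congr! 2
  ext C
  simp only [oddComps, oddSupport, Set.mem_image, Finset.coe_filter, Set.Finite.mem_toFinset,
    Set.mem_ofPred_eq]
  exact ⟨fun ⟨v, ⟨hv, hodd⟩, hC⟩ => ⟨⟨v, hv, hC⟩, hC ▸ hodd⟩,
    fun ⟨⟨v, hv, hC⟩, hodd⟩ => ⟨v, ⟨hv, hC.symm ▸ hodd⟩, hC⟩⟩

lemma ncard_oddComps_le_add (x : V) (hW' : W' ⊆ insert x W)
    (hpres : ∀ C ∈ oddComps G W w, (∀ y ∈ C, ¬ G.Adj x y) → C ⊆ W' ∧ ∀ y ∈ C, w' y = w y) :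
    (oddComps G W w).ncard ≤ (oddComps G W' w').ncard +
      (compIn G W '' (G.neighborSet x ∩ oddSupport G W w)).ncard := by
  refine (Set.ncard_le_ncard ?_).trans (Set.ncard_union_le _ _)
  rintro _ ⟨v, hv, rfl⟩
  by_cases h : ∃ y ∈ compIn G W v, G.Adj x y
  · obtain ⟨y, hy, hxy⟩ := h
    exact .inr ⟨y, ⟨hxy, compIn_subset_oddSupport hv hy⟩, compIn_eq_of_mem hy⟩
  · push Not at h
    obtain ⟨hsub, hw⟩ := hpres _ ⟨v, hv, rfl⟩ h
    refine .inl (compIn_mem_oddComps hv hsub (fun a ha b hb hab => ?_) hw)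
    rcases hW' hb with rfl | hbW
    · exact absurd hab.symm (h a ha)
    · exact mem_compIn_of_adj ha (compIn_subset hv.1 ha) hbW hab

lemma ncard_oddComps_le_sdiff_singleton_add_one (x : V) :
    (oddComps G W w).ncard ≤ (oddComps G (W \ {x}) w).ncard + 1 := by
  rw [← Set.ncard_singleton (compIn G W x)]
  refine (Set.ncard_le_ncard ?_).trans (Set.ncard_union_le _ _)
  rintro _ ⟨v, hv, rfl⟩
  by_cases h : x ∈ compIn G W v
  · exact .inr (compIn_eq_of_mem h).symm
  · have hsub : compIn G W v ⊆ W \ {x} :=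
      Set.subset_sdiff_singleton (compIn_subset hv.1) h
    exact .inl (compIn_mem_oddComps hv hsub
      (fun a ha b hb hab => mem_compIn_of_adj ha (hsub ha).1 hb.1 hab) fun _ _ => rfl)

end Components

section EdgeCount

lemma finsum_mem_const {α M : Type*} [AddCommMonoid M] {s : Set α} (hs : s.Finite) (c : M) :
    ∑ᶠ _ ∈ s, c = s.ncard • c := by
  rw [finsum_mem_eq_finite_toFinset_sum _ hs, Finset.sum_const, Set.ncard_eq_toFinset_card s hs]

variable {V : Type*} {G : SimpleGraph V} {X X' Y Y' : Set V}

lemma eCnt_comm (G : SimpleGraph V) (X Y : Set V) : eCnt G X Y = eCnt G Y X := by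
  unfold eCnt
  rw [← Set.ncard_image_of_injective _ Prod.swap_injective]
  congr 1
  ext ⟨a, b⟩
  simp [Set.image_swap_eq_preimage_swap, G.adj_comm, and_left_comm]

lemma eCnt_singleton_left (G : SimpleGraph V) (v : V) (Y : Set V) :
    eCnt G {v} Y = (G.neighborSet v ∩ Y).ncard := by
  unfold eCnt
  rw [← Set.ncard_image_of_injective (G.neighborSet v ∩ Y) (Prod.mk_right_injective v)]
  congr 1
  ext ⟨a, b⟩
  simp only [Set.mem_ofPred_eq, Set.mem_singleton_iff, Set.mem_image, Set.mem_inter_iff,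
    SimpleGraph.mem_neighborSet, Prod.mk.injEq]
  grind

lemma eCnt_congr_right (h : ∀ x ∈ X, ∀ y, G.Adj x y → (y ∈ Y ↔ y ∈ Y')) :
    eCnt G X Y = eCnt G X Y' := by
  unfold eCnt
  congr 1
  ext ⟨a, b⟩
  simp only [Set.mem_ofPred_eq]
  grind

variable [Finite V]

lemma eCnt_union_left (G : SimpleGraph V) (h : Disjoint X X') (Y : Set V) :
    eCnt G (X ∪ X') Y = eCnt G X Y + eCnt G X' Y := by
  unfold eCnt
  rw [← Set.ncard_union_eq]
  · congr 1
    ext ⟨a, b⟩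
    simp only [Set.mem_union, Set.mem_ofPred_eq]
    tauto
  · rw [Set.disjoint_left] at h ⊢
    exact fun p hp hp' => h hp.1 hp'.1

lemma eCnt_union_right (G : SimpleGraph V) (X : Set V) (h : Disjoint Y Y') :
    eCnt G X (Y ∪ Y') = eCnt G X Y + eCnt G X Y' := by
  rw [eCnt_comm, eCnt_union_left G h, eCnt_comm G Y, eCnt_comm G Y']

lemma eCnt_insert_left {a : V} (ha : a ∉ X) (Y : Set V) :
    eCnt G (insert a X) Y = (G.neighborSet a ∩ Y).ncard + eCnt G X Y := by
  rw [Set.insert_eq, eCnt_union_left G (Set.disjoint_singleton_left.2 ha), eCnt_singleton_left]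

lemma eCnt_sdiff_singleton_left {a : V} (ha : a ∈ X) (Y : Set V) :
    (G.neighborSet a ∩ Y).ncard + eCnt G (X \ {a}) Y = eCnt G X Y := by
  rw [← eCnt_insert_left (by simp), Set.insert_sdiff_self_of_mem ha]

lemma eCnt_eq_finsum (G : SimpleGraph V) (X Y : Set V) :
    eCnt G X Y = ∑ᶠ v ∈ X, (G.neighborSet v ∩ Y).ncard := by
  induction X, X.toFinite using Set.Finite.induction_on with
  | empty => simp [eCnt]
  | insert ha hX ih => rw [eCnt_insert_left ha, ih, finsum_mem_insert _ ha hX]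

lemma even_eCnt_self (G : SimpleGraph V) (X : Set V) : Even (eCnt G X X) := by
  induction X, X.toFinite using Set.Finite.induction_on with
  | empty => simp [eCnt]
  | @insert a X ha _ ih =>
    have hloop : G.neighborSet a ∩ insert a X = G.neighborSet a ∩ X := by
      rw [Set.inter_insert_of_notMem (G.notMem_neighborSet_self)]
    rw [eCnt_insert_left ha, eCnt_comm G X, eCnt_insert_left ha, hloop, ← add_assoc]
    exact Even.add ⟨_, rfl⟩ ih

end EdgeCount

section Defect

variable {V : Type*} (G : SimpleGraph V) (f : V → ℕ) (S T : Set V)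

/-- The weight of a vertex in Tutte's theorem on `f`-factors: it sums to `f(Q) + e(Q, T)` over a
component `Q` of `G − S − T`. -/
noncomputable def tutteWeight (v : V) : ℕ :=
  f v + (G.neighborSet v ∩ T).ncard

/-- Tutte's defect `f(S) − f(T) + e(T, V − S) − q(S, T)` of a pair of disjoint sets; a negative
value witnesses that `G` has no `f`-factor. -/
noncomputable def defect : ℤ :=
  (∑ᶠ v ∈ S, f v : ℕ) - (∑ᶠ v ∈ T, f v : ℕ) + eCnt G T Sᶜ -
    (oddComps G (S ∪ T)ᶜ (tutteWeight G f T)).ncard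

/-- A pair of disjoint sets of least defect which, among those, has the fewest edges between `T`
and `V − S` (edges inside `T` being counted twice). -/
structure IsOptimalPair : Prop where
  disjoint : Disjoint S T
  defect_le : ∀ S' T', Disjoint S' T' → defect G f S T ≤ defect G f S' T'
  eCnt_le : ∀ S' T', Disjoint S' T' → defect G f S' T' = defect G f S T →
    eCnt G T Sᶜ ≤ eCnt G T' S'ᶜ

lemma exists_isOptimalPair [Finite V] : ∃ S T, IsOptimalPair G f S T := by
  let key (p : Set V × Set V) : ℤ ×ₗ ℕ := toLex (defect G f p.1 p.2, eCnt G p.2 p.1ᶜ)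
  obtain ⟨⟨S, T⟩, hdisj, hmin⟩ := Set.exists_min_image
    {p : Set V × Set V | Disjoint p.1 p.2} key (Set.toFinite _) ⟨(∅, ∅), disjoint_bot_left⟩
  simp only [key, Prod.Lex.toLex_le_toLex'] at hmin
  exact ⟨S, T, hdisj, fun S' T' h => (hmin (S', T') h).1,
    fun S' T' h heq => (hmin (S', T') h).2 heq.symm⟩

variable {G f S T}

lemma tutteWeight_congr {T' : Set V} {v : V} (h : ∀ y, G.Adj v y → (y ∈ T' ↔ y ∈ T)) :
    tutteWeight G f T' v = tutteWeight G f T v := by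
  unfold tutteWeight
  congr 2
  ext y
  exact and_congr_right (h y)

variable [Finite V]

lemma finsum_tutteWeight (X : Set V) :
    ∑ᶠ v ∈ X, tutteWeight G f T v = ∑ᶠ v ∈ X, f v + eCnt G X T := by
  rw [eCnt_eq_finsum, ← finsum_mem_add_distrib X.toFinite]
  rfl

lemma mem_oddSupport_tutteWeight_iff (hf : ∀ v, Even (f v)) {W : Set V} {v : V} :
    v ∈ oddSupport G W (tutteWeight G f T) ↔ v ∈ W ∧ Odd (eCnt G (compIn G W v) T) := by
  have heven : Even (∑ᶠ u ∈ compIn G W v, f u) :=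
    finsum_mem_induction _ Even.zero (fun _ _ => Even.add) fun u _ => hf u
  rw [oddSupport, Set.mem_ofPred_eq, finsum_tutteWeight, Nat.odd_add', iff_true_right heven]

lemma defect_const (k : ℕ) :
    defect G (fun _ => k) S T = S.ncard * k - T.ncard * k + eCnt G T Sᶜ -
      (oddComps G (S ∪ T)ᶜ (tutteWeight G (fun _ => k) T)).ncard := by
  simp only [defect, finsum_mem_const (Set.toFinite _), smul_eq_mul, Nat.cast_mul]

lemma odd_defect_iff (h : Disjoint S T) : Odd (defect G f S T) ↔ Odd (∑ᶠ v, f v) := by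
  have hodd := odd_ncard_oddComps_iff (G := G) (W := (S ∪ T)ᶜ) (w := tutteWeight G f T)
  rw [finsum_tutteWeight] at hodd
  have hsum : ∑ᶠ v, f v = ∑ᶠ v ∈ S, f v + ∑ᶠ v ∈ T, f v + ∑ᶠ v ∈ (S ∪ T)ᶜ, f v := by
    rw [← finsum_mem_union h S.toFinite T.toFinite,
      ← finsum_mem_union disjoint_compl_right (Set.toFinite _) (Set.toFinite _),
      Set.union_compl_self, finsum_mem_univ]
  have hcompl : Sᶜ = T ∪ (S ∪ T)ᶜ := by
    ext x
    have hx : x ∈ T → x ∉ S := fun hT hS => Set.disjoint_left.1 h hS hT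
    simp only [Set.mem_union, Set.mem_compl_iff]
    tauto
  have hedges : eCnt G T Sᶜ = eCnt G T T + eCnt G (S ∪ T)ᶜ T := by
    rw [hcompl, eCnt_union_right G T (disjoint_compl_right.mono_left Set.subset_union_right),
      eCnt_comm G T (S ∪ T)ᶜ]
  have := even_eCnt_self G T
  rw [defect, hsum, hedges]
  grind

namespace IsOptimalPair

lemma defect_add_two_le (h : IsOptimalPair G f S T) {S' T' : Set V} (hdisj : Disjoint S' T')
    (hlt : eCnt G T' S'ᶜ < eCnt G T Sᶜ) : defect G f S T + 2 ≤ defect G f S' T' := by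
  have hle := h.defect_le S' T' hdisj
  have hne : defect G f S' T' ≠ defect G f S T := fun heq =>
    (h.eCnt_le S' T' hdisj heq).not_gt hlt
  have hparity : Odd (defect G f S T) ↔ Odd (defect G f S' T') :=
    (odd_defect_iff h.disjoint).trans (odd_defect_iff hdisj).symm
  grind

lemma ncard_neighborSet_inter_compl_le (h : IsOptimalPair G f S T) {t : V} (ht : t ∈ T) :
    (G.neighborSet t ∩ Sᶜ).ncard ≤ (f t - 2) + (compIn G (S ∪ T)ᶜ ''
      (G.neighborSet t ∩ oddSupport G (S ∪ T)ᶜ (tutteWeight G f T))).ncard := by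
  have hcomps : (oddComps G (S ∪ T)ᶜ (tutteWeight G f T)).ncard ≤
      (oddComps G (S ∪ T \ {t})ᶜ (tutteWeight G f (T \ {t}))).ncard +
        (compIn G (S ∪ T)ᶜ '' (G.neighborSet t ∩
          oddSupport G (S ∪ T)ᶜ (tutteWeight G f T))).ncard := by
    refine ncard_oddComps_le_add t (by grind) fun C hC hCt => ⟨?_, fun y hy => ?_⟩
    · obtain ⟨v, hv, rfl⟩ := hC
      exact (compIn_subset hv.1).trans (by gcongr; exact Set.sdiff_subset)
    · exact tutteWeight_congr fun z hz => by grind [hCt y hy, G.adj_comm]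
  have hedges := eCnt_sdiff_singleton_left (G := G) ht Sᶜ
  have hsum : f t + ∑ᶠ v ∈ T \ {t}, f v = ∑ᶠ v ∈ T, f v := by
    rw [← finsum_mem_insert f (by simp) (Set.toFinite _), Set.insert_sdiff_self_of_mem ht]
  by_contra! hlt
  have := h.defect_add_two_le (h.disjoint.mono_right Set.sdiff_subset)
    (show eCnt G (T \ {t}) Sᶜ < _ by omega)
  unfold defect at this
  omega

lemma neighborSet_inter_compl_eq (h : IsOptimalPair G f S T) {t : V} (ht : t ∈ T)
    (hft : f t ≤ 2) :
    G.neighborSet t ∩ Sᶜ = G.neighborSet t ∩ oddSupport G (S ∪ T)ᶜ (tutteWeight G f T) := by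
  have hsub : G.neighborSet t ∩ oddSupport G (S ∪ T)ᶜ (tutteWeight G f T) ⊆
      G.neighborSet t ∩ Sᶜ := fun y hy => ⟨hy.1, fun hS => hy.2.1 (.inl hS)⟩
  refine (Set.eq_of_subset_of_ncard_le hsub ?_).symm
  refine (h.ncard_neighborSet_inter_compl_le ht).trans ?_
  rw [Nat.sub_eq_zero_of_le hft, zero_add]
  exact Set.ncard_image_le (Set.toFinite _)

lemma injOn_compIn (h : IsOptimalPair G f S T) {t : V} (ht : t ∈ T) (hft : f t ≤ 2) :
    Set.InjOn (compIn G (S ∪ T)ᶜ) (G.neighborSet t ∩ Sᶜ) := by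
  refine Set.injOn_of_ncard_image_eq ((Set.ncard_image_le (Set.toFinite _)).antisymm ?_)
  refine (h.ncard_neighborSet_inter_compl_le ht).trans_eq ?_
  rw [Nat.sub_eq_zero_of_le hft, zero_add, ← h.neighborSet_inter_compl_eq ht hft]

lemma ncard_neighborSet_inter_le (h : IsOptimalPair G f S T) {o : V} (ho : o ∉ S ∪ T) :
    (G.neighborSet o ∩ T).ncard ≤ f o - 1 := by
  obtain ⟨hoS, hoT⟩ := not_or.1 ho
  have hcomps : (oddComps G (S ∪ T)ᶜ (tutteWeight G f T)).ncard ≤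
      (oddComps G (insert o S ∪ T)ᶜ (tutteWeight G f T)).ncard + 1 := by
    have hcompl : (insert o S ∪ T)ᶜ = (S ∪ T)ᶜ \ {o} := by grind
    rw [hcompl]
    exact ncard_oddComps_le_sdiff_singleton_add_one o
  have hedges : eCnt G T Sᶜ = (G.neighborSet o ∩ T).ncard + eCnt G T (insert o S)ᶜ := by
    have hcompl : Sᶜ = insert o (insert o S)ᶜ := by grind
    rw [hcompl, eCnt_comm, eCnt_insert_left (by simp), eCnt_comm G T]
  have hsum : ∑ᶠ v ∈ insert o S, f v = f o + ∑ᶠ v ∈ S, f v := finsum_mem_insert f hoS S.toFinite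
  by_contra! hlt
  have := h.defect_add_two_le (Set.disjoint_insert_left.2 ⟨hoT, h.disjoint⟩)
    (show eCnt G T (insert o S)ᶜ < _ by omega)
  unfold defect at this
  omega

-- Otherwise replacing `t` by `o` in `T` would improve the pair.
lemma ncard_neighborSet_le_one (h : IsOptimalPair G f S T) {t o : V} (ht : t ∈ T)
    (ho : o ∉ S ∪ T) (hto : G.Adj t o) (hf : f t ≤ f o) (htS : G.neighborSet t ⊆ Sᶜ)
    (hoS : G.neighborSet o ∩ Sᶜ ⊆ {t}) : (G.neighborSet t).ncard ≤ 1 := by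
  obtain ⟨hoS', hoT⟩ := not_or.1 ho
  have hoT' : o ∉ T \ {t} := fun ho => hoT ho.1
  have hdisj : Disjoint S (insert o (T \ {t})) :=
    Set.disjoint_insert_right.2 ⟨hoS', h.disjoint.mono_right Set.sdiff_subset⟩
  have hcomps : (oddComps G (S ∪ T)ᶜ (tutteWeight G f T)).ncard ≤
      (oddComps G (S ∪ insert o (T \ {t}))ᶜ (tutteWeight G f (insert o (T \ {t})))).ncard +
        (G.neighborSet t).ncard := by
    refine (ncard_oddComps_le_add t (by grind) fun C hC hCt => ?_).trans
      (Nat.add_le_add_left ((Set.ncard_image_le (Set.toFinite _)).trans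
        (Set.ncard_le_ncard Set.inter_subset_left)) _)
    have hoC : o ∉ C := fun hoC => hCt o hoC hto
    obtain ⟨v, hv, rfl⟩ := hC
    have hsub : compIn G (S ∪ T)ᶜ v ⊆ (S ∪ T)ᶜ := compIn_subset hv.1
    refine ⟨fun y hy => by grind, fun y hy => tutteWeight_congr fun z hz => ?_⟩
    have hzt : z ≠ t := fun hzt => hCt y hy (hzt ▸ hz.symm)
    have hzo : z ≠ o := fun hzo => hoC (mem_compIn_of_adj hy (hsub hy) ho (hzo ▸ hz))
    simp [hzt, hzo]
  have hedges := eCnt_sdiff_singleton_left (G := G) ht Sᶜ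
  have hedges' := eCnt_insert_left (G := G) hoT' Sᶜ
  have hone : (G.neighborSet o ∩ Sᶜ).ncard ≤ 1 :=
    (Set.ncard_le_ncard hoS).trans_eq (Set.ncard_singleton t)
  rw [Set.inter_eq_left.2 htS] at hedges
  have hsum : f t + ∑ᶠ v ∈ T \ {t}, f v = ∑ᶠ v ∈ T, f v := by
    rw [← finsum_mem_insert f (by simp) (Set.toFinite _), Set.insert_sdiff_self_of_mem ht]
  have hsum' := finsum_mem_insert f hoT' (Set.toFinite _)
  by_contra! hlt
  have := h.defect_add_two_le hdisj (by omega)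
  unfold defect at this
  omega

lemma neighbor_mem_oddSupport (h : IsOptimalPair G f S T) {t y : V} (ht : t ∈ T) (hft : f t ≤ 2)
    (hty : G.Adj t y) (hy : y ∉ S) : y ∈ oddSupport G (S ∪ T)ᶜ (tutteWeight G f T) :=
  ((h.neighborSet_inter_compl_eq ht hft).subset ⟨hty, hy⟩).2

lemma not_adj (h : IsOptimalPair G f S T) {t t' : V} (ht : t ∈ T) (ht' : t' ∈ T)
    (hft : f t ≤ 2) : ¬ G.Adj t t' := fun hadj =>
  have htS : t' ∉ S := fun hS => Set.disjoint_left.1 h.disjoint hS ht'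
  (h.neighbor_mem_oddSupport ht hft hadj htS).1 (.inr ht')

lemma not_adj_of_notMem_oddSupport (h : IsOptimalPair G f S T) {r x : V}
    (hr : r ∈ (S ∪ T)ᶜ \ oddSupport G (S ∪ T)ᶜ (tutteWeight G f T))
    (hx : x ∈ oddSupport G (S ∪ T)ᶜ (tutteWeight G f T) ∪ T) (hfx : f x ≤ 2) :
    ¬ G.Adj r x := fun hrx =>
  hr.2 (hx.elim (fun hxO => mem_oddSupport_of_adj hxO hr.1 hrx.symm)
    fun hxT => h.neighbor_mem_oddSupport hxT hfx hrx.symm fun hS => hr.1 (.inl hS))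

lemma eq_of_compIn_oddSupport_eq (h : IsOptimalPair G f S T) {t o o' : V} (ht : t ∈ T)
    (hft : f t ≤ 2) (ho : o ∈ oddSupport G (S ∪ T)ᶜ (tutteWeight G f T))
    (ho' : o' ∈ oddSupport G (S ∪ T)ᶜ (tutteWeight G f T))
    (heq : compIn G (oddSupport G (S ∪ T)ᶜ (tutteWeight G f T)) o =
      compIn G (oddSupport G (S ∪ T)ᶜ (tutteWeight G f T)) o')
    (hto : G.Adj t o) (hto' : G.Adj t o') : o = o' := by
  rw [compIn_oddSupport ho, compIn_oddSupport ho'] at heq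
  exact h.injOn_compIn ht hft ⟨hto, fun hS => ho.1 (.inl hS)⟩ ⟨hto', fun hS => ho'.1 (.inl hS)⟩ heq

lemma ncard_neighborSet_le_one_of_eCnt_eq_zero (h : IsOptimalPair G f S T) {t o : V} (ht : t ∈ T)
    (ho : o ∈ oddSupport G (S ∪ T)ᶜ (tutteWeight G f T)) (hto : G.Adj t o) (hf : f t ≤ f o)
    (hfo : f o ≤ 2) (htS : eCnt G {t} S = 0)
    (hoO : eCnt G {o} (oddSupport G (S ∪ T)ᶜ (tutteWeight G f T)) = 0) :
    (G.neighborSet t).ncard ≤ 1 := by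
  rw [eCnt_singleton_left, Set.ncard_eq_zero] at htS hoO
  have hoT : (G.neighborSet o ∩ T).Subsingleton :=
    Set.ncard_le_one_iff_subsingleton.1 <|
      (h.ncard_neighborSet_inter_le ho.1).trans (Nat.sub_le_sub_right hfo 1)
  refine h.ncard_neighborSet_le_one ht ho.1 hto hf
    (Set.disjoint_iff_inter_eq_empty.2 htS).subset_compl_right fun y hy => ?_
  by_cases hyT : y ∈ T
  · exact hoT ⟨hy.1, hyT⟩ ⟨hto.symm, ht⟩
  · have hyO := mem_oddSupport_of_adj ho (fun hST => hST.elim hy.2 hyT) hy.1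
    exact absurd ⟨hy.1, hyO⟩ (Set.eq_empty_iff_forall_notMem.1 hoO y)

lemma eCnt_compl_eq (h : IsOptimalPair G f S T) (hf : ∀ t ∈ T, f t ≤ 2) :
    eCnt G T Sᶜ = eCnt G T (oddSupport G (S ∪ T)ᶜ (tutteWeight G f T)) :=
  eCnt_congr_right fun t ht _ hty =>
    ⟨h.neighbor_mem_oddSupport ht (hf t ht) hty, fun hy hS => hy.1 (.inl hS)⟩

end IsOptimalPair

end Defect

section PerfectMatching

variable {V : Type*} {G : SimpleGraph V}

lemma image_val_supp_deleteVerts (U : Set V) (x : ((⊤ : G.Subgraph).deleteVerts U).verts) :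
    Subtype.val '' (((⊤ : G.Subgraph).deleteVerts U).coe.connectedComponentMk x).supp =
      compIn G Uᶜ x := by
  ext b
  simp only [Set.mem_image, SimpleGraph.ConnectedComponent.mem_supp_iff,
    SimpleGraph.ConnectedComponent.eq, Subtype.exists, exists_and_right, exists_eq_right]
  constructor
  · rintro ⟨hb, h⟩
    refine ((SimpleGraph.reachable_iff_reflTransGen _ _).1 h.symm).lift Subtype.val
      fun a c hac => ?_
    have hac' := SimpleGraph.Subgraph.deleteVerts_adj.1 hac
    exact ⟨hac'.2.1, hac'.2.2.2.1, hac'.2.2.2.2.adj_sub⟩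
  · intro h
    induction h with
    | refl => exact ⟨x.2, .rfl⟩
    | @tail b c _ h ih =>
      obtain ⟨hb, ih⟩ := ih
      have hbc : ((⊤ : G.Subgraph).deleteVerts U).coe.Adj ⟨b, hb⟩ ⟨c, trivial, h.2.1⟩ :=
        SimpleGraph.Subgraph.deleteVerts_adj.2 ⟨trivial, h.1, trivial, h.2.1, h.2.2⟩
      exact ⟨⟨trivial, h.2.1⟩, hbc.symm.reachable.trans ih⟩

variable [Finite V]

lemma ncard_lt_ncard_oddComps_of_isTutteViolator {U : Set V} (h : G.IsTutteViolator U) :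
    U.ncard < (oddComps G Uᶜ fun _ => 1).ncard := by
  refine h.trans_le (Set.ncard_le_ncard_of_injOn (fun c => Subtype.val '' c.supp) ?_ ?_)
  · intro c hc
    induction c using SimpleGraph.ConnectedComponent.ind with | _ x =>
    refine ⟨x, ⟨x.2.2, ?_⟩, (image_val_supp_deleteVerts U x).symm⟩
    rw [finsum_mem_const (Set.toFinite _), smul_eq_mul, mul_one, ← image_val_supp_deleteVerts,
      Set.ncard_image_of_injective _ Subtype.val_injective]
    exact hc
  · intro c _ c' _ hcc'
    exact SimpleGraph.ConnectedComponent.supp_injective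
      (Set.image_injective.2 Subtype.val_injective hcc')

lemma odd_ncard_add_ncard_oddComps_iff (G : SimpleGraph V) (U : Set V) :
    Odd (U.ncard + (oddComps G Uᶜ fun _ => 1).ncard) ↔ Odd (Nat.card V) := by
  have hodd := odd_ncard_oddComps_iff (G := G) (W := Uᶜ) (w := fun _ => 1)
  rw [finsum_mem_const (Set.toFinite _), smul_eq_mul, mul_one] at hodd
  rw [← Set.ncard_add_ncard_compl U, Nat.odd_add', Nat.odd_add', hodd]

lemma exists_violator_forall_three_le (h : ¬ ∃ M : G.Subgraph, M.IsPerfectMatching) :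
    ∃ U : Set V, U.ncard < (oddComps G Uᶜ fun _ => 1).ncard ∧
      ∀ u ∈ U, 3 ≤ (compIn G Uᶜ '' (G.neighborSet u ∩ Uᶜ)).ncard := by
  rw [SimpleGraph.tutte] at h
  push Not at h
  obtain ⟨U₀, hU₀⟩ := h
  let key (U : Set V) : ℤ ×ₗ ℕ :=
    toLex ((U.ncard : ℤ) - (oddComps G Uᶜ fun _ => 1).ncard, U.ncard)
  obtain ⟨U, -, hmin⟩ := Set.exists_min_image Set.univ key Set.finite_univ ⟨∅, trivial⟩
  simp only [key, Prod.Lex.toLex_le_toLex', Set.mem_univ, true_imp_iff] at hmin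
  refine ⟨U, ?_, fun u hu => ?_⟩
  · have hle := (hmin U₀).1
    have hlt := ncard_lt_ncard_oddComps_of_isTutteViolator hU₀
    omega
  · have hcard : (U \ {u}).ncard + 1 = U.ncard := Set.ncard_sdiff_singleton_add_one hu
    have hcomps : (oddComps G Uᶜ fun _ => 1).ncard ≤ (oddComps G (U \ {u})ᶜ fun _ => 1).ncard +
        (compIn G Uᶜ '' (G.neighborSet u ∩ oddSupport G Uᶜ fun _ => 1)).ncard := by
      refine ncard_oddComps_le_add u (by grind) fun C hC _ => ⟨?_, fun _ _ => rfl⟩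
      obtain ⟨v, hv, rfl⟩ := hC
      exact (compIn_subset hv.1).trans (Set.compl_subset_compl.2 Set.sdiff_subset)
    have hsub : (compIn G Uᶜ '' (G.neighborSet u ∩ oddSupport G Uᶜ fun _ => 1)).ncard ≤
        (compIn G Uᶜ '' (G.neighborSet u ∩ Uᶜ)).ncard :=
      Set.ncard_le_ncard (Set.image_mono fun y hy => ⟨hy.1, hy.2.1⟩)
    have hparity := (odd_ncard_add_ncard_oddComps_iff G U).trans
      (odd_ncard_add_ncard_oddComps_iff G (U \ {u})).symm
    have hmin := hmin (U \ {u})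
    grind

end PerfectMatching

section Gadget

variable {V : Type*} (G : SimpleGraph V) (f : V → ℕ)

/-- `G` has an `f`-factor: a spanning subgraph in which every vertex `v` has degree `f v`. -/
def HasFactor : Prop :=
  ∃ H : SimpleGraph V, H ≤ G ∧ ∀ v, (H.neighborSet v).ncard = f v

/-- The vertices of `gadget G f`: `f v` copies of every vertex `v`, and the darts of `G`. -/
abbrev GadgetVertex : Type _ := (Σ v, Fin (f v)) ⊕ G.Dart

/-- The graph obtained from `G` by replacing every edge by a path with two inner vertices, the
darts of the edge, and every vertex `v` by `f v` copies. Its perfect matchings correspond to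
`f`-factors of `G`. -/
def gadget : SimpleGraph (GadgetVertex G f) where
  Adj
    | .inl _, .inl _ => False
    | .inl a, .inr d => d.fst = a.1
    | .inr d, .inl a => d.fst = a.1
    | .inr d, .inr e => e = d.symm
  symm := ⟨by
    rintro (a | d) (b | e) h
    · exact h
    · exact h
    · exact h
    · exact h ▸ d.symm_symm.symm⟩
  loopless := ⟨by
    rintro (a | d) h
    · exact h
    · exact d.symm_ne h.symm⟩

variable {G f}

lemma not_gadget_adj_inl_inl {a b : Σ v, Fin (f v)} :
    ¬ (gadget G f).Adj (.inl a) (.inl b) := id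

/-- The spanning subgraph of `G` encoded by a perfect matching `M` of `gadget G f`: the edges whose
two darts are not matched to each other. -/
def factorOfMatching (M : (gadget G f).Subgraph) : SimpleGraph V where
  Adj v w := ∃ h : G.Adj v w, ¬ M.Adj (.inr ⟨(v, w), h⟩) (.inr ⟨(w, v), h.symm⟩)
  symm := ⟨fun _ _ ⟨h, hn⟩ => ⟨h.symm, fun h' => hn h'.symm⟩⟩
  loopless := ⟨fun v ⟨h, _⟩ => G.loopless.irrefl v h⟩

lemma factorOfMatching_adj_iff {M : (gadget G f).Subgraph} (hM : M.IsPerfectMatching) {v w : V} :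
    (factorOfMatching M).Adj v w ↔
      ∃ (h : G.Adj v w) (i : Fin (f v)), M.Adj (.inl ⟨v, i⟩) (.inr ⟨(v, w), h⟩) := by
  rw [SimpleGraph.Subgraph.isPerfectMatching_iff] at hM
  refine exists_congr fun h => ⟨fun hnot => ?_, fun ⟨i, hi⟩ h' => ?_⟩
  · obtain ⟨⟨b, i⟩ | e, hx, -⟩ := hM (.inr ⟨(v, w), h⟩)
    · obtain rfl : v = b := hx.adj_sub
      exact ⟨i, hx.symm⟩
    · obtain rfl : e = _ := hx.adj_sub
      exact absurd hx hnot
  · exact Sum.inl_ne_inr ((hM _).unique hi.symm h')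

lemma ncard_neighborSet_factorOfMatching {M : (gadget G f).Subgraph} (hM : M.IsPerfectMatching)
    (v : V) : ((factorOfMatching M).neighborSet v).ncard = f v := by
  have hpartner := SimpleGraph.Subgraph.isPerfectMatching_iff.1 hM
  have hcopy : ∀ i : Fin (f v), ∃ (w : V) (h : G.Adj v w),
      M.Adj (.inl ⟨v, i⟩) (.inr ⟨(v, w), h⟩) := by
    intro i
    obtain ⟨b | ⟨⟨a, w⟩, haw⟩, hx, -⟩ := hpartner (.inl ⟨v, i⟩)
    · exact absurd hx.adj_sub not_gadget_adj_inl_inl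
    · obtain rfl : a = v := hx.adj_sub
      exact ⟨w, haw, hx⟩
  choose n hn hMn using hcopy
  have hinj : n.Injective := by
    intro i j hij
    have hi := (hMn i).symm
    simp only [hij] at hi
    simpa using (hpartner _).unique hi (hMn j).symm
  have hrange : (factorOfMatching M).neighborSet v = Set.range n := by
    ext w
    rw [SimpleGraph.mem_neighborSet, factorOfMatching_adj_iff hM]
    constructor
    · rintro ⟨h, i, hi⟩
      have heq := (hpartner _).unique (hMn i) hi
      simp only [Sum.inr.injEq, SimpleGraph.Dart.mk.injEq, Prod.mk.injEq, true_and] at heq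
      exact ⟨i, heq⟩
    · rintro ⟨i, rfl⟩
      exact ⟨hn i, i, hMn i⟩
  rw [hrange, Set.ncard_range_of_injective hinj, Nat.card_fin]

lemma hasFactor_of_isPerfectMatching {M : (gadget G f).Subgraph} (hM : M.IsPerfectMatching) :
    HasFactor G f :=
  ⟨factorOfMatching M, fun _ _ h => h.1, ncard_neighborSet_factorOfMatching hM⟩

variable (G f) in
/-- The vertices of `gadget G f` removed for the pair `(S, T)`: the copies of the vertices of `S`
and the darts starting in `T`. -/
def gadgetCut (S T : Set V) : Set (GadgetVertex G f) :=
  {x | x.elim (fun a => a.1 ∈ S) (fun d => d.fst ∈ T)}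

open Classical in
/-- The projection of `gadget G f` to `V` for which the components of `gadget G f` minus
`gadgetCut G f S T` over `V − S − T` are the preimages of those of `G − S − T`. A dart starting in
`S` projects to its endpoint since the copies of its starting point are removed. -/
noncomputable def gadgetBase (S : Set V) : GadgetVertex G f → V
  | .inl a => a.1
  | .inr d => if d.fst ∈ S then d.snd else d.fst

variable {S T Q : Set V} {a : Σ v, Fin (f v)} {d : G.Dart} {x y : GadgetVertex G f}

@[simp] lemma inr_mem_gadgetCut : .inr d ∈ gadgetCut G f S T ↔ d.fst ∈ T := Iff.rfl

@[simp] lemma gadgetBase_inr_of_mem (h : d.fst ∈ S) :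
    gadgetBase (f := f) S (.inr d) = d.snd := if_pos h

@[simp] lemma gadgetBase_inr_of_notMem (h : d.fst ∉ S) :
    gadgetBase (f := f) S (.inr d) = d.fst := if_neg h

lemma notMem_gadgetCut_of_gadgetBase (hdisj : Disjoint S T) (hx : gadgetBase S x ∈ (S ∪ T)ᶜ) :
    x ∉ gadgetCut G f S T := by
  obtain a | d := x
  · exact fun h => hx (.inl h)
  · intro hT
    have hS : d.fst ∉ S := fun hS => Set.disjoint_left.1 hdisj hS hT
    rw [gadgetBase_inr_of_notMem hS] at hx
    exact hx (.inr hT)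

lemma gadgetBase_mem_compIn_of_adj (hx : x ∉ gadgetCut G f S T) (hy : y ∉ gadgetCut G f S T)
    (hxy : (gadget G f).Adj x y) (hW : gadgetBase S x ∈ (S ∪ T)ᶜ) :
    gadgetBase S y ∈ compIn G (S ∪ T)ᶜ (gadgetBase S x) := by
  obtain a | d := x <;> obtain b | e := y
  · exact absurd hxy not_gadget_adj_inl_inl
  · have hea : e.fst = a.1 := hxy
    rw [gadgetBase_inr_of_notMem (hea ▸ hx), hea]
    exact mem_compIn_self _ _ _
  · have hdb : d.fst = b.1 := hxy
    rw [gadgetBase_inr_of_notMem (hdb ▸ hy), hdb]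
    exact mem_compIn_self _ _ _
  · obtain rfl : e = d.symm := hxy
    by_cases hd : d.fst ∈ S
    · rw [gadgetBase_inr_of_mem hd] at hW ⊢
      rw [gadgetBase_inr_of_notMem fun h => hW (.inl h)]
      exact mem_compIn_self _ _ _
    · rw [gadgetBase_inr_of_notMem hd] at hW ⊢
      by_cases he : d.snd ∈ S
      · rw [gadgetBase_inr_of_mem (d := d.symm) he]
        exact mem_compIn_self _ _ _
      · rw [gadgetBase_inr_of_notMem (d := d.symm) he]
        exact mem_compIn_of_adj (mem_compIn_self _ _ _) hW (fun h => h.elim he hy) d.adj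

lemma compIn_gadgetCut_eq_copy (hdeg : ∀ v ∈ (S ∪ T)ᶜ, ∃ w, G.Adj v w)
    (hx : x ∉ gadgetCut G f S T) {v : V} (hv : v ∈ (S ∪ T)ᶜ) (hxv : gadgetBase S x = v)
    (i : Fin (f v)) :
    compIn (gadget G f) (gadgetCut G f S T)ᶜ x =
      compIn (gadget G f) (gadgetCut G f S T)ᶜ (.inl ⟨v, i⟩) := by
  have hcopy : ∀ j : Fin (f v), .inl ⟨v, j⟩ ∉ gadgetCut G f S T := fun j h => hv (.inl h)
  have hdart : ∀ e : G.Dart, e.fst = v → ∀ j : Fin (f v),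
      compIn (gadget G f) (gadgetCut G f S T)ᶜ (.inr e) =
        compIn (gadget G f) (gadgetCut G f S T)ᶜ (.inl ⟨v, j⟩) := fun e he j =>
    compIn_eq_of_adj (hcopy j) (fun h => hv (.inr (he ▸ h))) he
  obtain ⟨b, j⟩ | d := x
  · obtain rfl : b = v := hxv
    obtain ⟨w, hw⟩ := hdeg b hv
    rw [← hdart ⟨(b, w), hw⟩ rfl j, hdart ⟨(b, w), hw⟩ rfl i]
  · by_cases hd : d.fst ∈ S
    · rw [gadgetBase_inr_of_mem hd] at hxv
      rw [← hdart d.symm hxv i]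
      exact compIn_eq_of_adj (fun h => hv (.inr (hxv ▸ h))) hx d.symm_symm.symm
    · rw [gadgetBase_inr_of_notMem hd] at hxv
      exact hdart d hxv i

lemma compIn_gadgetCut_eq_of_mem (hdisj : Disjoint S T) (hpos : ∀ v ∈ (S ∪ T)ᶜ, 0 < f v)
    (hdeg : ∀ v ∈ (S ∪ T)ᶜ, ∃ w, G.Adj v w) (hx : gadgetBase S x ∈ (S ∪ T)ᶜ)
    (hy : gadgetBase S y ∈ compIn G (S ∪ T)ᶜ (gadgetBase S x)) :
    compIn (gadget G f) (gadgetCut G f S T)ᶜ y = compIn (gadget G f) (gadgetCut G f S T)ᶜ x := by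
  have hfiber : ∀ {y z : GadgetVertex G f}, gadgetBase S z ∈ (S ∪ T)ᶜ →
      gadgetBase S y = gadgetBase S z → compIn (gadget G f) (gadgetCut G f S T)ᶜ y =
        compIn (gadget G f) (gadgetCut G f S T)ᶜ z := fun {y z} hz hyz => by
    have hz' := notMem_gadgetCut_of_gadgetBase hdisj hz
    have hy' := notMem_gadgetCut_of_gadgetBase hdisj (hyz ▸ hz)
    rw [compIn_gadgetCut_eq_copy hdeg hy' hz hyz ⟨0, hpos _ hz⟩,
      compIn_gadgetCut_eq_copy hdeg hz' hz rfl ⟨0, hpos _ hz⟩]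
  generalize hb : gadgetBase S y = b at hy
  induction hy generalizing y with
  | refl => exact hfiber hx hb
  | @tail b c _ hbc ih =>
    let e : G.Dart := ⟨(b, c), hbc.2.2⟩
    have he : gadgetBase S (.inr e : GadgetVertex G f) = b :=
      gadgetBase_inr_of_notMem fun h => hbc.1 (.inl h)
    have he' : gadgetBase S (.inr e.symm : GadgetVertex G f) = c :=
      gadgetBase_inr_of_notMem fun h => hbc.2.1 (.inl h)
    rw [hfiber (he' ▸ hbc.2.1) (hb.trans he'.symm), ← ih he]
    exact compIn_eq_of_adj (notMem_gadgetCut_of_gadgetBase hdisj (he ▸ hbc.1))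
      (notMem_gadgetCut_of_gadgetBase hdisj (he' ▸ hbc.2.1)) rfl

lemma compIn_gadgetCut (hdisj : Disjoint S T) (hpos : ∀ v ∈ (S ∪ T)ᶜ, 0 < f v)
    (hdeg : ∀ v ∈ (S ∪ T)ᶜ, ∃ w, G.Adj v w) (hx : gadgetBase S x ∈ (S ∪ T)ᶜ) :
    compIn (gadget G f) (gadgetCut G f S T)ᶜ x =
      gadgetBase S ⁻¹' compIn G (S ∪ T)ᶜ (gadgetBase S x) := by
  refine (compIn_subset_of_closed (Set.mem_preimage.2 (mem_compIn_self _ _ _))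
    fun y hy hyW z hzW hyz => ?_).antisymm fun y hy => ?_
  · exact .trans hy (gadgetBase_mem_compIn_of_adj hyW hzW hyz (compIn_subset hx hy))
  · rw [← compIn_gadgetCut_eq_of_mem hdisj hpos hdeg hx hy]
    exact mem_compIn_self _ _ _

lemma compIn_gadgetCut_inr_of_mem (hdisj : Disjoint S T) (hd : d.fst ∈ S) (hd' : d.snd ∈ S) :
    compIn (gadget G f) (gadgetCut G f S T)ᶜ (.inr d) = {.inr d, .inr d.symm} := by
  refine (compIn_subset_of_closed (Set.mem_insert _ _) ?_).antisymm ?_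
  · rintro _ (rfl | rfl) _ (b | e) hy hxy
    · exact absurd hd ((show d.fst = b.1 from hxy) ▸ hy)
    · exact .inr (congrArg Sum.inr hxy)
    · exact absurd hd' ((show d.snd = b.1 from hxy) ▸ hy)
    · exact .inl (congrArg Sum.inr ((show e = d.symm.symm from hxy).trans d.symm_symm))
  · rintro _ (rfl | rfl)
    · exact mem_compIn_self _ _ _
    · exact mem_compIn_of_adj (mem_compIn_self _ _ _) (Set.disjoint_left.1 hdisj hd)
        (Set.disjoint_left.1 hdisj hd') rfl

lemma ncard_darts (X Y : Set V) : {d : G.Dart | d.fst ∈ X ∧ d.snd ∈ Y}.ncard = eCnt G X Y := by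
  unfold eCnt
  rw [← Set.ncard_image_of_injective _ (SimpleGraph.Dart.toProd_injective (G := G))]
  congr 1
  ext ⟨a, b⟩
  constructor
  · rintro ⟨d, hd, h⟩
    obtain ⟨rfl, rfl⟩ := Prod.mk.inj h
    exact ⟨hd.1, hd.2, d.adj⟩
  · rintro ⟨ha, hb, h⟩
    exact ⟨⟨(a, b), h⟩, ⟨ha, hb⟩, rfl⟩

section TightViolator

variable {U : Set (GadgetVertex G f)}
  (hU : ∀ u ∈ U, 3 ≤ (compIn (gadget G f) Uᶜ '' ((gadget G f).neighborSet u ∩ Uᶜ)).ncard)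

include hU

lemma exists_two_copies_of_inr_mem (hd : .inr d ∈ U) :
    ∃ i j : Fin (f d.fst), .inl ⟨d.fst, i⟩ ∉ U ∧ .inl ⟨d.fst, j⟩ ∉ U ∧
      compIn (gadget G f) Uᶜ (.inl ⟨d.fst, i⟩) ≠ compIn (gadget G f) Uᶜ (.inl ⟨d.fst, j⟩) := by
  set comps := (fun i : Fin (f d.fst) => compIn (gadget G f) Uᶜ (.inl ⟨d.fst, i⟩)) ''
    {i | .inl ⟨d.fst, i⟩ ∉ U}
  have hsub : compIn (gadget G f) Uᶜ '' ((gadget G f).neighborSet (.inr d) ∩ Uᶜ) ⊆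
      insert (compIn (gadget G f) Uᶜ (.inr d.symm)) comps := by
    rintro _ ⟨⟨b, i⟩ | e, ⟨hx, hxU⟩, rfl⟩
    · obtain rfl : d.fst = b := hx
      exact .inr ⟨i, hxU, rfl⟩
    · obtain rfl : e = d.symm := hx
      exact .inl rfl
  have hcard : 3 ≤ comps.ncard + 1 :=
    (hU _ hd).trans ((Set.ncard_le_ncard hsub).trans (Set.ncard_insert_le _ _))
  obtain ⟨_, ⟨i, hi, rfl⟩, _, ⟨j, hj, rfl⟩, hne⟩ :=
    (Set.one_lt_ncard (Set.toFinite comps)).1 (by omega)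
  exact ⟨i, j, hi, hj, hne⟩

lemma inr_mem_of_inr_mem (hd : .inr d ∈ U) {e : G.Dart} (he : e.fst = d.fst) : .inr e ∈ U := by
  obtain ⟨i, j, hi, hj, hne⟩ := exists_two_copies_of_inr_mem hU hd
  by_contra heU
  exact hne ((compIn_eq_of_adj heU hi he).trans (compIn_eq_of_adj heU hj he).symm)

lemma inl_mem_of_inl_mem {v : V} {i : Fin (f v)} (hi : .inl ⟨v, i⟩ ∈ U) (j : Fin (f v)) :
    .inl ⟨v, j⟩ ∈ U := by
  by_contra hj
  have hsub : compIn (gadget G f) Uᶜ '' ((gadget G f).neighborSet (.inl ⟨v, i⟩) ∩ Uᶜ) ⊆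
      {compIn (gadget G f) Uᶜ (.inl ⟨v, j⟩)} := by
    rintro _ ⟨b | e, ⟨hx, hxU⟩, rfl⟩
    · exact absurd ((SimpleGraph.mem_neighborSet ..).1 hx) not_gadget_adj_inl_inl
    · exact compIn_eq_of_adj hj hxU hx
  have hle := (hU _ hi).trans (Set.ncard_le_ncard hsub)
  rw [Set.ncard_singleton] at hle
  omega

lemma exists_eq_gadgetCut : ∃ S T, Disjoint S T ∧ U = gadgetCut G f S T ∧
    ∀ v ∈ (S ∪ T)ᶜ, 0 < f v ∧ ∃ w, G.Adj v w := by
  refine ⟨{v | ∀ i : Fin (f v), .inl ⟨v, i⟩ ∈ U},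
    {v | (∃ i : Fin (f v), .inl ⟨v, i⟩ ∉ U) ∧ ∀ e : G.Dart, e.fst = v → .inr e ∈ U},
    Set.disjoint_left.2 fun v hS hT => hT.1.elim fun i hi => hi (hS i), ?_, fun v hv => ?_⟩
  · ext (⟨v, i⟩ | d)
    · exact ⟨fun h => inl_mem_of_inl_mem hU h, fun h => h i⟩
    · refine ⟨fun h => ⟨?_, fun e => inr_mem_of_inr_mem hU h⟩, fun h => h.2 d rfl⟩
      obtain ⟨i, -, hi, -⟩ := exists_two_copies_of_inr_mem hU h
      exact ⟨i, hi⟩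
  · simp only [Set.mem_compl_iff, Set.mem_union, not_or, Set.mem_ofPred_eq, not_and,
      not_forall] at hv
    obtain ⟨⟨i, hi⟩, hv⟩ := hv
    obtain ⟨d, rfl, -⟩ := hv ⟨i, hi⟩
    exact ⟨i.pos, d.snd, d.adj⟩

end TightViolator

variable [Finite V]

instance finite_dart : Finite G.Dart :=
  .of_injective _ SimpleGraph.Dart.toProd_injective

lemma ncard_eq_ncard_preimage_inl_add {α β : Type*} [Finite α] [Finite β] (s : Set (α ⊕ β)) :
    s.ncard = (Sum.inl ⁻¹' s).ncard + (Sum.inr ⁻¹' s).ncard := by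
  conv_lhs => rw [← Set.image_preimage_inl_union_image_preimage_inr s]
  rw [Set.ncard_union_eq Set.disjoint_image_inl_image_inr,
    Set.ncard_image_of_injective _ Sum.inl_injective,
    Set.ncard_image_of_injective _ Sum.inr_injective]

lemma ncard_sigma_fin (f : V → ℕ) (X : Set V) :
    {a : Σ v, Fin (f v) | a.1 ∈ X}.ncard = ∑ᶠ v ∈ X, f v := by
  classical
  have hX := X.toFinite
  have hsigma : {a : Σ v, Fin (f v) | a.1 ∈ X} =
      (hX.toFinset.sigma fun v => (Finset.univ : Finset (Fin (f v)))) := by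
    ext a
    simp
  rw [hsigma, Set.ncard_coe_finset, Finset.card_sigma, finsum_mem_eq_finite_toFinset_sum _ hX]
  simp only [Finset.card_univ, Fintype.card_fin]

lemma ncard_gadgetCut :
    (gadgetCut G f S T).ncard = ∑ᶠ v ∈ S, f v + eCnt G T Set.univ := by
  rw [ncard_eq_ncard_preimage_inl_add, ← ncard_sigma_fin, ← ncard_darts]
  simp [Set.preimage, gadgetCut]

lemma ncard_gadgetBase_preimage (hQ : Disjoint S Q) :
    (gadgetBase S ⁻¹' Q : Set (GadgetVertex G f)).ncard =
      ∑ᶠ v ∈ Q, f v + (eCnt G Q Set.univ + eCnt G S Q) := by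
  have hdarts : (Sum.inr ⁻¹' (gadgetBase S ⁻¹' Q : Set (GadgetVertex G f))) =
      {d : G.Dart | d.fst ∈ Q ∧ d.snd ∈ Set.univ} ∪ {d | d.fst ∈ S ∧ d.snd ∈ Q} := by
    ext d
    by_cases hd : d.fst ∈ S
    · simp [hd, Set.disjoint_left.1 hQ hd]
    · simp [hd]
  rw [ncard_eq_ncard_preimage_inl_add, hdarts, Set.ncard_union_eq, ncard_darts, ncard_darts,
    ← ncard_sigma_fin]
  · rfl
  · exact Set.disjoint_left.2 fun d hd hd' => Set.disjoint_left.1 hQ hd'.1 hd.1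

lemma ncard_gadgetBase_mem (hdisj : Disjoint S T) :
    {x | x ∉ gadgetCut G f S T ∧ gadgetBase S x ∈ T}.ncard =
      ∑ᶠ v ∈ T, f v + eCnt G S T := by
  have hcopies : (Sum.inl ⁻¹' {x | x ∉ gadgetCut G f S T ∧ gadgetBase S x ∈ T}) =
      {a : Σ v, Fin (f v) | a.1 ∈ T} := by
    ext a
    exact and_iff_right_of_imp fun hT hS => Set.disjoint_left.1 hdisj hS hT
  have hdarts : (Sum.inr ⁻¹' {x | x ∉ gadgetCut G f S T ∧ gadgetBase S x ∈ T}) =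
      {d : G.Dart | d.fst ∈ S ∧ d.snd ∈ T} := by
    ext d
    by_cases hd : d.fst ∈ S
    · simp [hd, Set.disjoint_left.1 hdisj hd]
    · simp [hd]
  rw [ncard_eq_ncard_preimage_inl_add, hcopies, hdarts, ncard_sigma_fin, ncard_darts]

lemma odd_ncard_gadgetBase_preimage_iff (hdisj : Disjoint S T) {c : V} (hc : c ∈ (S ∪ T)ᶜ) :
    Odd (gadgetBase S ⁻¹' compIn G (S ∪ T)ᶜ c : Set (GadgetVertex G f)).ncard ↔
      Odd (∑ᶠ v ∈ compIn G (S ∪ T)ᶜ c, tutteWeight G f T v) := by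
  have hsub : compIn G (S ∪ T)ᶜ c ⊆ (S ∪ T)ᶜ := compIn_subset hc
  have hclosed : ∀ v ∈ compIn G (S ∪ T)ᶜ c, ∀ w, G.Adj v w → w ∈ (S ∪ T)ᶜ →
      w ∈ compIn G (S ∪ T)ᶜ c := fun v hv w hvw hw => mem_compIn_of_adj hv (hsub hv) hw hvw
  set Q := compIn G (S ∪ T)ᶜ c
  have hSTQ : Disjoint (S ∪ T) Q := Set.subset_compl_iff_disjoint_left.1 hsub
  have hedges : eCnt G Q Set.univ = eCnt G S Q + eCnt G Q T + eCnt G Q Q := by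
    rw [eCnt_comm G S, ← eCnt_union_right G Q hdisj, ← eCnt_union_right G Q hSTQ]
    refine eCnt_congr_right fun v hv w hvw => ⟨fun _ => ?_, fun _ => trivial⟩
    exact (em (w ∈ S ∪ T)).imp_right (hclosed v hv w hvw)
  have heven := even_eCnt_self G Q
  rw [ncard_gadgetBase_preimage (hSTQ.mono_left Set.subset_union_left), hedges,
    finsum_tutteWeight]
  grind

lemma gadgetBase_notMem_of_mem_oddSupport (hdisj : Disjoint S T)
    (hx : x ∈ oddSupport (gadget G f) (gadgetCut G f S T)ᶜ fun _ => 1) : gadgetBase S x ∉ S := by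
  intro hxS
  obtain ⟨hxU, hodd⟩ := hx
  rw [finsum_mem_const (Set.toFinite _), smul_eq_mul, mul_one] at hodd
  obtain a | d := x
  · exact hxU hxS
  · by_cases hd : d.fst ∈ S
    · rw [gadgetBase_inr_of_mem hd] at hxS
      rw [compIn_gadgetCut_inr_of_mem hdisj hd hxS,
        Set.ncard_pair (by simpa using d.symm_ne.symm)] at hodd
      exact absurd hodd (by decide)
    · rw [gadgetBase_inr_of_notMem hd] at hxS
      exact hd hxS

lemma ncard_oddComps_gadget_le (hdisj : Disjoint S T) (hpos : ∀ v ∈ (S ∪ T)ᶜ, 0 < f v)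
    (hdeg : ∀ v ∈ (S ∪ T)ᶜ, ∃ w, G.Adj v w) :
    (oddComps (gadget G f) (gadgetCut G f S T)ᶜ fun _ => 1).ncard ≤
      ∑ᶠ v ∈ T, f v + eCnt G S T + (oddComps G (S ∪ T)ᶜ (tutteWeight G f T)).ncard := by
  have hcover : oddComps (gadget G f) (gadgetCut G f S T)ᶜ (fun _ => 1) ⊆
      compIn (gadget G f) (gadgetCut G f S T)ᶜ ''
        {x | x ∉ gadgetCut G f S T ∧ gadgetBase S x ∈ T} ∪
      (gadgetBase S ⁻¹' ·) '' oddComps G (S ∪ T)ᶜ (tutteWeight G f T) := by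
    rintro _ ⟨x, hx, rfl⟩
    by_cases hxT : gadgetBase S x ∈ T
    · exact .inl ⟨x, ⟨hx.1, hxT⟩, rfl⟩
    · have hxW : gadgetBase S x ∈ (S ∪ T)ᶜ := fun h =>
        h.elim (gadgetBase_notMem_of_mem_oddSupport hdisj hx) hxT
      have hodd := hx.2
      rw [finsum_mem_const (Set.toFinite _), smul_eq_mul, mul_one] at hodd
      rw [compIn_gadgetCut hdisj hpos hdeg hxW] at hodd ⊢
      rw [odd_ncard_gadgetBase_preimage_iff hdisj hxW] at hodd
      exact .inr ⟨_, ⟨_, ⟨hxW, hodd⟩, rfl⟩, rfl⟩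
  refine (Set.ncard_le_ncard hcover).trans ((Set.ncard_union_le _ _).trans (add_le_add ?_ ?_))
  · exact (Set.ncard_image_le (Set.toFinite _)).trans_eq (ncard_gadgetBase_mem hdisj)
  · exact Set.ncard_image_le (Set.toFinite _)

lemma exists_defect_neg_of_not_hasFactor (h : ¬ HasFactor G f) :
    ∃ S T, Disjoint S T ∧ defect G f S T < 0 := by
  obtain ⟨U, hlt, hU⟩ := exists_violator_forall_three_le (G := gadget G f)
    fun ⟨_, hM⟩ => h (hasFactor_of_isPerfectMatching hM)
  obtain ⟨S, T, hdisj, rfl, hST⟩ := exists_eq_gadgetCut hU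
  refine ⟨S, T, hdisj, ?_⟩
  have hle := ncard_oddComps_gadget_le hdisj (fun v hv => (hST v hv).1) fun v hv => (hST v hv).2
  rw [ncard_gadgetCut, ← Set.union_compl_self S, eCnt_union_right G T disjoint_compl_right,
    eCnt_comm G T S] at hlt
  unfold defect
  omega

end Gadget

/-- Structural partition lemma: if `G` has minimum degree at least 2 and no
2-factor, then there are disjoint sets `S`, `T` such that, with `O` the union
of the components of `G − S − T` having an odd number of edges into `T` and
`R = V − S − T − O`, properties (i)–(vii) hold, where `oc(S,T)` is the number
of components of `G − S − T` with an odd number of edges into `T`. -/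
theorem no_two_factor_partition {V : Type*} [Fintype V] (G : SimpleGraph V)
    (hmin : ∀ v : V, 2 ≤ (G.neighborSet v).ncard)
    (hno : ¬ ∃ H : SimpleGraph V, H ≤ G ∧ ∀ v : V, (H.neighborSet v).ncard = 2) :
    ∃ S T O R : Set V, Disjoint S T ∧
      O = {v : V | v ∉ S ∪ T ∧ Odd (eCnt G (compIn G (S ∪ T)ᶜ v) T)} ∧
      R = (S ∪ T)ᶜ \ O ∧
      -- (i) T is independent
      (∀ t ∈ T, ∀ t' ∈ T, ¬ G.Adj t t') ∧
      -- (ii) no edges between R and O ∪ T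
      (∀ r ∈ R, ∀ x ∈ O ∪ T, ¬ G.Adj r x) ∧
      -- (iii) every component of G⟨O⟩ has an odd number of edges into T
      (∀ v ∈ O, Odd (eCnt G (compIn G O v) T)) ∧
      -- (iv) no t ∈ T has two edges into the same component of G⟨O⟩
      (∀ t ∈ T, ∀ o ∈ O, ∀ o' ∈ O,
        compIn G O o = compIn G O o' → G.Adj t o → G.Adj t o' → o = o') ∧
      -- (v) every o ∈ O has at most one edge into T
      (∀ o ∈ O, eCnt G {o} T ≤ 1) ∧
      -- (vi) no edge ot with t ∈ T, o ∈ O, e(t,S) = 0 and e(o,O) = 0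
      (¬ ∃ t ∈ T, ∃ o ∈ O, G.Adj o t ∧ eCnt G {t} S = 0 ∧ eCnt G {o} O = 0) ∧
      -- (vii) |T| − |S| − (e(T,O) − oc(S,T))/2 > 0
      ((T.ncard : ℚ) - S.ncard -
        ((eCnt G T O : ℚ) -
          ({C : Set V | ∃ v ∈ O, C = compIn G (S ∪ T)ᶜ v}.ncard : ℚ)) / 2 > 0) := by
  obtain ⟨S₀, T₀, hdisj, hneg⟩ := exists_defect_neg_of_not_hasFactor (f := fun _ => 2) hno
  obtain ⟨S, T, h⟩ := exists_isOptimalPair G fun _ => 2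
  have hO {v : V} := mem_oddSupport_tutteWeight_iff (G := G) (T := T) (W := (S ∪ T)ᶜ) (v := v)
    fun _ => even_two
  refine ⟨S, T, oddSupport G (S ∪ T)ᶜ (tutteWeight G (fun _ => 2) T), _, h.disjoint,
    Set.ext fun _ => hO, rfl, fun t ht t' ht' => h.not_adj ht ht' le_rfl,
    fun r hr x hx => h.not_adj_of_notMem_oddSupport hr hx le_rfl,
    fun v hv => compIn_oddSupport hv ▸ (hO.1 hv).2,
    fun t ht o ho o' ho' => h.eq_of_compIn_oddSupport_eq ht le_rfl ho ho',
    fun o ho => (eCnt_singleton_left G o T).trans_le (h.ncard_neighborSet_inter_le ho.1), ?_, ?_⟩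
  · rintro ⟨t, ht, o, ho, hot, htS, hoO⟩
    exact (hmin t).not_gt <| Nat.lt_succ_of_le <|
      h.ncard_neighborSet_le_one_of_eCnt_eq_zero ht ho hot.symm le_rfl le_rfl htS hoO
  · have hdefect : (defect G (fun _ => 2) S T : ℚ) < 0 :=
      mod_cast (h.defect_le S₀ T₀ hdisj).trans_lt hneg
    rw [defect_const, h.eCnt_compl_eq fun _ _ => le_rfl, oddComps_eq_setOf] at hdefect
    push_cast at hdefect
    linarith
end

section
/- Every connected s-quadrangular graph with at least three vertices contains a 2-factor. -/
/-!
Replacing each vertex of `G` by two twins and each edge by its two darts gives a gadget whose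
perfect matchings encode the 2-factors of `G`. If there is none, Tutte's theorem provides a violator
of the gadget, and a minimal violator descends to sets `S`, `T` and parts `C` of `G - S - T` with an
odd number of edges to `T`, too many for Tutte's 2-factor condition. Parity makes the defect at
least 2, which leaves room to choose `(S, T)` extremal: then a vertex outside `S ∪ T` has at most
one neighbor in `T`, and the neighbors outside `S` of a vertex of `T` lie in different parts, so
that vertices of `T` have common neighbors only in `S`.

Let `A` be the set of vertices of `T` with at most one neighbor outside `S`, and choose in each part
not adjacent to `A` a vertex adjacent to `T`; call the set of these `W`. Common neighbors of members
of `A ∪ W` lie in `S` or are vertices of `T` with two neighbors in `W`, of which there are at most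
`|W| / 2`. As every member of `A ∪ W` has a neighbor in `S`, s-quadrangularity gives
`|A| + |W| ≤ |S| + |W| / 2`, whereas counting the edges leaving `T` shows `2|S| < 2|A| + |W|`.
-/

open Finset

theorem even_card_of_involution {α : Type*} {s : Finset α} {f : α → α} (hf : f.Involutive)
    (hne : ∀ x ∈ s, f x ≠ x) (hmem : ∀ x ∈ s, f x ∈ s) : Even #s := by
  have hsum : ∑ _x ∈ s, (1 : ZMod 2) = 0 :=
    sum_involution (fun x _ => f x) (fun _ _ => by decide) (fun x hx _ => hne x hx) hmem
      fun x _ => hf x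
  rwa [sum_const, nsmul_one, ZMod.natCast_eq_zero_iff_even] at hsum

theorem exists_transversal {α : Type*} {𝒟 : Finset (Finset α)}
    (hdisj : (𝒟 : Set (Finset α)).PairwiseDisjoint id) {p : α → Prop}
    (hp : ∀ C ∈ 𝒟, ∃ c ∈ C, p c) :
    ∃ W : Finset α, #W = #𝒟 ∧
      ∀ w ∈ W, p w ∧ ∃ C ∈ 𝒟, w ∈ C ∧ ∀ w' ∈ W, w' ∈ C → w' = w := by
  classical
  rcases isEmpty_or_nonempty α with hα | hα
  · have h𝒟 : 𝒟 = ∅ := eq_empty_of_forall_notMem fun C hC => isEmptyElim (hp C hC).choose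
    exact ⟨∅, by simp [h𝒟]⟩
  choose! r hrmem hrp using hp
  have hr : ∀ C ∈ 𝒟, ∀ D ∈ 𝒟, r D ∈ C → C = D := fun C hC D hD hmem =>
    hdisj.elim_finset hC hD (r D) hmem (hrmem D hD)
  refine ⟨𝒟.image r, card_image_of_injOn fun C hC D hD hCD => hr C hC D hD (hCD ▸ hrmem C hC), ?_⟩
  simp only [forall_mem_image]
  exact fun C hC => ⟨hrp C hC, C, hC, hrmem C hC, fun D hD hmem => by rw [hr C hC D hD hmem]⟩

section DegreeIn

variable {V : Type*} (G : SimpleGraph V) [DecidableRel G.Adj]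

/-- The number of neighbors of `v` in `B`. -/
def degreeIn (B : Finset V) (v : V) : ℕ :=
  #{b ∈ B | G.Adj v b}

theorem sum_degreeIn_comm (A B : Finset V) :
    ∑ a ∈ A, degreeIn G B a = ∑ b ∈ B, degreeIn G A b := by
  simpa only [bipartiteAbove, bipartiteBelow, degreeIn, G.adj_comm] using
    sum_card_bipartiteAbove_eq_sum_card_bipartiteBelow (s := A) (t := B) G.Adj

variable {G} in
theorem two_mul_card_filter_two_le_degreeIn_le {A B : Finset V} (h : ∀ b ∈ B, degreeIn G A b ≤ 1) :
    2 * #{a ∈ A | 2 ≤ degreeIn G B a} ≤ #B :=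
  calc
    2 * #{a ∈ A | 2 ≤ degreeIn G B a} ≤ ∑ a ∈ A with 2 ≤ degreeIn G B a, degreeIn G B a := by
      rw [mul_comm, ← smul_eq_mul]
      exact card_nsmul_le_sum _ _ _ fun a ha => (mem_filter.1 ha).2
    _ ≤ ∑ a ∈ A, degreeIn G B a := sum_le_sum_of_subset (filter_subset _ _)
    _ = ∑ b ∈ B, degreeIn G A b := sum_degreeIn_comm G A B
    _ ≤ #B := by simpa using sum_le_card_nsmul B _ 1 h

variable {G} in
theorem exists_adj_of_degreeIn_pos {B : Finset V} {v : V} (h : 0 < degreeIn G B v) :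
    ∃ b ∈ B, G.Adj v b := by
  obtain ⟨b, hb⟩ := card_pos.1 h
  exact ⟨b, mem_filter.1 hb⟩

variable {G} in
theorem degreeIn_erase_of_not_adj [DecidableEq V] {B : Finset V} {u v : V} (h : ¬ G.Adj v u) :
    degreeIn G (B.erase u) v = degreeIn G B v := by
  rw [degreeIn, filter_erase, erase_eq_of_notMem fun hu => h (mem_filter.1 hu).2, degreeIn]

theorem even_sum_degreeIn_self (T : Finset V) : Even (∑ t ∈ T, degreeIn G T t) := by
  simp only [degreeIn, ← card_sigma]
  refine even_card_of_involution (f := fun p => ⟨p.2, p.1⟩) (fun _ => rfl) ?_ ?_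
  · rintro ⟨a, b⟩ hab hba
    have hadj : G.Adj a b := (mem_filter.1 (mem_sigma.1 hab).2).2
    exact hadj.ne (Sigma.mk.inj hba).1.symm
  · simp +contextual [G.adj_comm]

variable [Fintype V]

theorem degreeIn_univ (v : V) : degreeIn G univ v = (G.neighborSet v).ncard := by
  simp [degreeIn, Set.ncard_eq_toFinset_card']

variable [DecidableEq V]

theorem degreeIn_add_degreeIn_compl (B : Finset V) (v : V) :
    degreeIn G B v + degreeIn G Bᶜ v = degreeIn G univ v := by
  have hdisj : Disjoint B Bᶜ := disjoint_compl_right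
  rw [degreeIn, degreeIn, degreeIn, ← card_union_of_disjoint (disjoint_filter_filter hdisj),
    ← filter_union, union_compl]

/-- The darts of `G` from `A` to `B`. -/
def dartsBetween (A B : Finset V) : Finset G.Dart :=
  {d | d.fst ∈ A ∧ d.snd ∈ B}

variable {G} in
@[simp]
theorem mem_dartsBetween {A B : Finset V} {d : G.Dart} :
    d ∈ dartsBetween G A B ↔ d.fst ∈ A ∧ d.snd ∈ B := by
  simp [dartsBetween]

theorem card_dartsBetween (A B : Finset V) :
    #(dartsBetween G A B) = ∑ a ∈ A, degreeIn G B a := by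
  simp only [degreeIn, ← card_sigma]
  refine card_bij (fun d _ => ⟨d.fst, d.snd⟩) ?_ ?_ ?_
  · intro d hd
    simpa using hd
  · intro d _ e _ hde
    obtain ⟨hfst, hsnd⟩ := Sigma.mk.inj hde
    exact SimpleGraph.Dart.ext _ _ (Prod.ext hfst (eq_of_heq hsnd))
  · rintro ⟨a, b⟩ hab
    obtain ⟨ha, hb, hadj⟩ := by simpa using hab
    exact ⟨⟨(a, b), hadj⟩, mem_dartsBetween.2 ⟨ha, hb⟩, rfl⟩

end DegreeIn

section OddFamily

variable {V : Type*} {G : SimpleGraph V} {U : Finset V} {f : V → ℕ} {𝒞 : Finset (Finset V)}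

/-- A family of pairwise disjoint vertex sets of odd `f`-weight, each of them a union of connected
components of `G - U`. Such families stand in for the sets of odd components in Tutte-type
conditions: they survive the deletion of parts without any reference to connectivity. -/
structure IsOddFamily (G : SimpleGraph V) (U : Finset V) (f : V → ℕ) (𝒞 : Finset (Finset V)) :
    Prop where
  pairwiseDisjoint : (𝒞 : Set (Finset V)).PairwiseDisjoint id
  notMem : ∀ C ∈ 𝒞, ∀ c ∈ C, c ∉ U
  mem_or_mem_of_adj : ∀ C ∈ 𝒞, ∀ c ∈ C, ∀ w, G.Adj c w → w ∈ C ∨ w ∈ U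
  odd : ∀ C ∈ 𝒞, Odd (∑ c ∈ C, f c)

/-- The members of `𝒞` that contain a neighbor of `x`. -/
def adjParts (G : SimpleGraph V) [DecidableRel G.Adj] (𝒞 : Finset (Finset V)) (x : V) :
    Finset (Finset V) :=
  {C ∈ 𝒞 | ∃ c ∈ C, G.Adj x c}

@[simp]
theorem mem_adjParts [DecidableRel G.Adj] {C : Finset V} {x : V} :
    C ∈ adjParts G 𝒞 x ↔ C ∈ 𝒞 ∧ ∃ c ∈ C, G.Adj x c :=
  mem_filter

theorem adjParts_subset [DecidableRel G.Adj] (x : V) : adjParts G 𝒞 x ⊆ 𝒞 :=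
  filter_subset _ _

theorem not_adj_of_mem_sdiff_adjParts [DecidableEq V] [DecidableRel G.Adj] {C : Finset V} {c x : V}
    (hC : C ∈ 𝒞 \ adjParts G 𝒞 x) (hc : c ∈ C) : ¬ G.Adj x c := fun hxc =>
  (mem_sdiff.1 hC).2 (mem_adjParts.2 ⟨(mem_sdiff.1 hC).1, c, hc, hxc⟩)

namespace IsOddFamily

theorem eq_of_mem (h : IsOddFamily G U f 𝒞) {C D : Finset V} (hC : C ∈ 𝒞) (hD : D ∈ 𝒞) {x : V}
    (hxC : x ∈ C) (hxD : x ∈ D) : C = D :=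
  h.pairwiseDisjoint.elim_finset hC hD x hxC hxD

theorem mem_of_adj_of_adj (h : IsOddFamily G U f 𝒞) {C D : Finset V} (hC : C ∈ 𝒞) (hD : D ∈ 𝒞)
    (hCD : C ≠ D) {c d x : V} (hc : c ∈ C) (hd : d ∈ D) (hcx : G.Adj c x) (hdx : G.Adj d x) :
    x ∈ U := by
  by_contra hx
  have hxC := (h.mem_or_mem_of_adj C hC c hc x hcx).resolve_right hx
  have hxD := (h.mem_or_mem_of_adj D hD d hd x hdx).resolve_right hx
  exact hCD (h.eq_of_mem hC hD hxC hxD)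

theorem card_le (h : IsOddFamily G U f 𝒞) {β : Type*} {X : Finset β} (g : β → V)
    {𝒟 : Finset (Finset V)} (h𝒟 : 𝒟 ⊆ 𝒞) (hX : ∀ C ∈ 𝒟, ∃ x ∈ X, g x ∈ C) : #𝒟 ≤ #X := by
  refine card_le_card_of_forall_subsingleton (fun C x => g x ∈ C) hX ?_
  rintro x - C ⟨hC, hxC⟩ D ⟨hD, hxD⟩
  exact h.eq_of_mem (h𝒟 hC) (h𝒟 hD) hxC hxD

theorem card_adjParts_le [DecidableRel G.Adj] (h : IsOddFamily G U f 𝒞) {N : Finset V} {x : V}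
    (hN : ∀ C ∈ 𝒞, ∀ c ∈ C, G.Adj x c → c ∈ N) : #(adjParts G 𝒞 x) ≤ #N := by
  refine h.card_le id (adjParts_subset x) fun C hC => ?_
  obtain ⟨hC, c, hc, hxc⟩ := mem_adjParts.1 hC
  exact ⟨c, hN C hC c hc hxc, hc⟩

theorem exists_part_of_card_le [DecidableRel G.Adj] (h : IsOddFamily G U f 𝒞) {N : Finset V}
    {x : V} (hN : ∀ C ∈ 𝒞, ∀ c ∈ C, G.Adj x c → c ∈ N)
    (hle : #N ≤ #(adjParts G 𝒞 x)) {w : V} (hw : w ∈ N) :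
    ∃ C ∈ 𝒞, w ∈ C ∧ ∀ c ∈ C, G.Adj x c → c = w := by
  classical
  have hlt : #(N.erase w) < #(adjParts G 𝒞 x) := (card_erase_lt_of_mem hw).trans_le hle
  by_contra! hcon
  refine hlt.not_ge (h.card_le id (adjParts_subset x) fun C hC => ?_)
  obtain ⟨hC, c, hc, hxc⟩ := mem_adjParts.1 hC
  by_cases hwC : w ∈ C
  · obtain ⟨c, hc, hxc, hcw⟩ := hcon C hC hwC
    exact ⟨c, mem_erase.2 ⟨hcw, hN C hC c hc hxc⟩, hc⟩
  · exact ⟨c, mem_erase.2 ⟨ne_of_mem_of_not_mem hc hwC, hN C hC c hc hxc⟩, hc⟩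

theorem restrict (h : IsOddFamily G U f 𝒞) {U' : Finset V} {f' : V → ℕ} {𝒟 : Finset (Finset V)}
    (h𝒟 : 𝒟 ⊆ 𝒞) (hU' : ∀ C ∈ 𝒟, ∀ c ∈ C, c ∉ U')
    (hadj : ∀ C ∈ 𝒟, ∀ c ∈ C, ∀ u ∈ U, G.Adj c u → u ∈ U')
    (hf : ∀ C ∈ 𝒟, ∀ c ∈ C, f' c = f c) : IsOddFamily G U' f' 𝒟 where
  pairwiseDisjoint := h.pairwiseDisjoint.subset (coe_subset.2 h𝒟)
  notMem := hU'
  mem_or_mem_of_adj C hC c hc w hw :=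
    (h.mem_or_mem_of_adj C (h𝒟 hC) c hc w hw).imp_right fun hwU => hadj C hC c hc w hwU hw
  odd C hC := by
    rw [sum_congr rfl (hf C hC)]
    exact h.odd C (h𝒟 hC)

theorem erase [DecidableEq V] [DecidableRel G.Adj] (h : IsOddFamily G U f 𝒞) (u : V) :
    IsOddFamily G (U.erase u) f (𝒞 \ adjParts G 𝒞 u) :=
  h.restrict sdiff_subset
    (fun C hC c hc hcU => h.notMem C (sdiff_subset hC) c hc (erase_subset _ _ hcU))
    (fun _ hC _ hc _ hv hcv => mem_erase.2
      ⟨fun hvu => not_adj_of_mem_sdiff_adjParts hC hc (hvu ▸ hcv.symm), hv⟩)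
    fun _ _ _ _ => rfl

theorem insert_uncovered [DecidableEq V] (h : IsOddFamily G U f 𝒞) {R : Finset V}
    (hR : ∀ v, v ∈ R ↔ v ∉ U ∧ ∀ C ∈ 𝒞, v ∉ C) (hodd : Odd (∑ v ∈ R, f v)) :
    IsOddFamily G U f (insert R 𝒞) where
  pairwiseDisjoint := by
    rw [coe_insert]
    refine h.pairwiseDisjoint.insert fun C hC _ => ?_
    exact Finset.disjoint_left.2 fun x hxR => ((hR x).1 hxR).2 C hC
  notMem := by
    simp only [forall_mem_insert]
    exact ⟨fun c hc => ((hR c).1 hc).1, h.notMem⟩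
  mem_or_mem_of_adj := by
    simp only [forall_mem_insert]
    refine ⟨fun c hc w hcw => ?_, h.mem_or_mem_of_adj⟩
    by_contra! hw
    refine hw.1 ((hR w).2 ⟨hw.2, fun C hC hwC => ?_⟩)
    rcases h.mem_or_mem_of_adj C hC w hwC c hcw.symm with hcC | hcU
    · exact ((hR c).1 hc).2 C hC hcC
    · exact ((hR c).1 hc).1 hcU
  odd := by
    simp only [forall_mem_insert]
    exact ⟨hodd, h.odd⟩

theorem exists_card_eq_add_one [Fintype V] [DecidableEq V] (h : IsOddFamily G U f 𝒞)
    (hpar : Odd (∑ v ∈ Uᶜ, f v + #𝒞)) : ∃ 𝒟, IsOddFamily G U f 𝒟 ∧ #𝒟 = #𝒞 + 1 := by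
  have hsub : 𝒞.biUnion id ⊆ Uᶜ := biUnion_subset.2 fun C hC c hc =>
    mem_compl.2 (h.notMem C hC c hc)
  have hsum := sum_sdiff hsub (f := f)
  rw [sum_biUnion h.pairwiseDisjoint] at hsum
  have hodd𝒞 : Odd (∑ C ∈ 𝒞, ∑ c ∈ C, f c) ↔ Odd #𝒞 := by
    rw [odd_sum_iff_odd_card_odd, filter_true_of_mem h.odd]
  have hodd : Odd (∑ v ∈ Uᶜ \ 𝒞.biUnion id, f v) := by
    simp only [id] at hsum
    grind
  refine ⟨insert (Uᶜ \ 𝒞.biUnion id) 𝒞, h.insert_uncovered (by simp) hodd,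
    card_insert_of_notMem fun hmem => ?_⟩
  obtain ⟨v, hv, -⟩ := exists_ne_zero_of_sum_ne_zero hodd.pos.ne'
  exact (mem_sdiff.1 hv).2 (mem_biUnion.2 ⟨_, hmem, hv⟩)

end IsOddFamily

end OddFamily

section TutteBarrier

variable {W : Type*} {Γ : SimpleGraph W} {U : Finset W} {𝒞 : Finset (Finset W)}

/-- A violation of Tutte's condition for perfect matchings, with an odd family in place of the set
of odd components of `Γ - U`. -/
structure IsTutteBarrier (Γ : SimpleGraph W) (U : Finset W) (𝒞 : Finset (Finset W)) : Prop
    extends IsOddFamily Γ U (fun _ => 1) 𝒞 where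
  card_lt : #U < #𝒞

theorem exists_isTutteBarrier_of_isTutteViolator [Finite W] {u : Set W}
    (hu : Γ.IsTutteViolator u) : ∃ U 𝒞, IsTutteBarrier Γ U 𝒞 := by
  classical
  cases nonempty_fintype W
  set K := ((⊤ : Γ.Subgraph).deleteVerts u).coe with hK
  let part (c : K.ConnectedComponent) : Finset W := c.supp.toFinset.map (.subtype _)
  have mem_part : ∀ c x, x ∈ part c ↔ ∃ hx, K.connectedComponentMk ⟨x, hx⟩ = c := by simp [part]
  have part_unique : ∀ c d x, x ∈ part c → x ∈ part d → c = d := by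
    intro c d x hc hd
    obtain ⟨_, rfl⟩ := (mem_part c x).1 hc
    obtain ⟨_, rfl⟩ := (mem_part d x).1 hd
    rfl
  have part_injective : Function.Injective part := by
    intro c d hcd
    obtain ⟨x, hx⟩ := c.nonempty_supp
    have hxc : x.1 ∈ part c := (mem_part c x.1).2 ⟨x.2, hx⟩
    exact part_unique c d x.1 hxc (hcd ▸ hxc)
  refine ⟨u.toFinset, K.oddComponents.toFinset.image part, ⟨?_, ?_, ?_, ?_⟩, ?_⟩
  · rw [coe_image]
    rintro _ ⟨c, -, rfl⟩ _ ⟨d, -, rfl⟩ hcd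
    exact Finset.disjoint_left.2 fun x hxc hxd => hcd (congrArg part (part_unique c d x hxc hxd))
  · simp only [forall_mem_image, mem_part]
    rintro c - x ⟨hx, -⟩
    simpa using hx
  · simp only [forall_mem_image, mem_part]
    rintro _ - x ⟨hx, rfl⟩ w hxw
    by_cases hw : w ∈ u
    · exact Or.inr (by simpa using hw)
    · refine Or.inl ⟨by simpa using hw, ?_⟩
      refine SimpleGraph.ConnectedComponent.connectedComponentMk_eq_of_adj ?_
      have hxu : x ∉ u := by simpa using hx
      simp [hK, hxw.symm, hw, hxu]
  · simp only [forall_mem_image]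
    intro c hc
    simpa [part, Set.ncard_eq_toFinset_card'] using hc
  · rwa [card_image_of_injective _ part_injective, ← Set.ncard_eq_toFinset_card',
      ← Set.ncard_eq_toFinset_card']

theorem IsTutteBarrier.exists_add_two_le [Fintype W] (heven : Even (Fintype.card W))
    (h : IsTutteBarrier Γ U 𝒞) : ∃ 𝒟, IsTutteBarrier Γ U 𝒟 ∧ #U + 2 ≤ #𝒟 := by
  classical
  by_cases h2 : #U + 2 ≤ #𝒞
  · exact ⟨𝒞, h, h2⟩
  have hlt := h.card_lt
  have hU := card_add_card_compl U
  obtain ⟨𝒟, h𝒟, hcard⟩ := h.exists_card_eq_add_one (by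
    rw [sum_const, smul_eq_mul, mul_one]
    grind)
  exact ⟨𝒟, ⟨h𝒟, by omega⟩, by omega⟩

variable [DecidableRel Γ.Adj]

/-- A Tutte barrier from which no vertex of `U` can be dropped. -/
structure IsMinimalTutteBarrier (Γ : SimpleGraph W) [DecidableRel Γ.Adj] (U : Finset W)
    (𝒞 : Finset (Finset W)) : Prop extends IsTutteBarrier Γ U 𝒞 where
  two_lt_card_adjParts : ∀ u ∈ U, 2 < #(adjParts Γ 𝒞 u)

theorem IsTutteBarrier.exists_isMinimalTutteBarrier [Fintype W] (heven : Even (Fintype.card W))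
    (h : IsTutteBarrier Γ U 𝒞) : ∃ U 𝒞, IsMinimalTutteBarrier Γ U 𝒞 := by
  classical
  induction hm : #U using Nat.strong_induction_on generalizing U 𝒞 with
  | _ m ih =>
    obtain ⟨𝒟, h𝒟, hcard⟩ := h.exists_add_two_le heven
    by_cases hmin : ∀ u ∈ U, 2 < #(adjParts Γ 𝒟 u)
    · exact ⟨U, 𝒟, h𝒟, hmin⟩
    push Not at hmin
    obtain ⟨u, hu, hle⟩ := hmin
    have hcardU := card_erase_add_one hu
    have hcard𝒟 := card_sdiff_add_card_eq_card (adjParts_subset (G := Γ) (𝒞 := 𝒟) u)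
    exact ih _ (by omega) ⟨h𝒟.erase u, by omega⟩ rfl

end TutteBarrier

section TwoFactorBarrier

variable {V : Type*} [Fintype V] [DecidableEq V] {G : SimpleGraph V} [DecidableRel G.Adj]
  {S T : Finset V} {𝒞 : Finset (Finset V)}

/-- A pair `(S, T)` violating the condition of Tutte's `f`-factor theorem for `f = 2`: writing `q`
for the number of components `C` of `G - S - T` with an odd number of edges between `C` and `T`,
one has `2|S| + ∑_{t ∈ T} deg_{G - S} t < 2|T| + q`. An odd family replaces these components. -/
structure IsTwoFactorBarrier (G : SimpleGraph V) [DecidableRel G.Adj] (S T : Finset V)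
    (𝒞 : Finset (Finset V)) : Prop extends IsOddFamily G (S ∪ T) (degreeIn G T) 𝒞 where
  disjoint : Disjoint S T
  card_lt : 2 * #S + ∑ t ∈ T, degreeIn G Sᶜ t < 2 * #T + #𝒞

/-- A barrier for which neither moving a vertex into `S` nor dropping one from `T` helps. -/
structure IsExtremalTwoFactorBarrier (G : SimpleGraph V) [DecidableRel G.Adj] (S T : Finset V)
    (𝒞 : Finset (Finset V)) : Prop extends IsTwoFactorBarrier G S T 𝒞 where
  degreeIn_le_one : ∀ v, v ∉ S → v ∉ T → degreeIn G T v ≤ 1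
  degreeIn_compl_le : ∀ t ∈ T, degreeIn G Sᶜ t ≤ #(adjParts G 𝒞 t)

namespace IsTwoFactorBarrier

theorem exists_add_two_le (h : IsTwoFactorBarrier G S T 𝒞) :
    ∃ 𝒟, IsTwoFactorBarrier G S T 𝒟 ∧
      2 * #S + ∑ t ∈ T, degreeIn G Sᶜ t + 2 ≤ 2 * #T + #𝒟 := by
  by_cases h2 : 2 * #S + ∑ t ∈ T, degreeIn G Sᶜ t + 2 ≤ 2 * #T + #𝒞
  · exact ⟨𝒞, h, h2⟩
  have hlt := h.card_lt
  have hTS : T ⊆ Sᶜ := subset_compl_iff_disjoint_left.2 h.disjoint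
  have hsum : ∑ v ∈ (S ∪ T)ᶜ, degreeIn G T v + ∑ t ∈ T, degreeIn G T t =
      ∑ t ∈ T, degreeIn G Sᶜ t := by
    rw [sum_degreeIn_comm G T Sᶜ, compl_union, ← sdiff_eq_inter_compl, sum_sdiff hTS]
  have heven := even_sum_degreeIn_self G T
  obtain ⟨𝒟, h𝒟, hcard⟩ := h.exists_card_eq_add_one (by grind)
  exact ⟨𝒟, ⟨h𝒟, h.disjoint, by omega⟩, by omega⟩

theorem insert_left (h : IsTwoFactorBarrier G S T 𝒞)
    (h2 : 2 * #S + ∑ t ∈ T, degreeIn G Sᶜ t + 2 ≤ 2 * #T + #𝒞)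
    {v : V} (hS : v ∉ S) (hT : v ∉ T) (hv : 1 < degreeIn G T v) :
    IsTwoFactorBarrier G (insert v S) T {C ∈ 𝒞 | v ∉ C} where
  toIsOddFamily := by
    refine h.restrict (filter_subset _ _) ?_ ?_ fun _ _ _ _ => rfl
    · intro C hC c hc hcU
      obtain ⟨hC, hvC⟩ := mem_filter.1 hC
      rw [insert_union, mem_insert] at hcU
      exact hcU.elim (fun hcv => hvC (hcv ▸ hc)) (h.notMem C hC c hc)
    · intro C _ c _ u hu _
      exact insert_union v S T ▸ mem_insert_of_mem hu
  disjoint := disjoint_insert_left.2 ⟨hT, h.disjoint⟩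
  card_lt := by
    have h𝒞 : #{C ∈ 𝒞 | v ∈ C} ≤ 1 := by
      simp only [card_le_one, mem_filter]
      exact fun C hC D hD => h.eq_of_mem hC.1 hD.1 hC.2 hD.2
    have hsplit := card_filter_add_card_filter_not (s := 𝒞) (fun C => v ∈ C)
    have hcard := card_insert_of_notMem hS
    have hsum : ∑ w ∈ (insert v S)ᶜ, degreeIn G T w + degreeIn G T v =
        ∑ w ∈ Sᶜ, degreeIn G T w := by
      rw [compl_insert, sum_erase_add _ _ (mem_compl.2 hS)]
    rw [sum_degreeIn_comm] at h2 ⊢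
    omega

theorem erase_right (h : IsTwoFactorBarrier G S T 𝒞)
    (h2 : 2 * #S + ∑ t ∈ T, degreeIn G Sᶜ t + 2 ≤ 2 * #T + #𝒞)
    {t : V} (ht : t ∈ T) (hlt : #(adjParts G 𝒞 t) < degreeIn G Sᶜ t) :
    IsTwoFactorBarrier G S (T.erase t) (𝒞 \ adjParts G 𝒞 t) where
  toIsOddFamily := by
    have hU : (S ∪ T).erase t = S ∪ T.erase t := by
      rw [erase_union_distrib, erase_eq_of_notMem (Finset.disjoint_right.1 h.disjoint ht)]
    rw [← hU]
    refine (h.erase t).restrict subset_rfl (h.erase t).notMem (fun _ _ _ _ _ hu _ => hu) ?_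
    intro C hC c hc
    exact degreeIn_erase_of_not_adj fun hct => not_adj_of_mem_sdiff_adjParts hC hc hct.symm
  disjoint := h.disjoint.mono_right (erase_subset _ _)
  card_lt := by
    have hcard𝒞 := card_sdiff_add_card_eq_card (adjParts_subset (G := G) (𝒞 := 𝒞) t)
    have hcardT := card_erase_add_one ht
    have hsum := sum_erase_add T (degreeIn G Sᶜ) ht
    omega

theorem exists_isExtremalTwoFactorBarrier (h : IsTwoFactorBarrier G S T 𝒞) :
    ∃ S T 𝒞, IsExtremalTwoFactorBarrier G S T 𝒞 := by
  induction hm : Fintype.card V - #S + #T using Nat.strong_induction_on generalizing S T 𝒞 with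
  | _ m ih =>
    obtain ⟨𝒟, h𝒟, hcard⟩ := h.exists_add_two_le
    by_cases hS : ∀ v, v ∉ S → v ∉ T → degreeIn G T v ≤ 1
    · by_cases hT : ∀ t ∈ T, degreeIn G Sᶜ t ≤ #(adjParts G 𝒟 t)
      · exact ⟨S, T, 𝒟, h𝒟, hS, hT⟩
      push Not at hT
      obtain ⟨t, ht, hlt⟩ := hT
      have hcardT := card_erase_add_one ht
      exact ih _ (by omega) (h𝒟.erase_right hcard ht hlt) rfl
    · push Not at hS
      obtain ⟨v, hvS, hvT, hlt⟩ := hS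
      have hcardS := card_insert_of_notMem hvS
      have hle := card_le_univ (insert v S)
      exact ih _ (by omega) (h𝒟.insert_left hcard hvS hvT hlt) rfl

end IsTwoFactorBarrier

end TwoFactorBarrier

section Gadget

variable {V : Type*} {G : SimpleGraph V}

/-- The graph `G` has a 2-factor: a spanning subgraph all of whose degrees are `2`. -/
def HasTwoFactor (G : SimpleGraph V) : Prop :=
  ∃ H : SimpleGraph V, H ≤ G ∧ ∀ v : V, (H.neighborSet v).ncard = 2

/-- The graph whose perfect matchings encode the 2-factors of `G`: each vertex of `G` becomes two
twins joined to all darts leaving it, and each dart is joined to its reverse. The edges of the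
2-factor are those whose two darts are not matched to each other. -/
def twoFactorGadget (G : SimpleGraph V) : SimpleGraph (G.Dart ⊕ V × Bool) where
  Adj
    | .inl d, .inl e => e = d.symm
    | .inl d, .inr p => d.fst = p.1
    | .inr p, .inl d => d.fst = p.1
    | .inr _, .inr _ => False
  symm := ⟨by
    rintro (d | p) (e | q) h
    · exact h ▸ d.symm_symm.symm
    · exact h
    · exact h
    · exact h⟩
  loopless := ⟨by
    rintro (d | p) h
    · exact d.symm_ne h.symm
    · exact h⟩

namespace twoFactorGadget

@[simp]
theorem adj_inl_inl {d e : G.Dart} : (twoFactorGadget G).Adj (.inl d) (.inl e) ↔ e = d.symm :=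
  Iff.rfl

@[simp]
theorem adj_inl_inr {d : G.Dart} {p : V × Bool} :
    (twoFactorGadget G).Adj (.inl d) (.inr p) ↔ d.fst = p.1 :=
  Iff.rfl

@[simp]
theorem not_adj_inr_inr {p q : V × Bool} : ¬ (twoFactorGadget G).Adj (.inr p) (.inr q) :=
  id

theorem exists_eq_inl_of_adj_inr {p : V × Bool} {x : G.Dart ⊕ V × Bool}
    (h : (twoFactorGadget G).Adj (.inr p) x) : ∃ d : G.Dart, d.fst = p.1 ∧ x = .inl d := by
  rcases x with d | q
  · exact ⟨d, h, rfl⟩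
  · exact absurd h not_adj_inr_inr

theorem even_card [Fintype V] [DecidableRel G.Adj] : Even (Fintype.card (G.Dart ⊕ V × Bool)) := by
  rw [Fintype.card_sum, Fintype.card_prod, Fintype.card_bool, ← card_univ (α := G.Dart)]
  refine Even.add ?_ (even_two.mul_left _)
  exact even_card_of_involution SimpleGraph.Dart.symm_involutive (fun d _ => d.symm_ne)
    fun _ _ => mem_univ _

/-- The spanning subgraph of `G` formed by the edges whose darts are not matched to each other. -/
def unmatchedGraph (M : (twoFactorGadget G).Subgraph) : SimpleGraph V where
  Adj u v := ∃ d : G.Dart, d.fst = u ∧ d.snd = v ∧ ¬ M.Adj (.inl d) (.inl d.symm)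
  symm := ⟨by
    rintro _ _ ⟨d, rfl, rfl, hd⟩
    exact ⟨d.symm, rfl, rfl, fun h => hd (d.symm_symm ▸ h.symm)⟩⟩
  loopless := ⟨fun _ ⟨d, hu, hv, _⟩ => d.fst_ne_snd (hu.trans hv.symm)⟩

theorem unmatchedGraph_le (M : (twoFactorGadget G).Subgraph) : unmatchedGraph M ≤ G := by
  rintro _ _ ⟨d, rfl, rfl, -⟩
  exact d.adj

theorem ncard_neighborSet_unmatchedGraph {M : (twoFactorGadget G).Subgraph}
    (hM : M.IsPerfectMatching) (v : V) : ((unmatchedGraph M).neighborSet v).ncard = 2 := by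
  rw [SimpleGraph.Subgraph.isPerfectMatching_iff] at hM
  have huniq : ∀ {x y z}, M.Adj x y → M.Adj x z → y = z := fun hy hz => (hM _).unique hy hz
  have hmatch : ∀ i, ∃ d : G.Dart, d.fst = v ∧ M.Adj (.inr (v, i)) (.inl d) := by
    intro i
    obtain ⟨x, hx, -⟩ := hM (.inr (v, i))
    obtain ⟨d, hd, rfl⟩ := exists_eq_inl_of_adj_inr (M.adj_sub hx)
    exact ⟨d, hd, hx⟩
  choose f hfst hf using hmatch
  have hinj : Function.Injective fun i => (f i).snd := by
    intro i j hij
    have hfij : f i = f j :=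
      SimpleGraph.Dart.ext _ _ (Prod.ext ((hfst i).trans (hfst j).symm) hij)
    exact congrArg Prod.snd (Sum.inr_injective (huniq (hf i).symm (hfij ▸ (hf j).symm)))
  have hrange : (unmatchedGraph M).neighborSet v = Set.range fun i => (f i).snd := by
    ext w
    constructor
    · rintro ⟨d, rfl, rfl, hd⟩
      obtain ⟨e | ⟨v, i⟩, he, -⟩ := hM (.inl d)
      · obtain rfl : e = d.symm := M.adj_sub he
        exact absurd he hd
      · obtain rfl : d.fst = v := M.adj_sub he
        exact ⟨i, congrArg (·.snd) (Sum.inl_injective (huniq (hf i) he.symm))⟩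
    · rintro ⟨i, rfl⟩
      exact ⟨f i, hfst i, rfl, fun h => by simpa using huniq h (hf i).symm⟩
  rw [hrange, Set.ncard_range_of_injective hinj, Nat.card_eq_fintype_card, Fintype.card_bool]

theorem hasTwoFactor_of_isPerfectMatching {M : (twoFactorGadget G).Subgraph}
    (hM : M.IsPerfectMatching) : HasTwoFactor G :=
  ⟨unmatchedGraph M, unmatchedGraph_le M, ncard_neighborSet_unmatchedGraph hM⟩

section Projection

variable [Fintype V] [DecidableEq V] {U : Finset (G.Dart ⊕ V × Bool)}
  {𝒞 : Finset (Finset (G.Dart ⊕ V × Bool))}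

/-- The vertices of `G` whose twins lie in `X`. Membership of the first twin is tested; the sets to
which this is applied contain both twins or none. -/
def core (X : Finset (G.Dart ⊕ V × Bool)) : Finset V :=
  {v | .inr (v, false) ∈ X}

@[simp]
theorem mem_core {X : Finset (G.Dart ⊕ V × Bool)} {v : V} :
    v ∈ core X ↔ .inr (v, false) ∈ X := by
  simp [core]

variable [DecidableRel G.Adj]

/-- The vertices of `G` whose twins are separated from the rest of the gadget by `U`. -/
def saturated (U : Finset (G.Dart ⊕ V × Bool)) : Finset V :=
  {v | .inr (v, false) ∉ U ∧ ∀ d : G.Dart, d.fst = v → .inl d ∈ U}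

@[simp]
theorem mem_saturated {v : V} :
    v ∈ saturated U ↔ .inr (v, false) ∉ U ∧ ∀ d : G.Dart, d.fst = v → .inl d ∈ U := by
  simp [saturated]

theorem disjoint_core_saturated (U : Finset (G.Dart ⊕ V × Bool)) :
    Disjoint (core U) (saturated U) :=
  Finset.disjoint_left.2 fun _ hS hT => (mem_saturated.1 hT).1 (mem_core.1 hS)

/-- The parts coming from components of `G - S - T`, where `S = core U` and `T = saturated U`. The
remaining parts are isolated twins of vertices in `T` and isolated darts from `S` to `T`. -/
def mainParts (U : Finset (G.Dart ⊕ V × Bool)) (𝒞 : Finset (Finset (G.Dart ⊕ V × Bool))) :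
    Finset (Finset (G.Dart ⊕ V × Bool)) :=
  {C ∈ 𝒞 | (∀ v ∈ saturated U, ∀ i, .inr (v, i) ∉ C) ∧
    ∀ d ∈ dartsBetween G (saturated U) (core U), .inl d.symm ∉ C}

theorem mainParts_subset : mainParts U 𝒞 ⊆ 𝒞 :=
  filter_subset _ _

theorem notMem_saturated {C : Finset (G.Dart ⊕ V × Bool)} (hC : C ∈ mainParts U 𝒞) {v : V}
    {i : Bool} (hv : .inr (v, i) ∈ C) : v ∉ saturated U :=
  fun hT => (mem_filter.1 hC).2.1 v hT i hv

end Projection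

section Barrier

variable [DecidableRel (twoFactorGadget G).Adj] {U : Finset (G.Dart ⊕ V × Bool)}
  {𝒞 : Finset (Finset (G.Dart ⊕ V × Bool))}

theorem exists_part_of_inl_mem (h : IsMinimalTutteBarrier (twoFactorGadget G) U 𝒞) {d : G.Dart}
    (hd : .inl d ∈ U) {w : G.Dart ⊕ V × Bool} (hw : (twoFactorGadget G).Adj (.inl d) w) :
    ∃ C ∈ 𝒞, w ∈ C ∧ ∀ c ∈ C, (twoFactorGadget G).Adj (.inl d) c → c = w := by
  classical
  have hN : ∀ x, (twoFactorGadget G).Adj (.inl d) x →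
      x ∈ ({.inl d.symm, .inr (d.fst, false), .inr (d.fst, true)} : Finset _) := by
    rintro (e | ⟨v, i⟩) he
    · simpa using he
    · obtain rfl : d.fst = v := he
      cases i <;> simp
  exact h.exists_part_of_card_le (fun _ _ c _ => hN c)
    (card_le_three.trans (h.two_lt_card_adjParts _ hd)) (hN w hw)

theorem inr_mem_of_inr_mem (h : IsMinimalTutteBarrier (twoFactorGadget G) U 𝒞) {v : V} {i : Bool}
    (hv : .inr (v, i) ∈ U) (j : Bool) : .inr (v, j) ∈ U := by
  obtain ⟨C, hC, D, hD, hCD⟩ := one_lt_card.1 (one_lt_two.trans (h.two_lt_card_adjParts _ hv))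
  obtain ⟨hC, x, hx, hvx⟩ := mem_adjParts.1 hC
  obtain ⟨hD, y, hy, hvy⟩ := mem_adjParts.1 hD
  obtain ⟨d, hd, rfl⟩ := exists_eq_inl_of_adj_inr hvx
  obtain ⟨e, he, rfl⟩ := exists_eq_inl_of_adj_inr hvy
  exact h.mem_of_adj_of_adj hC hD hCD hx hy (adj_inl_inr.2 hd) (adj_inl_inr.2 he)

variable [Fintype V] [DecidableEq V]

theorem inr_mem_iff (h : IsMinimalTutteBarrier (twoFactorGadget G) U 𝒞) {v : V} {i : Bool} :
    .inr (v, i) ∈ U ↔ v ∈ core U :=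
  ⟨fun hv => mem_core.2 (inr_mem_of_inr_mem h hv false),
    fun hv => inr_mem_of_inr_mem h (mem_core.1 hv) i⟩

theorem inr_mem_of_inl_mem (h : IsMinimalTutteBarrier (twoFactorGadget G) U 𝒞)
    {C : Finset (G.Dart ⊕ V × Bool)} (hC : C ∈ 𝒞) {d : G.Dart} (hd : .inl d ∈ C)
    (hS : d.fst ∉ core U) (i : Bool) : .inr (d.fst, i) ∈ C :=
  (h.mem_or_mem_of_adj C hC _ hd (.inr (d.fst, i)) rfl).resolve_right (mt (inr_mem_iff h).1 hS)

variable [DecidableRel G.Adj]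

theorem inl_mem_iff (h : IsMinimalTutteBarrier (twoFactorGadget G) U 𝒞) {d : G.Dart} :
    .inl d ∈ U ↔ d.fst ∈ saturated U := by
  refine ⟨fun hd => ?_, fun hd => (mem_saturated.1 hd).2 d rfl⟩
  obtain ⟨C, hC, hvC, huniq⟩ :=
    exists_part_of_inl_mem h hd (w := .inr (d.fst, false)) (adj_inl_inr.2 rfl)
  obtain ⟨D, hD, hvD, -⟩ :=
    exists_part_of_inl_mem h hd (w := .inr (d.fst, true)) (adj_inl_inr.2 rfl)
  have hCD : C ≠ D := by
    rintro rfl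
    simpa using huniq _ hvD (adj_inl_inr.2 rfl)
  refine mem_saturated.2 ⟨h.notMem C hC _ hvC, fun e he => ?_⟩
  exact h.mem_of_adj_of_adj hC hD hCD hvC hvD he he

theorem inl_mem_of_inr_mem (h : IsMinimalTutteBarrier (twoFactorGadget G) U 𝒞)
    {C : Finset (G.Dart ⊕ V × Bool)} (hC : C ∈ 𝒞) {d : G.Dart} {i : Bool}
    (hd : .inr (d.fst, i) ∈ C) (hT : d.fst ∉ saturated U) : .inl d ∈ C :=
  (h.mem_or_mem_of_adj C hC _ hd (.inl d) rfl).resolve_right (mt (inl_mem_iff h).1 hT)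

theorem inl_symm_mem (h : IsMinimalTutteBarrier (twoFactorGadget G) U 𝒞)
    {C : Finset (G.Dart ⊕ V × Bool)} (hC : C ∈ 𝒞) {d : G.Dart} (hd : .inl d ∈ C)
    (hT : d.snd ∉ saturated U) : .inl d.symm ∈ C :=
  (h.mem_or_mem_of_adj C hC _ hd (.inl d.symm) rfl).resolve_right (mt (inl_mem_iff h).1 hT)

theorem inr_mem_iff_mem_core (h : IsMinimalTutteBarrier (twoFactorGadget G) U 𝒞)
    {C : Finset (G.Dart ⊕ V × Bool)} (hC : C ∈ mainParts U 𝒞) {v : V} {i : Bool} :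
    .inr (v, i) ∈ C ↔ v ∈ core C := by
  have htwin : ∀ i j, .inr (v, i) ∈ C → .inr (v, j) ∈ C := by
    intro i j hv
    have hvT := notMem_saturated hC hv
    have hvU := h.notMem C (mainParts_subset hC) _ hv
    have hvS : v ∉ core U := mt (inr_mem_iff h).2 hvU
    obtain ⟨d, rfl, -⟩ : ∃ d : G.Dart, d.fst = v ∧ .inl d ∉ U := by
      simpa [mt mem_core.2 hvS] using hvT
    have hd := inl_mem_of_inr_mem h (mainParts_subset hC) hv hvT
    exact inr_mem_of_inl_mem h (mainParts_subset hC) hd hvS j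
  exact ⟨fun hv => mem_core.2 (htwin i false hv), fun hv => htwin false i (mem_core.1 hv)⟩

theorem mem_part_and_symm_notMem_iff (h : IsMinimalTutteBarrier (twoFactorGadget G) U 𝒞)
    {C : Finset (G.Dart ⊕ V × Bool)} (hC : C ∈ mainParts U 𝒞) {d : G.Dart} :
    .inl d ∈ C ∧ .inl d.symm ∉ C ↔ d ∈ dartsBetween G (core C) (saturated U) := by
  have hC𝒞 := mainParts_subset hC
  simp only [mem_dartsBetween, mem_core]
  constructor
  · rintro ⟨hd, hsymm⟩
    have hT : d.snd ∈ saturated U := by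
      by_contra hT
      exact hsymm (inl_symm_mem h hC𝒞 hd hT)
    refine ⟨inr_mem_of_inl_mem h hC𝒞 hd (fun hS => ?_) false, hT⟩
    exact (mem_filter.1 hC).2.2 d.symm (mem_dartsBetween.2 ⟨hT, hS⟩) (d.symm_symm.symm ▸ hd)
  · rintro ⟨hd, hT⟩
    refine ⟨inl_mem_of_inr_mem h hC𝒞 hd (notMem_saturated hC hd), fun hsymm => ?_⟩
    exact h.notMem C hC𝒞 _ hsymm ((inl_mem_iff h).2 hT)

theorem odd_sum_degreeIn_core (h : IsMinimalTutteBarrier (twoFactorGadget G) U 𝒞)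
    {C : Finset (G.Dart ⊕ V × Bool)} (hC : C ∈ mainParts U 𝒞) :
    Odd (∑ c ∈ core C, degreeIn G (saturated U) c) := by
  have hcard : #C = #{d : G.Dart | .inl d ∈ C} + #(core C) * 2 := by
    have hdecomp : C = ({d | .inl d ∈ C} : Finset G.Dart).disjSum (core C ×ˢ univ) := by
      ext (d | ⟨v, i⟩)
      · simp
      · simpa using inr_mem_iff_mem_core h hC
    conv_lhs => rw [hdecomp]
    rw [card_disjSum, card_product, card_univ, Fintype.card_bool]
  have heven : Even #{d : G.Dart | .inl d ∈ C ∧ .inl d.symm ∈ C} :=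
    even_card_of_involution SimpleGraph.Dart.symm_involutive (fun d _ => d.symm_ne)
      fun d hd => by simpa [and_comm] using hd
  have hsplit := card_filter_add_card_filter_not (s := ({d | .inl d ∈ C} : Finset G.Dart))
    (fun d => .inl d.symm ∈ C)
  have hcross : ({d | .inl d ∈ C ∧ .inl d.symm ∉ C} : Finset G.Dart) =
      dartsBetween G (core C) (saturated U) := by
    ext d
    simpa using mem_part_and_symm_notMem_iff h hC
  rw [filter_filter, filter_filter, hcross, card_dartsBetween] at hsplit
  have hodd : Odd #C := by simpa using h.odd C (mainParts_subset hC)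
  grind

theorem injOn_core (h : IsMinimalTutteBarrier (twoFactorGadget G) U 𝒞) :
    Set.InjOn core (mainParts U 𝒞 : Set (Finset (G.Dart ⊕ V × Bool))) := by
  intro C hC D hD hCD
  obtain ⟨v, hv, -⟩ := exists_ne_zero_of_sum_ne_zero (odd_sum_degreeIn_core h hC).pos.ne'
  exact h.eq_of_mem (mainParts_subset hC) (mainParts_subset hD) (mem_core.1 hv)
    (mem_core.1 (hCD ▸ hv))

theorem isOddFamily_image_core (h : IsMinimalTutteBarrier (twoFactorGadget G) U 𝒞) :
    IsOddFamily G (core U ∪ saturated U) (degreeIn G (saturated U))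
      ((mainParts U 𝒞).image core) where
  pairwiseDisjoint := by
    rw [coe_image]
    rintro _ ⟨C, hC, rfl⟩ _ ⟨D, hD, rfl⟩ hCD
    refine Finset.disjoint_left.2 fun v hvC hvD => hCD (congrArg core ?_)
    exact h.eq_of_mem (mainParts_subset hC) (mainParts_subset hD) (mem_core.1 hvC)
      (mem_core.1 hvD)
  notMem := by
    simp only [forall_mem_image, mem_union, not_or]
    intro C hC v hv
    rw [mem_core] at hv
    exact ⟨mt (inr_mem_iff h).2 (h.notMem C (mainParts_subset hC) _ hv), notMem_saturated hC hv⟩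
  mem_or_mem_of_adj := by
    simp only [forall_mem_image, mem_union, ← or_assoc]
    intro C hC v hv w hvw
    have hC𝒞 := mainParts_subset hC
    rw [mem_core] at hv
    by_contra! hw
    have hd : .inl ⟨(v, w), hvw⟩ ∈ C := inl_mem_of_inr_mem h hC𝒞 hv (notMem_saturated hC hv)
    exact hw.1.1 (mem_core.2 (inr_mem_of_inl_mem h hC𝒞 (inl_symm_mem h hC𝒞 hd hw.2) hw.1.2 false))
  odd := by
    simp only [forall_mem_image]
    exact fun C hC => odd_sum_degreeIn_core h hC

theorem card_eq_sum_degreeIn_add (h : IsMinimalTutteBarrier (twoFactorGadget G) U 𝒞) :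
    #U = ∑ t ∈ saturated U, degreeIn G univ t + #(core U) * 2 := by
  have hdecomp : U = (dartsBetween G (saturated U) univ).disjSum (core U ×ˢ univ) := by
    ext (d | ⟨v, i⟩)
    · simpa using inl_mem_iff h
    · simpa using inr_mem_iff h
  conv_lhs => rw [hdecomp]
  rw [card_disjSum, card_dartsBetween, card_product, card_univ, Fintype.card_bool]

theorem card_le_card_mainParts_add (h : IsMinimalTutteBarrier (twoFactorGadget G) U 𝒞) :
    #𝒞 ≤ #(mainParts U 𝒞) +
      (#(saturated U) * 2 + ∑ t ∈ saturated U, degreeIn G (core U) t) := by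
  have hrest : #(𝒞 \ mainParts U 𝒞) ≤
      #((saturated U ×ˢ (univ : Finset Bool)).disjSum (dartsBetween G (saturated U) (core U))) := by
    refine h.card_le (Sum.elim Sum.inr fun d => Sum.inl d.symm) sdiff_subset fun C hC => ?_
    obtain ⟨hC, hmain⟩ := mem_sdiff.1 hC
    by_contra! hcon
    simp only [mem_disjSum] at hcon
    refine hmain (mem_filter.2 ⟨hC, fun v hv i => ?_, fun d hd => ?_⟩)
    · exact hcon (.inl (v, i)) (Or.inl ⟨_, by simpa using hv, rfl⟩)
    · exact hcon (.inr d) (Or.inr ⟨d, hd, rfl⟩)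
  rw [card_disjSum, card_product, card_univ, Fintype.card_bool, card_dartsBetween] at hrest
  have hsplit := card_sdiff_add_card_eq_card (mainParts_subset (U := U) (𝒞 := 𝒞))
  omega

theorem isTwoFactorBarrier (h : IsMinimalTutteBarrier (twoFactorGadget G) U 𝒞) :
    IsTwoFactorBarrier G (core U) (saturated U) ((mainParts U 𝒞).image core) where
  toIsOddFamily := isOddFamily_image_core h
  disjoint := disjoint_core_saturated U
  card_lt := by
    rw [card_image_of_injOn (injOn_core h)]
    have hdeg : ∑ t ∈ saturated U, degreeIn G univ t = ∑ t ∈ saturated U, degreeIn G (core U) t +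
        ∑ t ∈ saturated U, degreeIn G (core U)ᶜ t := by
      simp only [← sum_add_distrib, degreeIn_add_degreeIn_compl]
    have hlt := h.card_lt
    have hU := card_eq_sum_degreeIn_add h
    have h𝒞 := card_le_card_mainParts_add h
    omega

end Barrier

end twoFactorGadget

theorem exists_isTwoFactorBarrier_of_not_hasTwoFactor [Fintype V] [DecidableEq V]
    [DecidableRel G.Adj] (hG : ¬ HasTwoFactor G) : ∃ S T 𝒞, IsTwoFactorBarrier G S T 𝒞 := by
  classical
  have hviolator : ∃ u, (twoFactorGadget G).IsTutteViolator u := by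
    by_contra! hu
    obtain ⟨M, hM⟩ := SimpleGraph.tutte.2 hu
    exact hG (twoFactorGadget.hasTwoFactor_of_isPerfectMatching hM)
  obtain ⟨u, hu⟩ := hviolator
  obtain ⟨U₀, 𝒞₀, h₀⟩ := exists_isTutteBarrier_of_isTutteViolator hu
  obtain ⟨U, 𝒞, h⟩ := h₀.exists_isMinimalTutteBarrier twoFactorGadget.even_card
  exact ⟨_, _, _, twoFactorGadget.isTwoFactorBarrier h⟩

end Gadget

namespace SQuadG

variable {V : Type*} {G : SimpleGraph V}

theorem card_le_ncard_commonUnionG (hsq : SQuadG G) {P : Finset V}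
    (hP : ∀ u ∈ P, ∃ v ∈ P, v ≠ u ∧ ∃ x, G.Adj u x ∧ G.Adj v x) :
    #P ≤ (commonUnionG G P).ncard := by
  rcases P.eq_empty_or_nonempty with rfl | ⟨u, hu⟩
  · simp
  obtain ⟨v, hv, hvu, -⟩ := hP u hu
  have htwo : 2 ≤ #P := one_lt_card.2 ⟨v, hv, u, hu, hvu⟩
  simpa only [Set.ncard_coe_finset] using hsq P (by rwa [Set.ncard_coe_finset]) hP

/-- The members of `Q` having no common neighbor with other members are matched to arbitrary
neighbors; the others are bounded by their common neighbors. -/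
theorem card_le_of_forall_adj_of_common (hsq : SQuadG G) {Q A : Finset V}
    (hadj : ∀ q ∈ Q, ∃ a ∈ A, G.Adj q a)
    (hcommon : ∀ q ∈ Q, ∀ r ∈ Q, q ≠ r → ∀ x, G.Adj q x → G.Adj r x → x ∈ A) : #Q ≤ #A := by
  classical
  set P : Finset V := {q ∈ Q | ∃ r ∈ Q, r ≠ q ∧ ∃ x, G.Adj q x ∧ G.Adj r x}
  have hPQ : P ⊆ Q := filter_subset _ _
  have hshare : ∀ q ∈ Q, ∀ r ∈ Q, r ≠ q → ∀ x, G.Adj q x → G.Adj r x → q ∈ P :=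
    fun q hq r hr hne x hqx hrx => mem_filter.2 ⟨hq, r, hr, hne, x, hqx, hrx⟩
  have hP : #P ≤ (commonUnionG G P).ncard := hsq.card_le_ncard_commonUnionG fun u hu => by
    obtain ⟨huQ, r, hr, hne, x, hux, hrx⟩ := mem_filter.1 hu
    exact ⟨r, hshare r hr u huQ hne.symm x hrx hux, hne, x, hux, hrx⟩
  have hcommonA : commonUnionG G P ⊆ A := by
    rintro x ⟨u, hu, v, hv, hne, hux, hvx⟩
    exact hcommon u (hPQ hu) v (hPQ hv) hne x hux hvx
  have hQP : #(Q \ P) ≤ #{a ∈ A | a ∉ commonUnionG G P} := by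
    refine card_le_card_of_forall_subsingleton G.Adj (fun q hq => ?_) ?_
    · obtain ⟨hq, hqP⟩ := mem_sdiff.1 hq
      obtain ⟨a, ha, hqa⟩ := hadj q hq
      refine ⟨a, mem_filter.2 ⟨ha, ?_⟩, hqa⟩
      rintro ⟨u, hu, -, -, -, hua, -⟩
      exact hqP (hshare q hq u (hPQ hu) (ne_of_mem_of_not_mem hu hqP) a hqa hua)
    · rintro a - q ⟨hq, hqa⟩ r ⟨hr, hra⟩
      obtain ⟨hq, hqP⟩ := mem_sdiff.1 hq
      by_contra hne
      exact hqP (hshare q hq r (mem_sdiff.1 hr).1 (Ne.symm hne) a hqa hra)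
  have hncard : (commonUnionG G P).ncard = #{a ∈ A | a ∈ commonUnionG G P} := by
    rw [← Set.ncard_coe_finset]
    congr 1
    ext x
    simpa using fun hx => hcommonA hx
  have hsplitQ := card_sdiff_add_card_eq_card hPQ
  have hsplitA := card_filter_add_card_filter_not (s := A) (· ∈ commonUnionG G P)
  omega

theorem exists_ne_common (hsq : SQuadG G) {u v x : V} (hne : u ≠ v) (hux : G.Adj u x)
    (hvx : G.Adj v x) : ∃ z, z ≠ x ∧ G.Adj u z ∧ G.Adj v z := by
  classical
  by_contra! hcon
  have huniq : ∀ z, G.Adj u z → G.Adj v z → z = x := fun z huz hvz =>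
    by_contra fun hz => hcon z hz huz hvz
  have hle : #{u, v} ≤ #{x} := hsq.card_le_of_forall_adj_of_common (by simp [hux, hvx]) (by
    simp only [mem_insert, mem_singleton]
    rintro q (rfl | rfl) r (rfl | rfl) hqr z hqz hrz
    · exact absurd rfl hqr
    · exact huniq z hqz hrz
    · exact huniq z hrz hqz
    · exact absurd rfl hqr)
  rw [card_pair hne, card_singleton] at hle
  omega

theorem two_le_ncard_neighborSet [Finite V] (hsq : SQuadG G) (hconn : G.Connected)
    (hcard : 3 ≤ Nat.card V) (v : V) : 2 ≤ (G.neighborSet v).ncard := by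
  have : Nontrivial V := Finite.one_lt_card_iff_nontrivial.1 (by omega)
  obtain ⟨x, hvx⟩ := hconn.preconnected.exists_adj_of_nontrivial v
  suffices h : ∃ z, z ≠ x ∧ G.Adj v z by
    obtain ⟨z, hzx, hvz⟩ := h
    exact (Set.one_lt_ncard).2 ⟨z, hvz, x, hvx, hzx⟩
  obtain ⟨w, hw⟩ : ∃ w, w ∉ ({v, x} : Set V) := by
    by_contra! hcon
    have hle := (Set.ncard_pair hvx.ne).le
    rw [Set.eq_univ_of_forall hcon, Set.ncard_univ] at hle
    omega
  obtain ⟨p⟩ := hconn.preconnected v w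
  obtain ⟨d, -, hfst, hsnd⟩ := p.exists_boundary_dart {v, x} (Set.mem_insert _ _) hw
  obtain ⟨hsndv, hsndx⟩ : d.snd ≠ v ∧ d.snd ≠ x := by simpa using hsnd
  rcases hfst with hfst | hfst
  · exact ⟨d.snd, hsndx, hfst ▸ d.adj⟩
  · obtain ⟨z, hzx, hvz, -⟩ := hsq.exists_ne_common hsndv.symm hvx (hfst ▸ d.adj.symm)
    exact ⟨z, hzx, hvz⟩

end SQuadG

namespace IsExtremalTwoFactorBarrier

variable {V : Type*} [Fintype V] [DecidableEq V] {G : SimpleGraph V} [DecidableRel G.Adj]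
  {S T W : Finset V} {𝒞 : Finset (Finset V)}

theorem notMem_left (h : IsExtremalTwoFactorBarrier G S T 𝒞) {C : Finset V} (hC : C ∈ 𝒞) {c : V}
    (hc : c ∈ C) : c ∉ S :=
  fun hS => h.notMem C hC c hc (mem_union_left T hS)

theorem notMem_right (h : IsExtremalTwoFactorBarrier G S T 𝒞) {C : Finset V} (hC : C ∈ 𝒞) {c : V}
    (hc : c ∈ C) : c ∉ T :=
  fun hT => h.notMem C hC c hc (mem_union_right S hT)

theorem eq_of_adj_of_adj (h : IsExtremalTwoFactorBarrier G S T 𝒞) {v t u : V} (hS : v ∉ S)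
    (hT : v ∉ T) (ht : t ∈ T) (hu : u ∈ T) (hvt : G.Adj v t) (hvu : G.Adj v u) : t = u :=
  card_le_one.1 (h.degreeIn_le_one v hS hT) t (mem_filter.2 ⟨ht, hvt⟩) u (mem_filter.2 ⟨hu, hvu⟩)

theorem exists_part_of_adj (h : IsExtremalTwoFactorBarrier G S T 𝒞) {t w : V} (ht : t ∈ T)
    (htw : G.Adj t w) (hw : w ∉ S) : ∃ C ∈ 𝒞, w ∈ C ∧ ∀ c ∈ C, G.Adj t c → c = w :=
  h.exists_part_of_card_le (N := {c ∈ Sᶜ | G.Adj t c})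
    (fun _ hC _ hc htc => mem_filter.2 ⟨mem_compl.2 (h.notMem_left hC hc), htc⟩)
    (h.degreeIn_compl_le t ht) (mem_filter.2 ⟨mem_compl.2 hw, htw⟩)

theorem not_adj (h : IsExtremalTwoFactorBarrier G S T 𝒞) {t u : V} (ht : t ∈ T) (hu : u ∈ T) :
    ¬ G.Adj t u := fun htu => by
  obtain ⟨C, hC, huC, -⟩ := h.exists_part_of_adj ht htu (Finset.disjoint_right.1 h.disjoint hu)
  exact h.notMem_right hC huC hu

theorem mem_left_of_adj_of_adj (h : IsExtremalTwoFactorBarrier G S T 𝒞) {t u x : V} (ht : t ∈ T)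
    (hu : u ∈ T) (htu : t ≠ u) (htx : G.Adj t x) (hux : G.Adj u x) : x ∈ S := by
  by_contra hS
  have hT : x ∉ T := fun hT => h.not_adj ht hT htx
  exact htu (h.eq_of_adj_of_adj hS hT ht hu htx.symm hux.symm)

/-- The vertices of `T` with at most one neighbor outside `S`. -/
def thin (G : SimpleGraph V) [DecidableRel G.Adj] (S T : Finset V) : Finset V :=
  {t ∈ T | degreeIn G Sᶜ t ≤ 1}

/-- The parts containing no neighbor of a thin vertex. -/
def freeParts (G : SimpleGraph V) [DecidableRel G.Adj] (S T : Finset V) (𝒞 : Finset (Finset V)) :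
    Finset (Finset V) :=
  𝒞 \ (thin G S T).biUnion (adjParts G 𝒞)

theorem thin_subset : thin G S T ⊆ T :=
  filter_subset _ _

theorem freeParts_subset : freeParts G S T 𝒞 ⊆ 𝒞 :=
  sdiff_subset

theorem not_adj_of_mem_freeParts {C : Finset V} (hC : C ∈ freeParts G S T 𝒞) {a c : V}
    (ha : a ∈ thin G S T) (hc : c ∈ C) : ¬ G.Adj a c := fun hac =>
  (mem_sdiff.1 hC).2
    (mem_biUnion.2 ⟨a, ha, mem_adjParts.2 ⟨freeParts_subset hC, c, hc, hac⟩⟩)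

theorem card_le_card_freeParts_add (h : IsExtremalTwoFactorBarrier G S T 𝒞) :
    #𝒞 ≤ #(freeParts G S T 𝒞) + ∑ a ∈ thin G S T, degreeIn G Sᶜ a := by
  have hadj : ∀ a, #(adjParts G 𝒞 a) ≤ degreeIn G Sᶜ a := fun a =>
    h.card_adjParts_le fun _ hC _ hc hac =>
      mem_filter.2 ⟨mem_compl.2 (h.notMem_left hC hc), hac⟩
  calc
    #𝒞 ≤ #(freeParts G S T 𝒞) + #((thin G S T).biUnion (adjParts G 𝒞)) :=
      card_le_card_sdiff_add_card
    _ ≤ #(freeParts G S T 𝒞) + ∑ a ∈ thin G S T, degreeIn G Sᶜ a := by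
      gcongr
      exact card_biUnion_le.trans (sum_le_sum fun a _ => hadj a)

theorem two_mul_card_add_sum_thin_le (G : SimpleGraph V) [DecidableRel G.Adj] (S T : Finset V) :
    2 * #T + ∑ a ∈ thin G S T, degreeIn G Sᶜ a ≤
      2 * #(thin G S T) + ∑ t ∈ T, degreeIn G Sᶜ t := by
  have hthick : #(T \ thin G S T) * 2 ≤ ∑ t ∈ T \ thin G S T, degreeIn G Sᶜ t := by
    rw [← smul_eq_mul]
    refine card_nsmul_le_sum _ _ _ fun t ht => ?_
    obtain ⟨htT, hthin⟩ := mem_sdiff.1 ht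
    by_contra! hlt
    exact hthin (mem_filter.2 ⟨htT, by omega⟩)
  have hcard := card_sdiff_add_card_eq_card (thin_subset (G := G) (S := S) (T := T))
  have hsum := sum_sdiff (f := degreeIn G Sᶜ) (thin_subset (G := G) (S := S) (T := T))
  omega

theorem exists_mem_left_adj_of_mem_thin (hdeg : ∀ v, 2 ≤ (G.neighborSet v).ncard) {a : V}
    (ha : a ∈ thin G S T) : ∃ s ∈ S, G.Adj a s := by
  have hle : degreeIn G Sᶜ a ≤ 1 := (mem_filter.1 ha).2
  have hsplit := degreeIn_add_degreeIn_compl G S a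
  have htwo := hdeg a
  rw [← degreeIn_univ] at htwo
  exact exists_adj_of_degreeIn_pos (by omega)

theorem exists_mem_left_adj_of_mem_freeParts (h : IsExtremalTwoFactorBarrier G S T 𝒞)
    (hsq : SQuadG G) {C : Finset V} (hC : C ∈ freeParts G S T 𝒞) {w t : V} (hw : w ∈ C)
    (ht : t ∈ T) (hwt : G.Adj w t) : ∃ s ∈ S, G.Adj w s := by
  have hC𝒞 := freeParts_subset hC
  have hthick : 1 < degreeIn G Sᶜ t := by
    by_contra! hle
    exact not_adj_of_mem_freeParts hC (mem_filter.2 ⟨ht, hle⟩) hw hwt.symm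
  obtain ⟨c, hc, hcw⟩ := exists_mem_ne hthick w
  obtain ⟨hcS, htc⟩ := mem_filter.1 hc
  obtain ⟨D, hD, hcD, huniq⟩ := h.exists_part_of_adj ht htc (mem_compl.1 hcS)
  have hCD : C ≠ D := by
    rintro rfl
    exact hcw (huniq w hw hwt.symm).symm
  obtain ⟨z, hzt, hwz, hcz⟩ := hsq.exists_ne_common hcw.symm hwt htc.symm
  have hzT : z ∉ T := fun hzT =>
    hzt (h.eq_of_adj_of_adj (h.notMem_left hC𝒞 hw) (h.notMem_right hC𝒞 hw) hzT ht hwz hwt)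
  have hzU := h.mem_of_adj_of_adj hC𝒞 hD hCD hw hcD hwz hcz
  exact ⟨z, (mem_union.1 hzU).resolve_right hzT, hwz⟩

theorem mem_left_of_adj_thin_of_adj (h : IsExtremalTwoFactorBarrier G S T 𝒞) {C : Finset V}
    (hC : C ∈ freeParts G S T 𝒞) {a w x : V} (ha : a ∈ thin G S T) (hw : w ∈ C) (hax : G.Adj a x)
    (hwx : G.Adj w x) : x ∈ S := by
  rcases h.mem_or_mem_of_adj C (freeParts_subset hC) w hw x hwx with hxC | hxU
  · exact absurd hax (not_adj_of_mem_freeParts hC ha hxC)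
  · exact (mem_union.1 hxU).resolve_right fun hxT => h.not_adj (thin_subset ha) hxT hax

/-- A system of representatives of the free parts, each of them a vertex adjacent to `T`. -/
structure IsContactSystem (G : SimpleGraph V) [DecidableRel G.Adj] (S T : Finset V)
    (𝒞 : Finset (Finset V)) (W : Finset V) : Prop where
  card_eq : #W = #(freeParts G S T 𝒞)
  exists_adj : ∀ w ∈ W, ∃ t ∈ T, G.Adj w t
  exists_part : ∀ w ∈ W, ∃ C ∈ freeParts G S T 𝒞, w ∈ C ∧ ∀ w' ∈ W, w' ∈ C → w' = w

theorem exists_isContactSystem (h : IsExtremalTwoFactorBarrier G S T 𝒞) :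
    ∃ W, IsContactSystem G S T 𝒞 W := by
  have hcontact : ∀ C ∈ freeParts G S T 𝒞, ∃ c ∈ C, ∃ t ∈ T, G.Adj c t := by
    intro C hC
    obtain ⟨c, hc, hpos⟩ := exists_ne_zero_of_sum_ne_zero (h.odd C (freeParts_subset hC)).pos.ne'
    exact ⟨c, hc, exists_adj_of_degreeIn_pos (Nat.pos_of_ne_zero hpos)⟩
  obtain ⟨W, hcard, hW⟩ := exists_transversal
    (h.pairwiseDisjoint.subset (coe_subset.2 freeParts_subset)) hcontact
  exact ⟨W, hcard, fun w hw => (hW w hw).1, fun w hw => (hW w hw).2⟩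

theorem degreeIn_le_one_of_isContactSystem (h : IsExtremalTwoFactorBarrier G S T 𝒞)
    (hW : IsContactSystem G S T 𝒞 W) : ∀ w ∈ W, degreeIn G T w ≤ 1 := by
  intro w hw
  obtain ⟨C, hC, hwC, -⟩ := hW.exists_part w hw
  have hC𝒞 := freeParts_subset hC
  exact h.degreeIn_le_one w (h.notMem_left hC𝒞 hwC) (h.notMem_right hC𝒞 hwC)

theorem mem_union_of_common (h : IsExtremalTwoFactorBarrier G S T 𝒞)
    (hW : IsContactSystem G S T 𝒞 W) {w w' x : V} (hw : w ∈ W) (hw' : w' ∈ W) (hne : w ≠ w')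
    (hwx : G.Adj w x) (hwx' : G.Adj w' x) : x ∈ S ∪ {t ∈ T | 2 ≤ degreeIn G W t} := by
  obtain ⟨C, hC, hwC, huniq⟩ := hW.exists_part w hw
  obtain ⟨D, hD, hwD, -⟩ := hW.exists_part w' hw'
  have hCD : C ≠ D := by
    rintro rfl
    exact hne (huniq w' hw' hwD).symm
  have hxU := h.mem_of_adj_of_adj (freeParts_subset hC) (freeParts_subset hD) hCD hwC hwD hwx hwx'
  have htwo : 2 ≤ degreeIn G W x := one_lt_card.2
    ⟨w, mem_filter.2 ⟨hw, hwx.symm⟩, w', mem_filter.2 ⟨hw', hwx'.symm⟩, hne⟩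
  exact mem_union.2 ((mem_union.1 hxU).imp_right fun hxT => mem_filter.2 ⟨hxT, htwo⟩)

theorem card_thin_add_card_le (h : IsExtremalTwoFactorBarrier G S T 𝒞)
    (hdeg : ∀ v, 2 ≤ (G.neighborSet v).ncard) (hsq : SQuadG G)
    (hW : IsContactSystem G S T 𝒞 W) :
    #(thin G S T) + #W ≤ #S + #{t ∈ T | 2 ≤ degreeIn G W t} := by
  have hdisj : Disjoint (thin G S T) W := Finset.disjoint_left.2 fun w hthin hw => by
    obtain ⟨C, hC, hwC, -⟩ := hW.exists_part w hw
    exact h.notMem_right (freeParts_subset hC) hwC (thin_subset hthin)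
  have hthinW : ∀ a ∈ thin G S T, ∀ w ∈ W, ∀ x, G.Adj a x → G.Adj w x → x ∈ S := by
    intro a ha w hw x hax hwx
    obtain ⟨C, hC, hwC, -⟩ := hW.exists_part w hw
    exact h.mem_left_of_adj_thin_of_adj hC ha hwC hax hwx
  have hadj : ∀ q ∈ thin G S T ∪ W, ∃ s ∈ S, G.Adj q s := by
    intro q hq
    rcases mem_union.1 hq with ha | hw
    · exact exists_mem_left_adj_of_mem_thin hdeg ha
    · obtain ⟨C, hC, hwC, -⟩ := hW.exists_part q hw
      obtain ⟨t, ht, hwt⟩ := hW.exists_adj q hw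
      exact h.exists_mem_left_adj_of_mem_freeParts hsq hC hwC ht hwt
  rw [← card_union_of_disjoint hdisj]
  refine (hsq.card_le_of_forall_adj_of_common (A := S ∪ {t ∈ T | 2 ≤ degreeIn G W t})
    (fun q hq => ?_) ?_).trans (card_union_le _ _)
  · obtain ⟨s, hs, hqs⟩ := hadj q hq
    exact ⟨s, mem_union_left _ hs, hqs⟩
  · intro q hq r hr hne x hqx hrx
    rcases mem_union.1 hq with hq | hq <;> rcases mem_union.1 hr with hr | hr
    · exact mem_union_left _
        (h.mem_left_of_adj_of_adj (thin_subset hq) (thin_subset hr) hne hqx hrx)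
    · exact mem_union_left _ (hthinW q hq r hr x hqx hrx)
    · exact mem_union_left _ (hthinW r hr q hq x hrx hqx)
    · exact h.mem_union_of_common hW hq hr hne hqx hrx

theorem not_sQuadG (h : IsExtremalTwoFactorBarrier G S T 𝒞)
    (hdeg : ∀ v, 2 ≤ (G.neighborSet v).ncard) : ¬ SQuadG G := by
  intro hsq
  obtain ⟨W, hW⟩ := h.exists_isContactSystem
  have hlt := h.card_lt
  have hT := two_mul_card_add_sum_thin_le G S T
  have h𝒞 := h.card_le_card_freeParts_add
  have hcardW := hW.card_eq
  have hhall := h.card_thin_add_card_le hdeg hsq hW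
  have htwo := two_mul_card_filter_two_le_degreeIn_le (h.degreeIn_le_one_of_isContactSystem hW)
  omega

end IsExtremalTwoFactorBarrier

theorem connected_squad_two_factor_general {V : Type*} [Finite V] (G : SimpleGraph V)
    (hdeg : ∀ v : V, 2 ≤ (G.neighborSet v).ncard) (hsq : SQuadG G) :
    ∃ H : SimpleGraph V, H ≤ G ∧ ∀ v : V, (H.neighborSet v).ncard = 2 := by
  classical
  cases nonempty_fintype V
  by_contra hG
  obtain ⟨S₀, T₀, 𝒞₀, h₀⟩ := exists_isTwoFactorBarrier_of_not_hasTwoFactor hG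
  obtain ⟨S, T, 𝒞, h⟩ := h₀.exists_isExtremalTwoFactorBarrier
  exact h.not_sQuadG hdeg hsq

/-- Every connected s-quadrangular graph with at least three vertices contains
a 2-factor (a spanning subgraph in which every vertex has degree exactly 2). -/
theorem connected_squad_two_factor {V : Type*} [Fintype V] (G : SimpleGraph V)
    (hconn : G.Connected) (hcard : 3 ≤ Fintype.card V) (hsq : SQuadG G) :
    ∃ H : SimpleGraph V, H ≤ G ∧ ∀ v : V, (H.neighborSet v).ncard = 2 :=
  connected_squad_two_factor_general G
    (hsq.two_le_ncard_neighborSet hconn (by rwa [Nat.card_eq_fintype_card])) hsq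
end

section
/- If G is a connected s-quadrangular graph in which every vertex has degree at most 4, then G is hamiltonian. -/
/-!
By Hall's theorem an s-quadrangular graph without isolated vertices has a permutation `π` moving
every vertex to a neighbor: a partition of the vertices into oriented cycles and edges. Choose one
whose cycle partition is as coarse as possible. Then no recombination of edges merges two cycles,
so whenever `x ~ y` joins two different cycles, neither `π x` nor `π⁻¹ x` is adjacent to `π y` or
`π⁻¹ y`. The vertices `x` and `π y` share the neighbor `y`, so by s-quadrangularity they share
another one, which is neither `π x` nor `π⁻¹ x`; with degree at most 4 this pins down the
neighborhood of `x` whenever `π x ≠ π⁻¹ x`. If `π` has more than one cycle, cycles of length two are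
excluded first, and then every cycle must have length four, with opposite vertices being twins of
degree four. Identifying twins turns the graph into a connected 2-regular one, that is a cycle, and
running twice around this cycle is a Hamiltonian cycle of the original graph.
-/

open SimpleGraph Equiv

theorem ncard_preimage_of_fiber_card {V W : Type*} [Finite V] [Finite W] {f : V → W} {k : ℕ}
    (hf : ∀ w, Nat.card {v // f v = w} = k) (S : Set W) : (f ⁻¹' S).ncard = S.ncard * k := by
  have : Fintype S := Fintype.ofFinite S
  calc (f ⁻¹' S).ncard = Nat.card (Σ w : S, {v // f v = w}) :=
        (Nat.card_congr (sigmaSubtypeFiberEquivSubtype f fun _ ↦ Iff.rfl)).symm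
    _ = S.ncard * k := by simp [Nat.card_sigma, hf]

section GraphLemmas

variable {V : Type*} {G : SimpleGraph V}

theorem forall_of_adj_closed (hconn : G.Connected) {P : V → Prop} {v : V} (hv : P v)
    (hP : ∀ a b, P a → G.Adj a b → P b) (w : V) : P w := by
  obtain ⟨p⟩ := hconn.preconnected v w
  induction p with
  | nil => exact hv
  | cons hadj _ ih => exact ih (hP _ _ hv hadj)

theorem mem_of_adj_of_nodup [Finite V] {v : V} {l : List V} (hl : l.Nodup)
    (hadj : ∀ w ∈ l, G.Adj v w) (hdeg : (G.neighborSet v).ncard ≤ l.length) {w : V}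
    (hw : G.Adj v w) : w ∈ l := by
  classical
  have hsub : (l.toFinset : Set V) ⊆ G.neighborSet v := fun w hw ↦ hadj w (by simpa using hw)
  have heq : (l.toFinset : Set V) = G.neighborSet v := by
    refine Set.eq_of_subset_of_ncard_le hsub ?_
    rwa [Set.ncard_coe_finset, List.toFinset_card_of_nodup hl]
  have hmem : w ∈ (l.toFinset : Set V) := heq ▸ hw
  simpa using hmem

end GraphLemmas

section Hamiltonian

variable {V : Type*} [Fintype V] [DecidableEq V] {G : SimpleGraph V}

theorem isHamiltonian_of_enumeration (hcard : 3 ≤ Fintype.card V) {c : ℕ → V}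
    (hadj : ∀ i, G.Adj (c i) (c (i + 1)))
    (hc : ∀ i j, c i = c j ↔ i ≡ j [MOD Fintype.card V]) : G.IsHamiltonian := by
  intro _
  obtain ⟨n, hn⟩ := Nat.exists_eq_add_of_le' hcard
  rw [hn] at hc
  have hsucc (i : Fin (n + 3)) : G.Adj (c i) (c (i + 1 : Fin (n + 3))) := by
    have hval : c (i + 1 : Fin (n + 3)) = c (i + 1 : ℕ) := by
      rw [hc, Fin.val_add]
      exact Nat.mod_modEq _ _
    exact hval ▸ hadj i
  let f : cycleGraph (n + 3) →g G :=
    { toFun := fun i ↦ c i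
      map_rel' := by
        intro u v huv
        rcases cycleGraph_adj.mp huv with h | h
        · rw [sub_eq_iff_eq_add'.mp h]
          exact (hsucc v).symm
        · rw [sub_eq_iff_eq_add'.mp h]
          exact hsucc u }
  have hf : Function.Injective f := fun i j hij ↦
    Fin.ext (((hc i j).mp hij).eq_of_lt_of_lt i.2 j.2)
  refine ⟨_, (cycleGraph.cycle n).map f, ?_⟩
  rw [Walk.isHamiltonianCycle_iff_isCycle_and_length_eq]
  exact ⟨cycleGraph.isCycle_cycle.map hf, by simp [hn]⟩

theorem three_le_card_of_isHamiltonian [Nontrivial V] (hG : G.IsHamiltonian) :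
    3 ≤ Fintype.card V := by
  obtain ⟨v, p, hp⟩ := hG Fintype.one_lt_card.ne'
  exact hp.length_eq ▸ hp.isCycle.three_le_length

theorem exists_enumeration_of_isHamiltonian [Nontrivial V] (hG : G.IsHamiltonian) :
    ∃ c : ℕ → V, (∀ i, G.Adj (c i) (c (i + 1))) ∧
      ∀ i j, c i = c j ↔ i ≡ j [MOD Fintype.card V] := by
  have hcard := three_le_card_of_isHamiltonian hG
  obtain ⟨v, p, hp⟩ := hG (by omega)
  set n := Fintype.card V
  have hlen : p.length = n := hp.length_eq
  have hlast : p.getVert n = p.getVert 0 := by rw [← hlen]; simp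
  refine ⟨fun i ↦ p.getVert (i % n), fun i ↦ ?_, fun i j ↦ ⟨fun hij ↦ ?_, fun hij ↦ ?_⟩⟩
  · have hi : i % n < n := Nat.mod_lt _ (by omega)
    have hadj := p.adj_getVert_succ (i := i % n) (by omega)
    have hmod : p.getVert ((i + 1) % n) = p.getVert (i % n + 1) := by
      rw [← Nat.mod_add_mod]
      rcases (show i % n + 1 ≤ n from hi).lt_or_eq with hlt | heq
      · rw [Nat.mod_eq_of_lt hlt]
      · rw [heq, hlast, Nat.mod_self]
    simpa only [hmod] using hadj
  · have hi : i % n < n := Nat.mod_lt _ (by omega)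
    have hj : j % n < n := Nat.mod_lt _ (by omega)
    exact hp.isCycle.getVert_injOn' (by simp; omega) (by simp; omega) hij
  · exact congrArg p.getVert hij

theorem isHamiltonian_of_forall_sameCycle (hcard : 3 ≤ Fintype.card V) {π : Perm V}
    (hπ : ∀ v, G.Adj v (π v)) (hone : ∀ a b, π.SameCycle a b) : G.IsHamiltonian := by
  obtain ⟨v⟩ : Nonempty V := Fintype.card_pos_iff.mp (by omega)
  have hcyc : π.IsCycleOn (Finset.univ : Finset V) :=
    ⟨by simp, fun a _ b _ ↦ hone a b⟩
  refine isHamiltonian_of_enumeration hcard (c := fun i ↦ (π ^ i) v) (fun i ↦ ?_) fun i j ↦ ?_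
  · rw [pow_succ', Perm.mul_apply]
    exact hπ _
  · exact hcyc.pow_apply_eq_pow_apply (Finset.mem_univ v)

-- Run around the cycle of `H` as often as a fiber has points, visiting a new layer each time.
theorem isHamiltonian_comap {W : Type*} [Fintype W] [DecidableEq W] [Nontrivial W]
    {H : SimpleGraph W} (hH : H.IsHamiltonian) {k : ℕ} (hk : k ≠ 0) {f : V → W}
    (hf : ∀ w, Nat.card {v // f v = w} = k) : (H.comap f).IsHamiltonian := by
  have hcard := three_le_card_of_isHamiltonian hH
  obtain ⟨c, hadj, hc⟩ := exists_enumeration_of_isHamiltonian hH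
  have : NeZero k := ⟨hk⟩
  let e : V ≃ W × Fin k := (Equiv.sigmaFiberEquiv f).symm.trans
    ((Equiv.sigmaCongrRight fun w ↦ Finite.equivFinOfCardEq (hf w)).trans
      (Equiv.sigmaEquivProd W (Fin k)))
  have hef (p : W × Fin k) : f (e.symm p) = p.1 := ((Finite.equivFinOfCardEq (hf p.1)).symm p.2).2
  have hcardV : Fintype.card V = Fintype.card W * k := by simp [Fintype.card_congr e]
  refine isHamiltonian_of_enumeration (c := fun i ↦ e.symm (c i, Fin.ofNat k (i / Fintype.card W)))
    (hcardV ▸ hcard.trans (Nat.le_mul_of_pos_right _ (Nat.pos_of_ne_zero hk))) (fun i ↦ ?_)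
    fun i j ↦ ?_
  · simpa [hef] using hadj i
  · rw [e.symm.injective.eq_iff, Prod.mk.injEq, hc, hcardV, Fin.ext_iff]
    simp only [Nat.ModEq, Nat.mod_mul, Fin.val_ofNat]
    constructor
    · rintro ⟨hmod, hdiv⟩
      rw [hmod, hdiv]
    · intro h
      have hmod : i % Fintype.card W = j % Fintype.card W := by
        simpa [Nat.add_mod] using congrArg (· % Fintype.card W) h
      refine ⟨hmod, Nat.eq_of_mul_eq_mul_left (by omega) (Nat.add_left_cancel (hmod ▸ h))⟩

theorem isHamiltonian_of_connected_of_isCycles (hconn : G.Connected) (hG : G.IsCycles) :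
    G.IsHamiltonian := by
  intro hne
  have : Nontrivial V := Fintype.one_lt_card_iff_nontrivial.mp
    (by have := Fintype.card_pos_iff.mpr hconn.nonempty; omega)
  obtain ⟨v⟩ := hconn.nonempty
  obtain ⟨p, hp, hverts⟩ := hG.exists_cycle_toSubgraph_verts_eq_connectedComponentSupp
    (v := v) (c := G.connectedComponentMk v) rfl (hconn.preconnected.exists_adj_of_nontrivial v)
  have hmem (w : V) : w ∈ p.support := by
    have hw : w ∈ (G.connectedComponentMk v).supp :=
      ConnectedComponent.sound (hconn.preconnected w v)
    rwa [← hverts, Walk.mem_verts_toSubgraph] at hw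
  refine ⟨v, p, Walk.isHamiltonianCycle_iff_isCycle_and_support_count_tail_eq_one.mpr
    ⟨hp, fun w ↦ List.count_eq_one_of_mem hp.support_nodup ?_⟩⟩
  rcases (Walk.mem_support_iff p).mp (hmem w) with rfl | hw
  · exact Walk.end_mem_tail_support hp.not_nil
  · exact hw

theorem isHamiltonian_comap_of_isCycles {W : Type*} [Nontrivial W]
    {H : SimpleGraph W} {k : ℕ} (hk : k ≠ 0) {f : V → W}
    (hf : ∀ w, Nat.card {v // f v = w} = k) (hconn : (H.comap f).Connected) (hH : H.IsCycles) :
    (H.comap f).IsHamiltonian := by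
  have hsurj : Function.Surjective f := fun w ↦ by
    have : Nonempty {v // f v = w} := (Nat.card_ne_zero.mp (hf w ▸ hk)).1
    exact ⟨this.some, this.some.2⟩
  classical
  have : Finite W := .of_surjective f hsurj
  have : Fintype W := .ofFinite W
  have hHconn : H.Connected := hconn.map (Hom.comap f H) hsurj
  exact isHamiltonian_comap (isHamiltonian_of_connected_of_isCycles hHconn hH) hk hf

theorem isHamiltonian_of_twins (hconn : G.Connected) {τ : V → V} (hττ : ∀ v, τ (τ v) = v)
    (hτ : ∀ v, τ v ≠ v) (htwin : ∀ v, G.neighborSet (τ v) = G.neighborSet v)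
    (hdeg : ∀ v, (G.neighborSet v).ncard = 4) : G.IsHamiltonian := by
  classical
  let twins : Setoid V :=
    { r := fun a b ↦ b = a ∨ b = τ a
      iseqv := ⟨fun _ ↦ Or.inl rfl, by rintro a _ (rfl | rfl) <;> simp [hττ],
        by rintro a _ _ (rfl | rfl) (rfl | rfl) <;> simp [hττ]⟩ }
  let f : V → Quotient twins := Quotient.mk twins
  let H : SimpleGraph (Quotient twins) := G.comap Quotient.out
  have hadj (v w : V) : G.Adj (τ v) w ↔ G.Adj v w := Set.ext_iff.mp (htwin v) w
  have hout (a : V) : (f a).out = a ∨ (f a).out = τ a :=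
    Quotient.exact (Quotient.out_eq (f a)).symm
  have hG : H.comap f = G := by
    ext a b
    rcases hout a with ha | ha <;> rcases hout b with hb | hb <;>
      simp only [H, comap_adj, ha, hb, hadj, G.adj_comm a]
  have hfiber (q : Quotient twins) : Nat.card {v // f v = q} = 2 := by
    obtain ⟨v, rfl⟩ := Quotient.exists_rep q
    have hset : {a | f a = f v} = {v, τ v} := by
      ext a
      exact Quotient.eq.trans twins.comm'
    exact (congrArg Set.ncard hset).trans (Set.ncard_pair (hτ v).symm)
  have hcycles : H.IsCycles := by
    intro q _
    obtain ⟨v, rfl⟩ := Quotient.exists_rep q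
    have hcard : (G.neighborSet v).ncard = (H.neighborSet (f v)).ncard * 2 := by
      rw [← ncard_preimage_of_fiber_card hfiber, ← hG]
      rfl
    rw [hdeg v] at hcard
    exact (Nat.eq_of_mul_eq_mul_right two_pos hcard).symm
  have : Nontrivial (Quotient twins) := by
    obtain ⟨v⟩ := hconn.nonempty
    obtain ⟨w, hw⟩ := Set.nonempty_of_ncard_ne_zero (hdeg v ▸ four_ne_zero)
    exact ⟨f v, f w, Adj.ne (G := H) (by rwa [← hG] at hw)⟩
  exact hG ▸ isHamiltonian_comap_of_isCycles two_ne_zero hfiber (hG ▸ hconn) hcycles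

end Hamiltonian

section Perm

variable {V : Type*} {π σ : Perm V} {u v x y : V}

theorem ne_of_not_sameCycle (hxy : ¬ π.SameCycle x y) : x ≠ y := by
  rintro rfl
  exact hxy (.refl π x)

theorem ne_apply_of_not_sameCycle (hxy : ¬ π.SameCycle x y) : x ≠ π y :=
  ne_of_not_sameCycle (π := π) (by rwa [Perm.sameCycle_apply_right])

theorem ne_symm_apply_of_not_sameCycle (hxy : ¬ π.SameCycle x y) : x ≠ π.symm y :=
  ne_of_not_sameCycle (π := π) (by rwa [Perm.sameCycle_symm_apply_right])

theorem apply_ne_symm_apply (hx : π (π x) ≠ x) : π x ≠ π.symm x := fun h ↦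
  hx (by rw [h, apply_symm_apply])

variable [Finite V]

theorem sameCycle_induction {P : V → Prop} (hxy : π.SameCycle x y) (base : P x)
    (step : ∀ a, π.SameCycle x a → P a → P (π a)) : P y := by
  obtain ⟨n, rfl⟩ := hxy.exists_nat_pow_eq
  clear hxy
  induction n with
  | zero => exact base
  | succ n ih =>
    rw [pow_succ', Perm.mul_apply]
    exact step _ ⟨n, rfl⟩ ih

theorem sameCycle_of_forall_sameCycle_apply (h : ∀ a, σ.SameCycle a (π a))
    (hxy : π.SameCycle x y) : σ.SameCycle x y :=
  sameCycle_induction hxy .rfl fun a _ ha ↦ ha.trans (h a)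

theorem eq_or_eq_apply_of_sameCycle (hx : π (π x) = x) (hxy : π.SameCycle x y) :
    y = x ∨ y = π x := by
  refine sameCycle_induction (P := fun a ↦ a = x ∨ a = π x) hxy (Or.inl rfl) fun a _ ha ↦ ?_
  rcases ha with rfl | rfl
  · exact Or.inr rfl
  · exact Or.inl hx

theorem apply_apply_of_sameCycle (hx : π (π x) = x) (hxy : π.SameCycle x y) : π (π y) = y := by
  rcases eq_or_eq_apply_of_sameCycle hx hxy with rfl | rfl
  · exact hx
  · rw [hx]

variable [DecidableEq V]

theorem sameCycle_mul_swap (huv : ¬ π.SameCycle u v) : (π * swap u v).SameCycle u v := by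
  by_contra h
  have hπ : (π * swap u v).SameCycle u (π (π.symm v)) := by
    refine sameCycle_induction (P := fun a ↦ (π * swap u v).SameCycle u (π a))
      (Perm.SameCycle.refl π v).symm_apply_right ⟨1, by simp⟩ fun a ha hua ↦ hua.trans ⟨1, ?_⟩
    have hu : π a ≠ u := fun h' ↦ huv (h' ▸ ha.apply_right).symm
    have hv : π a ≠ v := fun h' ↦ h (h' ▸ hua)
    simp [swap_apply_of_ne_of_ne hu hv]
  exact h (by simpa using hπ)

theorem sameCycle_mul_swap_of_sameCycle (huv : ¬ π.SameCycle u v) (hxy : π.SameCycle x y) :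
    (π * swap u v).SameCycle x y := by
  have h := sameCycle_mul_swap huv
  refine sameCycle_of_forall_sameCycle_apply (fun c ↦ ?_) hxy
  rcases eq_or_ne c u with rfl | hcu
  · exact h.trans ⟨1, by simp⟩
  rcases eq_or_ne c v with rfl | hcv
  · exact h.symm.trans ⟨1, by simp⟩
  exact ⟨1, by simp [swap_apply_of_ne_of_ne hcu hcv]⟩

theorem sameCycle_of_sameCycle_mul_swap (hxu : ¬ π.SameCycle x u) (hxv : ¬ π.SameCycle x v)
    (hxy : (π * swap u v).SameCycle x y) : π.SameCycle x y := by
  refine sameCycle_induction hxy .rfl fun a _ ha ↦ ?_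
  have hau : a ≠ u := fun h ↦ hxu (h ▸ ha)
  have hav : a ≠ v := fun h ↦ hxv (h ▸ ha)
  simpa [swap_apply_of_ne_of_ne hau hav] using ha

end Perm

section SQuad

variable {V : Type*} {G : SimpleGraph V}

namespace SQuadG

theorem exists_ne_adj_adj (hsq : SQuadG G) {u v w : V} (huv : u ≠ v) (hu : G.Adj u w)
    (hv : G.Adj v w) : ∃ z, z ≠ w ∧ G.Adj u z ∧ G.Adj v z := by
  by_contra! h
  have hcard := hsq {u, v} (by rw [Set.ncard_pair huv]) (by
    rintro a (rfl | rfl)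
    · exact ⟨v, by simp, huv.symm, w, hu, hv⟩
    · exact ⟨u, by simp, huv, w, hv, hu⟩)
  have hsub : commonUnionG G {u, v} ⊆ {w} := by
    rintro z ⟨a, rfl | rfl, b, rfl | rfl, hab, haz, hbz⟩ <;>
      simp only [Set.mem_singleton_iff] <;> grind
  have hle := Set.ncard_le_ncard hsub
  rw [Set.ncard_singleton] at hle
  rw [Set.ncard_pair huv] at hcard
  omega

theorem exists_adj_adj_of_triple (hsq : SQuadG G) {x a b w y z : V} (hxa : x ≠ a) (hxb : x ≠ b)
    (hab : a ≠ b) (hx : G.Adj x w) (ha : G.Adj a w) (hb : G.Adj b w)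
    (hxa' : ∀ t, G.Adj x t → G.Adj a t → t = y ∨ t = z)
    (hxb' : ∀ t, G.Adj x t → G.Adj b t → t = y ∨ t = z) :
    ∃ t, t ≠ y ∧ t ≠ z ∧ G.Adj a t ∧ G.Adj b t := by
  by_contra! h
  have h3 : ({x, a, b} : Set V).ncard = 3 := Set.ncard_eq_three.mpr ⟨x, a, b, hxa, hxb, hab, rfl⟩
  have hcard := hsq {x, a, b} (by omega) (by
    rintro c (rfl | rfl | rfl)
    · exact ⟨a, by simp, hxa.symm, w, hx, ha⟩
    · exact ⟨x, by simp, hxa, w, ha, hx⟩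
    · exact ⟨x, by simp, hxb, w, hb, hx⟩)
  have hsub : commonUnionG G {x, a, b} ⊆ {y, z} := by
    rintro t ⟨c, rfl | rfl | rfl, d, rfl | rfl | rfl, hcd, hct, hdt⟩ <;>
      simp only [Set.mem_insert_iff, Set.mem_singleton_iff] <;> grind
  have h2 := (Set.ncard_le_ncard hsub).trans (Set.ncard_insert_le y {z})
  rw [Set.ncard_singleton] at h2
  omega

variable [Finite V]

theorem card_le_ncard_biUnion_neighborSet (hsq : SQuadG G) (hpos : ∀ v, ∃ w, G.Adj v w)
    (s : Finset V) : s.card ≤ (⋃ v ∈ s, G.neighborSet v).ncard := by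
  classical
  induction s using Finset.strongInduction with
  | H s ih =>
    by_cases hshare : ∀ u ∈ s, ∃ v ∈ s, v ≠ u ∧ (G.neighborSet u ∩ G.neighborSet v).Nonempty
    · rcases s.eq_empty_or_nonempty with rfl | ⟨u, hu⟩
      · simp
      obtain ⟨v, hv, hvu, -⟩ := hshare u hu
      have htwo : 2 ≤ s.card := Finset.one_lt_card.mpr ⟨v, hv, u, hu, hvu⟩
      rw [← Set.ncard_coe_finset] at htwo ⊢
      refine (hsq s htwo hshare).trans (Set.ncard_le_ncard ?_)
      rintro w ⟨a, ha, -, -, -, haw, -⟩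
      exact Set.mem_biUnion ha haw
    · push Not at hshare
      obtain ⟨u, hu, hdisj⟩ := hshare
      have hunion : (⋃ v ∈ s, G.neighborSet v) =
          G.neighborSet u ∪ ⋃ v ∈ s.erase u, G.neighborSet v := by
        rw [← Finset.set_biUnion_insert, Finset.insert_erase hu]
      have hu1 : 0 < (G.neighborSet u).ncard := (Set.ncard_pos).mpr (hpos u)
      have hrest := ih (s.erase u) (Finset.erase_ssubset hu)
      rw [Finset.card_erase_of_mem hu] at hrest
      rw [hunion, Set.ncard_union_eq]
      · omega
      · exact Set.disjoint_iUnion₂_right.mpr fun v hv ↦ Set.disjoint_iff_inter_eq_empty.mpr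
          (hdisj v (Finset.mem_of_mem_erase hv) (Finset.ne_of_mem_erase hv))

theorem exists_perm_adj (hsq : SQuadG G) (hpos : ∀ v, ∃ w, G.Adj v w) :
    ∃ π : Perm V, ∀ v, G.Adj v (π v) := by
  classical
  have := Fintype.ofFinite V
  obtain ⟨f, hf, hadj⟩ := (Fintype.all_card_le_filter_rel_iff_exists_injective G.Adj).mp fun s ↦ by
    have := hsq.card_le_ncard_biUnion_neighborSet hpos s
    refine this.trans_eq ?_
    rw [← Set.ncard_coe_finset]
    congr 1
    ext w
    simp
  exact ⟨Equiv.ofBijective f (Finite.injective_iff_bijective.mp hf), hadj⟩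

end SQuadG

end SQuad

/-- A permutation moving each vertex to a neighbor, that is a partition of the vertex set into
oriented cycles and edges, whose partition into cycles is as coarse as possible. -/
structure IsMaximalCycleFactor {V : Type*} (G : SimpleGraph V) (π : Perm V) : Prop where
  adj : ∀ v, G.Adj v (π v)
  maximal : ∀ σ : Perm V, (∀ v, G.Adj v (σ v)) →
    (∀ a b, π.SameCycle a b → σ.SameCycle a b) → ∀ a b, σ.SameCycle a b → π.SameCycle a b

section ReverseCycle

variable {V : Type*} {π : Perm V} {a b y : V}

open Classical in
/-- The permutation obtained from `π` by reversing the orientation of the cycle through `y`: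
composing `π` with the inverse of this cycle stops the cycle, composing once more reverses it. -/
noncomputable def reverseCycle (π : Perm V) (y : V) : Perm V :=
  π * (π.cycleOf y)⁻¹ * (π.cycleOf y)⁻¹

theorem reverseCycle_apply_of_sameCycle (ha : π.SameCycle y a) :
    reverseCycle π y a = π.symm a := by
  classical
  have hinv (b : V) (hb : π.SameCycle y b) : (π.cycleOf y)⁻¹ b = π.symm b := by
    rw [Perm.inv_eq_iff_eq, hb.symm_apply_right.cycleOf_apply, apply_symm_apply]
  rw [reverseCycle, Perm.mul_apply, Perm.mul_apply, hinv a ha, hinv _ ha.symm_apply_right,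
    apply_symm_apply]

theorem reverseCycle_apply_of_not_sameCycle (ha : ¬ π.SameCycle y a) :
    reverseCycle π y a = π a := by
  classical
  have hinv : (π.cycleOf y)⁻¹ a = a :=
    Perm.inv_eq_iff_eq.mpr (Perm.cycleOf_apply_of_not_sameCycle ha).symm
  rw [reverseCycle, Perm.mul_apply, Perm.mul_apply, hinv, hinv]

theorem sameCycle_reverseCycle_of_sameCycle [Finite V] (y : V) (hab : π.SameCycle a b) :
    (reverseCycle π y).SameCycle a b := by
  refine sameCycle_of_forall_sameCycle_apply (fun c ↦ ?_) hab
  by_cases hc : π.SameCycle y c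
  · refine Perm.SameCycle.symm ⟨1, ?_⟩
    rw [zpow_one, reverseCycle_apply_of_sameCycle hc.apply_right, symm_apply_apply]
  · exact ⟨1, by rw [zpow_one, reverseCycle_apply_of_not_sameCycle hc]⟩

end ReverseCycle

section Maximal

variable {V : Type*} {G : SimpleGraph V}

theorem exists_isMaximalCycleFactor [Finite V] (h : ∃ π : Perm V, ∀ v, G.Adj v (π v)) :
    ∃ π, IsMaximalCycleFactor G π := by
  let cycles (π : Perm V) : Set (V × V) := {p | π.SameCycle p.1 p.2}
  obtain ⟨π, hπ, hmax⟩ :=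
    (Set.toFinite {π : Perm V | ∀ v, G.Adj v (π v)}).exists_maximalFor cycles _ h
  exact ⟨π, hπ, fun σ hσ hle a b hab ↦
    hmax hσ (fun p ↦ hle p.1 p.2) (show (a, b) ∈ cycles σ from hab)⟩

theorem exists_adj_not_sameCycle {π : Perm V} {x y : V} (hconn : G.Connected)
    (hxy : ¬ π.SameCycle x y) : ∃ a b, ¬ π.SameCycle a b ∧ G.Adj a b := by
  by_contra! hno
  exact hxy (forall_of_adj_closed hconn (.refl π x)
    (fun a b hxa hab ↦ hxa.trans (by_contra fun hc ↦ hno a b hc hab)) y)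

namespace IsMaximalCycleFactor

variable {π : Perm V} (h : IsMaximalCycleFactor G π) {a b c x y : V}
include h

theorem adj_symm (v : V) : G.Adj v (π.symm v) := by
  simpa using (h.adj (π.symm v)).symm

theorem symm : IsMaximalCycleFactor G π.symm where
  adj := h.adj_symm
  maximal σ hσ hle a b hab :=
    (h.maximal σ hσ (fun a b hab ↦ hle a b hab.inv) a b hab).inv

variable [Finite V]

theorem sameCycle_of_adj_apply (hab : G.Adj a (π b)) (hba : G.Adj b (π a)) :
    π.SameCycle a b := by
  classical
  by_contra hc
  refine hc (h.maximal (π * swap a b) (fun v ↦ ?_)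
    (fun _ _ ↦ sameCycle_mul_swap_of_sameCycle hc) a b (sameCycle_mul_swap hc))
  rcases eq_or_ne v a with rfl | hva
  · simpa using hab
  rcases eq_or_ne v b with rfl | hvb
  · simpa using hba
  simpa [swap_apply_of_ne_of_ne hva hvb] using h.adj v

theorem sameCycle_of_adj_apply_of_adj_apply (hbc' : ¬ π.SameCycle b c) (hca' : ¬ π.SameCycle c a)
    (hab : G.Adj a (π b)) (hbc : G.Adj b (π c)) (hca : G.Adj c (π a)) : π.SameCycle a b := by
  classical
  by_contra hab'
  have hcb' : ¬ π.SameCycle c b := fun hcb ↦ hbc' hcb.symm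
  have hmerge : ¬ (π * swap a b).SameCycle b c := fun hbc ↦
    hcb' (sameCycle_of_sameCycle_mul_swap hca' hcb' hbc.symm)
  have hne_ab := ne_of_not_sameCycle hab'
  have hne_bc := ne_of_not_sameCycle hbc'
  have hne_ca := ne_of_not_sameCycle hca'
  refine hab' (h.maximal (π * swap a b * swap b c) (fun v ↦ ?_) (fun _ _ huv ↦
    sameCycle_mul_swap_of_sameCycle hmerge (sameCycle_mul_swap_of_sameCycle hab' huv)) a b
    (sameCycle_mul_swap_of_sameCycle hmerge (sameCycle_mul_swap hab')))
  rw [Perm.mul_apply, Perm.mul_apply]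
  rcases eq_or_ne v a with rfl | hva
  · rwa [swap_apply_of_ne_of_ne hne_ab hne_ca.symm, swap_apply_left]
  rcases eq_or_ne v b with rfl | hvb
  · rwa [swap_apply_left, swap_apply_of_ne_of_ne hne_ca hne_bc.symm]
  rcases eq_or_ne v c with rfl | hvc
  · rwa [swap_apply_right, swap_apply_right]
  rw [swap_apply_of_ne_of_ne hvb hvc, swap_apply_of_ne_of_ne hva hvb]
  exact h.adj v

theorem reverse (y : V) : IsMaximalCycleFactor G (reverseCycle π y) where
  adj v := by
    by_cases hv : π.SameCycle y v
    · rw [reverseCycle_apply_of_sameCycle hv]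
      exact h.adj_symm v
    · rw [reverseCycle_apply_of_not_sameCycle hv]
      exact h.adj v
  maximal σ hσ hle a b hab := sameCycle_reverseCycle_of_sameCycle y
    (h.maximal σ hσ (fun a b hab ↦ hle a b (sameCycle_reverseCycle_of_sameCycle y hab)) a b hab)

theorem sameCycle_reverseCycle (y : V) :
    (reverseCycle π y).SameCycle a b ↔ π.SameCycle a b :=
  ⟨h.maximal _ (h.reverse y).adj (fun _ _ ↦ sameCycle_reverseCycle_of_sameCycle y) a b,
    sameCycle_reverseCycle_of_sameCycle y⟩

theorem not_adj_apply_symm (hxy : ¬ π.SameCycle x y) (hadj : G.Adj x y) :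
    ¬ G.Adj (π x) (π.symm y) := fun h' ↦
  hxy (Perm.sameCycle_symm_apply_right.mp
    (h.sameCycle_of_adj_apply (by simpa using hadj) h'.symm))

theorem not_adj_apply_apply (hxy : ¬ π.SameCycle x y) (hadj : G.Adj x y) :
    ¬ G.Adj (π x) (π y) := by
  have hx : reverseCycle π y x = π x :=
    reverseCycle_apply_of_not_sameCycle fun hyx ↦ hxy hyx.symm
  have hy : (reverseCycle π y).symm y = π y := by
    rw [symm_apply_eq, reverseCycle_apply_of_sameCycle (Perm.SameCycle.refl π y).apply_right,
      symm_apply_apply]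
  rw [← hx, ← hy]
  exact (h.reverse y).not_adj_apply_symm ((h.sameCycle_reverseCycle y).not.mpr hxy) hadj

theorem not_adj_symm_apply (hxy : ¬ π.SameCycle x y) (hadj : G.Adj x y) :
    ¬ G.Adj (π.symm x) (π y) := fun h' ↦
  h.not_adj_apply_symm (fun hyx ↦ hxy hyx.symm) hadj.symm h'.symm

theorem exists_common_adj_apply (hsq : SQuadG G) (hxy : ¬ π.SameCycle x y) (hadj : G.Adj x y) :
    ∃ z, z ≠ y ∧ G.Adj x z ∧ G.Adj (π y) z ∧ z ≠ π x ∧ z ≠ π.symm x := by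
  obtain ⟨z, hzy, hxz, hyz⟩ := hsq.exists_ne_adj_adj (u := x) (v := π y)
    (ne_apply_of_not_sameCycle hxy) hadj (h.adj y).symm
  refine ⟨z, hzy, hxz, hyz, ?_, ?_⟩
  · rintro rfl
    exact h.not_adj_apply_apply hxy hadj hyz.symm
  · rintro rfl
    exact h.not_adj_symm_apply hxy hadj hyz.symm

theorem exists_common_adj_symm (hsq : SQuadG G) (hxy : ¬ π.SameCycle x y) (hadj : G.Adj x y) :
    ∃ z, z ≠ y ∧ G.Adj x z ∧ G.Adj (π.symm y) z ∧ z ≠ π x ∧ z ≠ π.symm x := by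
  obtain ⟨z, hzy, hxz, hyz, hz, hz'⟩ :=
    h.symm.exists_common_adj_apply hsq (fun hc ↦ hxy hc.of_inv) hadj
  exact ⟨z, hzy, hxz, hyz, hz', hz⟩

theorem mem_of_adj_of_long (hdeg : ∀ v, (G.neighborSet v).ncard ≤ 4) {z e : V}
    (hx : π (π x) ≠ x) (hxy : ¬ π.SameCycle x y) (hadj : G.Adj x y) (hxz : G.Adj x z)
    (hzy : z ≠ y) (hz : z ≠ π x) (hz' : z ≠ π.symm x) (he : G.Adj x e) :
    e ∈ [π x, π.symm x, y, z] := by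
  refine mem_of_adj_of_nodup ?_ ?_ (hdeg x) he
  · have hyx : ¬ π.SameCycle y x := fun hyx ↦ hxy hyx.symm
    simp [apply_ne_symm_apply hx, (ne_apply_of_not_sameCycle hyx).symm, hz.symm,
      (ne_symm_apply_of_not_sameCycle hyx).symm, hz'.symm, hzy.symm]
  · simp [h.adj x, h.adj_symm x, hadj, hxz]

section TwoCycle

variable (hsq : SQuadG G) (hdeg : ∀ v, (G.neighborSet v).ncard ≤ 4)
include hsq hdeg

theorem exists_adj_adj_of_two_cycle_of_long (hx : π (π x) = x) (hy : π (π y) ≠ y)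
    (hadj : G.Adj x y) :
    ∃ q, q ≠ x ∧ G.Adj y q ∧ G.Adj (π x) q ∧ ∀ e, G.Adj y e → e ∈ [π y, π.symm y, x, q] := by
  have hyx : ¬ π.SameCycle y x := fun hyx ↦ hy (apply_apply_of_sameCycle hx hyx.symm)
  obtain ⟨q, hqx, hyq, hxq, hq, hq'⟩ := h.exists_common_adj_apply hsq hyx hadj.symm
  exact ⟨q, hqx, hyq, hxq, fun e ↦ h.mem_of_adj_of_long hdeg hy hyx hadj.symm hyq hqx hq hq'⟩

theorem sameCycle_of_adj_of_ne_of_long (hx : π (π x) = x) (hy : π (π y) ≠ y)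
    (hadj : G.Adj x y) {e : V} (he : G.Adj y e) (hex : e ≠ x) : π.SameCycle y e := by
  by_contra hye
  obtain ⟨q, -, -, hxq, hN⟩ := h.exists_adj_adj_of_two_cycle_of_long hsq hdeg hx hy hadj
  have heq : e = q := by
    simpa [(ne_apply_of_not_sameCycle fun hey ↦ hye hey.symm), hex,
      (ne_symm_apply_of_not_sameCycle fun hey ↦ hye hey.symm)] using hN e he
  subst heq
  obtain ⟨t, hte, hyt, het, ht, ht'⟩ := h.exists_common_adj_apply hsq hye he
  obtain rfl : t = x := by simpa [ht, ht', hte] using hN t hyt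
  rcases eq_or_eq_apply_of_sameCycle hx (h.sameCycle_of_adj_apply het.symm hxq.symm) with
    rfl | rfl
  · exact hex rfl
  · exact hxq.ne rfl

theorem exists_next_two_cycle (hx : π (π x) = x) (hy : π (π y) = y) (hxy : ¬ π.SameCycle x y)
    (hadj : G.Adj x y) : ∃ z, π (π z) = z ∧ G.Adj x z ∧ G.Adj z (π y) ∧ ¬ π.SameCycle x z ∧
      ¬ π.SameCycle y z := by
  obtain ⟨z, hzy, hxz, hyz, hzx, -⟩ := h.exists_common_adj_apply hsq hxy hadj
  have hyz' : ¬ π.SameCycle y z := fun hc ↦ by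
    rcases eq_or_eq_apply_of_sameCycle hy hc with rfl | rfl
    · exact hzy rfl
    · exact hyz.ne rfl
  refine ⟨z, ?_, hxz, hyz.symm, fun hc ↦ ?_, hyz'⟩
  · by_contra hz
    have hpy : π y ≠ x := (ne_apply_of_not_sameCycle hxy).symm
    have hzy' := h.sameCycle_of_adj_of_ne_of_long hsq hdeg hx hz hxz hyz.symm hpy
    exact hyz' hzy'.symm.of_apply_left
  · rcases eq_or_eq_apply_of_sameCycle hx hc with rfl | rfl
    · exact hxz.ne rfl
    · exact hzx rfl

-- Iterating `exists_next_two_cycle` from `y` gives neighbors `y`, `z`, `u`, `v` of `x`. The degree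
-- bound makes `v` one of the others, and then two or three of their cycles can be merged.
theorem sameCycle_of_adj_of_two_cycles (hx : π (π x) = x) (hy : π (π y) = y) (hadj : G.Adj x y) :
    π.SameCycle x y := by
  by_contra hxy
  obtain ⟨z, hz, hxz, hzy, hxz', hyz'⟩ := h.exists_next_two_cycle hsq hdeg hx hy hxy hadj
  obtain ⟨u, hu, hxu, huz, hxu', hzu'⟩ := h.exists_next_two_cycle hsq hdeg hx hz hxz' hxz
  obtain ⟨v, -, hxv, hvu, hxv', huv'⟩ := h.exists_next_two_cycle hsq hdeg hx hu hxu' hxu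
  have huy : u ≠ y := by
    rintro rfl
    exact hyz' (h.sameCycle_of_adj_apply huz hzy)
  have hmem : v ∈ [π x, y, z, u] := by
    refine mem_of_adj_of_nodup ?_ (by simp [h.adj x, hadj, hxz, hxu]) (hdeg x) hxv
    have hne {w : V} (hw : ¬ π.SameCycle x w) : π x ≠ w :=
      ne_of_not_sameCycle (π := π) (by rwa [Perm.sameCycle_apply_left])
    simp [hne hxy, hne hxz', hne hxu', ne_of_not_sameCycle hyz', ne_of_not_sameCycle hzu', huy.symm]
  simp only [List.mem_cons, List.not_mem_nil, or_false] at hmem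
  rcases hmem with rfl | rfl | rfl | rfl
  · exact hxv' (by simp [Perm.SameCycle.refl])
  · exact huv' (h.sameCycle_of_adj_apply_of_adj_apply (fun hc ↦ hzu' hc.symm)
      (fun hc ↦ hyz' hc.symm) hvu huz hzy).symm
  · exact hzu' (h.sameCycle_of_adj_apply hvu huz)
  · exact huv' (.refl π v)

theorem adj_apply_apply_of_two_cycle_of_long (hx : π (π x) = x) (hy : π (π y) ≠ y)
    (hadj : G.Adj x y) : G.Adj x (π (π y)) := by
  have hxy : ¬ π.SameCycle x y := fun hc ↦ hy (apply_apply_of_sameCycle hx hc)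
  obtain ⟨z, hzy, hxz, hyz, hzx, -⟩ := h.exists_common_adj_apply hsq hxy hadj
  have hz : π (π z) ≠ z := fun hz ↦ by
    rcases eq_or_eq_apply_of_sameCycle hx
      (h.sameCycle_of_adj_of_two_cycles hsq hdeg hx hz hxz) with rfl | rfl
    · exact hxz.ne rfl
    · exact hzx rfl
  obtain ⟨q, -, -, hxq, hN⟩ := h.exists_adj_adj_of_two_cycle_of_long hsq hdeg hx hz hxz
  have hmem := hN (π y) hyz.symm
  simp only [List.mem_cons, List.not_mem_nil, or_false] at hmem
  rcases hmem with hyz' | hyz' | hyx | hyq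
  · exact (hzy (π.injective hyz').symm).elim
  · rwa [hyz', apply_symm_apply]
  · exact (ne_apply_of_not_sameCycle hxy hyx.symm).elim
  · exact (h.not_adj_apply_apply hxy hadj (hyq ▸ hxq)).elim

theorem sameCycle_of_adj_of_two_cycle (hx : π (π x) = x) (hadj : G.Adj x y) :
    π.SameCycle x y := by
  by_contra hxy
  have hy : π (π y) ≠ y := fun hy ↦
    hxy (h.sameCycle_of_adj_of_two_cycles hsq hdeg hx hy hadj)
  have hlong {a : V} (ha : π.SameCycle y a) : π (π a) ≠ a := fun ha' ↦
    hy (apply_apply_of_sameCycle ha' ha.symm)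
  obtain ⟨q, hqx, hyq, hxq, -⟩ := h.exists_adj_adj_of_two_cycle_of_long hsq hdeg hx hy hadj
  have hyq' := h.sameCycle_of_adj_of_ne_of_long hsq hdeg hx hy hadj hyq hqx
  have hq : G.Adj x q ∨ G.Adj x (π.symm q) := by
    refine sameCycle_induction (P := fun a ↦ G.Adj x a ∨ G.Adj x (π.symm a)) hyq' (.inl hadj)
      fun a ha hxa ↦ ?_
    rcases hxa with hxa | hxa
    · exact .inr (by rwa [symm_apply_apply])
    · have := h.adj_apply_apply_of_two_cycle_of_long hsq hdeg hx (hlong ha.symm_apply_right) hxa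
      exact .inl (by rwa [apply_symm_apply] at this)
  rcases hq with hq | hq
  · have hqx' := h.sameCycle_of_adj_of_ne_of_long hsq hdeg hx (hlong hyq') hq hxq.symm
      (h.adj x).ne'
    exact hxy (hyq'.trans hqx'.of_apply_right).symm
  · have hxq' : ¬ π.SameCycle x (π.symm q) := fun hc ↦
      hxy (hc.trans hyq'.symm_apply_right.symm)
    exact h.not_adj_apply_apply hxq' hq (by rwa [apply_symm_apply])

theorem apply_apply_ne_of_not_sameCycle (hconn : G.Connected) (hxy : ¬ π.SameCycle x y) (v : V) :
    π (π v) ≠ v := fun hv ↦ by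
  have hall (w : V) : π.SameCycle v w :=
    forall_of_adj_closed hconn (.refl π v) (fun a b hva hab ↦ hva.trans
      (h.sameCycle_of_adj_of_two_cycle hsq hdeg (apply_apply_of_sameCycle hv hva) hab)) w
  exact hxy ((hall x).symm.trans (hall y))

end TwoCycle

section LongCycle

variable (hsq : SQuadG G) (hdeg : ∀ v, (G.neighborSet v).ncard ≤ 4)
  (hlong : ∀ v, π (π v) ≠ v)
include hsq hdeg hlong

theorem exists_second_outer_neighbor (hxy : ¬ π.SameCycle x y) (hadj : G.Adj x y) :
    ∃ z ≠ y, G.Adj x z ∧ ¬ π.SameCycle x z ∧ G.Adj (π y) z ∧ G.Adj (π.symm y) z ∧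
      ∀ e, G.Adj x e → e ∈ [π x, π.symm x, y, z] := by
  obtain ⟨z, hzy, hxz, hyz, hz, hz'⟩ := h.exists_common_adj_apply hsq hxy hadj
  obtain ⟨w, hwy, hxw, hyw, hw, hw'⟩ := h.exists_common_adj_symm hsq hxy hadj
  have hN := fun e ↦ h.mem_of_adj_of_long hdeg (hlong x) hxy hadj hxz hzy hz hz' (e := e)
  obtain rfl : w = z := by simpa [hwy, hw, hw'] using hN w hxw
  refine ⟨w, hzy, hxz, fun hxw' ↦ ?_, hyz, hyw, hN⟩
  have hwy' : ¬ π.SameCycle w y := fun hwy' ↦ hxy (hxw'.trans hwy')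
  have hmem := h.mem_of_adj_of_long hdeg (hlong w) (fun hc ↦ hwy' hc.of_apply_right)
    hyz.symm hyw.symm (apply_ne_symm_apply (hlong y)).symm
    (ne_apply_of_not_sameCycle fun hc ↦ hwy' hc.of_symm_apply_left.symm)
    (ne_symm_apply_of_not_sameCycle fun hc ↦ hwy' hc.of_symm_apply_left.symm) hxw.symm
  have hxw : x = π w ∨ x = π.symm w := by
    simpa [ne_apply_of_not_sameCycle hxy, ne_symm_apply_of_not_sameCycle hxy] using hmem
  rcases hxw with rfl | rfl
  · exact hw' (symm_apply_apply π w).symm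
  · exact hw (apply_symm_apply π w).symm

theorem four_cycle_and_neighborSet_eq_of_adj (hxy : ¬ π.SameCycle x y) (hadj : G.Adj x y) :
    π (π (π (π y))) = y ∧ G.neighborSet x = {π x, π.symm x, y, π (π y)} := by
  obtain ⟨z, hzy, hxz, hxz', -, -, hNx⟩ :=
    h.exists_second_outer_neighbor hsq hdeg hlong hxy hadj
  obtain ⟨u, huz, hxu, hxu', hzu, hzu', -⟩ :=
    h.exists_second_outer_neighbor hsq hdeg hlong hxz' hxz
  obtain ⟨w, -, -, hyw', -, -, hNy⟩ :=
    h.exists_second_outer_neighbor hsq hdeg hlong (fun hc ↦ hxy hc.symm) hadj.symm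
  obtain rfl : u = y := by
    have hu : u ≠ π x := ne_apply_of_not_sameCycle fun hc ↦ hxu' hc.symm
    have hu' : u ≠ π.symm x := ne_symm_apply_of_not_sameCycle fun hc ↦ hxu' hc.symm
    simpa [hu, hu', huz] using hNx u hxu
  have hzw : π z = π.symm u ∨ π z = w := by
    simpa [hzy, (ne_apply_of_not_sameCycle hxz').symm] using hNy _ hzu.symm
  have hzw' : π.symm z = π u ∨ π.symm z = w := by
    simpa [hzy, (ne_symm_apply_of_not_sameCycle hxz').symm] using hNy _ hzu'.symm
  obtain ⟨hz, hz'⟩ : π z = π.symm u ∧ π.symm z = π u := by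
    rcases hzw with hz | rfl <;> rcases hzw' with hz' | hz'
    · exact ⟨hz, hz'⟩
    · subst hz'
      have hzu : π.SameCycle u (π z) := by simp [hz, Perm.SameCycle.refl]
      exact (hyw' hzu.of_apply_right.symm_apply_right).elim
    · have hzu : π.SameCycle u (π.symm z) := by simp [hz', Perm.SameCycle.refl]
      exact (hyw' hzu.of_symm_apply_right.apply_right).elim
    · exact (apply_ne_symm_apply (hlong z) hz'.symm).elim
  obtain rfl : z = π (π u) := by rw [← hz', apply_symm_apply]
  refine ⟨by rw [hz, apply_symm_apply], Set.ext fun e ↦ ⟨fun he ↦ by simpa using hNx e he, ?_⟩⟩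
  rintro (rfl | rfl | rfl | rfl)
  exacts [h.adj x, h.adj_symm x, hadj, hxz]

theorem exists_outer_neighbor_apply (hxy : ¬ π.SameCycle x y) (hadj : G.Adj x y) :
    ∃ t, ¬ π.SameCycle (π y) t ∧ G.Adj (π y) t := by
  obtain ⟨hy, hN⟩ := h.four_cycle_and_neighborSet_eq_of_adj hsq hdeg hlong hxy hadj
  have houter {t : V} (hxt : G.Adj x t) (ht : t ≠ π x) (ht' : t ≠ π.symm x) :
      t = y ∨ t = π (π y) := by
    have : t ∈ G.neighborSet x := hxt
    rw [hN] at this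
    simpa [ht, ht'] using this
  obtain ⟨t, hty, hty', hyt, hyt'⟩ := hsq.exists_adj_adj_of_triple
    (ne_apply_of_not_sameCycle hxy) (ne_symm_apply_of_not_sameCycle hxy)
    (apply_ne_symm_apply (hlong y)) hadj (h.adj y).symm (h.adj_symm y).symm
    (y := y) (z := π (π y))
    (fun t hxt hyt ↦ houter hxt
      (fun ht ↦ h.not_adj_apply_apply hxy hadj (ht ▸ hyt.symm))
      (fun ht ↦ h.not_adj_symm_apply hxy hadj (ht ▸ hyt.symm)))
    (fun t hxt hyt ↦ houter hxt
      (fun ht ↦ h.not_adj_apply_symm hxy hadj (ht ▸ hyt.symm))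
      (fun ht ↦ h.symm.not_adj_apply_apply (fun hc ↦ hxy hc.of_inv) hadj (ht ▸ hyt.symm)))
  refine ⟨t, fun hc ↦ ?_, hyt⟩
  have hmem : t = y ∨ t = π y ∨ t = π (π y) ∨ t = π (π (π y)) := by
    refine sameCycle_induction (P := fun a ↦ a = y ∨ a = π y ∨ a = π (π y) ∨ a = π (π (π y)))
      hc.of_apply_left (.inl rfl) fun a _ ha ↦ ?_
    rcases ha with rfl | rfl | rfl | rfl <;> simp [hy]
  rcases hmem with rfl | rfl | rfl | rfl
  · exact hty rfl
  · exact hyt.ne rfl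
  · exact hty' rfl
  · exact hyt'.ne (by rw [symm_apply_eq, hy])

theorem exists_outer_neighbor (hconn : G.Connected) (hxy : ¬ π.SameCycle x y) (v : V) :
    ∃ w, ¬ π.SameCycle v w ∧ G.Adj v w := by
  obtain ⟨a, b, hab, hadj⟩ := exists_adj_not_sameCycle hconn hxy
  refine forall_of_adj_closed hconn (P := fun u ↦ ∃ w, ¬ π.SameCycle u w ∧ G.Adj u w)
    ⟨b, hab, hadj⟩ (fun u v hu huv ↦ ?_) v
  by_cases hc : π.SameCycle u v
  · refine sameCycle_induction (P := fun c ↦ ∃ w, ¬ π.SameCycle c w ∧ G.Adj c w) hc hu ?_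
    rintro c - ⟨w, hcw, hadj⟩
    exact h.exists_outer_neighbor_apply hsq hdeg hlong (fun hwc ↦ hcw hwc.symm) hadj.symm
  · exact ⟨u, fun hvu ↦ hc hvu.symm, huv.symm⟩

theorem four_cycle_and_twins (hconn : G.Connected) (hxy : ¬ π.SameCycle x y) (v : V) :
    π (π (π (π v))) = v ∧ G.neighborSet (π (π v)) = G.neighborSet v ∧
      (G.neighborSet v).ncard = 4 := by
  obtain ⟨w, hvw, hadj⟩ := h.exists_outer_neighbor hsq hdeg hlong hconn hxy v
  have hwv : ¬ π.SameCycle w v := fun hc ↦ hvw hc.symm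
  obtain ⟨-, hNv⟩ := h.four_cycle_and_neighborSet_eq_of_adj hsq hdeg hlong hvw hadj
  obtain ⟨hv, hNw⟩ := h.four_cycle_and_neighborSet_eq_of_adj hsq hdeg hlong hwv hadj.symm
  have hadj' : G.Adj w (π (π v)) := by
    rw [← mem_neighborSet, hNw]
    simp
  have hvw' : ¬ π.SameCycle (π (π v)) w := fun hc ↦ hvw hc.of_apply_left.of_apply_left
  obtain ⟨-, hNv'⟩ := h.four_cycle_and_neighborSet_eq_of_adj hsq hdeg hlong hvw' hadj'.symm
  have hv' : π (π (π v)) = π.symm v := by rw [eq_symm_apply, hv]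
  refine ⟨hv, ?_, ?_⟩
  · rw [hNv', hNv, hv', symm_apply_apply, Set.insert_comm]
  · have hwv' : ¬ π.SameCycle (π w) v := fun hc ↦ hwv hc.of_apply_left
    have hne {u : V} (hu : ¬ π.SameCycle u v) : π v ≠ u ∧ π.symm v ≠ u :=
      ⟨(ne_apply_of_not_sameCycle hu).symm, (ne_symm_apply_of_not_sameCycle hu).symm⟩
    have hw := hne hwv
    have hw' := hne (u := π (π w)) fun hc ↦ hwv' hc.of_apply_left
    rw [hNv, Set.ncard_insert_of_notMem, Set.ncard_insert_of_notMem, Set.ncard_pair (hlong w).symm]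
    · simp [hw.2, hw'.2]
    · simp [apply_ne_symm_apply (hlong v), hw.1, hw'.1]

end LongCycle

end IsMaximalCycleFactor

end Maximal

/-- A connected s-quadrangular graph (with at least three vertices) in which
every vertex has degree at most 4 is hamiltonian. -/
theorem connected_squad_maxdeg_four_hamiltonian {V : Type*} [Fintype V] [DecidableEq V]
    (G : SimpleGraph V) (hconn : G.Connected) (hcard : 3 ≤ Fintype.card V)
    (hsq : SQuadG G) (hdeg : ∀ v : V, (G.neighborSet v).ncard ≤ 4) :
    G.IsHamiltonian := by
  have : Nontrivial V := Fintype.one_lt_card_iff_nontrivial.mp (by omega)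
  obtain ⟨π, h⟩ := exists_isMaximalCycleFactor
    (hsq.exists_perm_adj fun v ↦ hconn.preconnected.exists_adj_of_nontrivial v)
  by_cases hone : ∀ a b, π.SameCycle a b
  · exact isHamiltonian_of_forall_sameCycle hcard h.adj hone
  push Not at hone
  obtain ⟨x, y, hxy⟩ := hone
  have hlong := h.apply_apply_ne_of_not_sameCycle hsq hdeg hconn hxy
  have htwins := h.four_cycle_and_twins hsq hdeg hlong hconn hxy
  exact isHamiltonian_of_twins (τ := fun v ↦ π (π v)) hconn (fun v ↦ (htwins v).1) hlong
    (fun v ↦ (htwins v).2.1) (fun v ↦ (htwins v).2.2)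
end
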